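/- arXiv:2410.23993 — 4 statements merged into one kernel-verified Lean document; each statement's English description precedes it below -/
import Mathlib

section
/- There exists an absolute constant C > 0 such that for every q ≥ 1, every dimension d ∈ ℕ and every f ∈ ℓ^2(ℤ^d), one has ‖ sup_{t ∈ 𝔻, t ≤ d^{1/q}} |𝓜_t^q f| ‖_{ℓ^2(ℤ^d)} ≤ C ‖f‖_{ℓ^2(ℤ^d)}. -/
open scoped ENNReal NNReal

open Classical in
noncomputable def latticeBall (q : ℝ) (d : ℕ) (t : ℝ) : Finset (Fin d → ℤ) :=
  (Finset.Icc (fun _ => -(⌈t⌉₊ : ℤ)) (fun _ => (⌈t⌉₊ : ℤ))).filter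
    (fun x => ∑ i, |(x i : ℝ)| ^ q ≤ t ^ q)

noncomputable def avgOp (q : ℝ) (d : ℕ) (t : ℝ) (f : (Fin d → ℤ) → ℂ) (x : Fin d → ℤ) : ℂ :=
  ((latticeBall q d t).card : ℂ)⁻¹ * ∑ y ∈ latticeBall q d t, f (x - y)

noncomputable def l2Norm {d : ℕ} (g : (Fin d → ℤ) → ℝ≥0∞) : ℝ≥0∞ :=
  (∑' x, g x ^ (2 : ℝ)) ^ ((1 : ℝ) / 2)


section Part1

open AddMonoidAlgebra in
/-- reversal -/
noncomputable def rv {G : Type*} [AddCommGroup G] :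
    AddMonoidAlgebra ℝ G ≃ₐ[ℝ] AddMonoidAlgebra ℝ G :=
  AddMonoidAlgebra.domCongr ℝ ℝ (AddEquiv.neg G)

section P1
variable {G : Type*} [AddCommGroup G]

/-- squared l2 norm -/
noncomputable def n2 (u : AddMonoidAlgebra ℝ G) : ℝ := ∑ x ∈ u.coeff.support, u.coeff x ^ 2

/-- inner product -/
noncomputable def ip (u v : AddMonoidAlgebra ℝ G) : ℝ := (u * rv v).coeff 0

lemma rv_coeff (u : AddMonoidAlgebra ℝ G) (x : G) : (rv u).coeff x = u.coeff (-x) := by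
  unfold rv
  rw [AddMonoidAlgebra.coeff_domCongr]; rfl

lemma rv_single (x : G) (a : ℝ) :
    rv (AddMonoidAlgebra.single x a) = AddMonoidAlgebra.single (-x) a := by
  unfold rv
  rw [AddMonoidAlgebra.domCongr_single]; rfl

lemma coeff_sum' {ι : Type*} (s : Finset ι) (f : ι → AddMonoidAlgebra ℝ G) (x : G) :
    (∑ i ∈ s, f i).coeff x = ∑ i ∈ s, (f i).coeff x := by
  classical
  induction s using Finset.induction_on with
  | empty => simp
  | insert a s ha ih => simp [Finset.sum_insert ha, ih]

lemma eq_sum_single (u : AddMonoidAlgebra ℝ G) :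
    u = ∑ x ∈ u.coeff.support, AddMonoidAlgebra.single x (u.coeff x) := by
  classical
  ext z
  rw [coeff_sum']
  simp [AddMonoidAlgebra.coeff_single, Finsupp.single_apply]
  

lemma conv_apply (u w : AddMonoidAlgebra ℝ G) (z : G) (S : Finset G) (hS : u.coeff.support ⊆ S) :
    (u * w).coeff z = ∑ x ∈ S, u.coeff x * w.coeff (z - x) := by
  classical
  rw [← Finset.sum_subset hS]
  · conv_lhs => rw [eq_sum_single u]
    rw [Finset.sum_mul, coeff_sum']
    refine Finset.sum_congr rfl fun x _ => ?_
    rw [AddMonoidAlgebra.coeff_single_mul_apply]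
    congr 2
    abel
  · intro x _ hx
    rw [Finsupp.notMem_support_iff.mp hx, zero_mul]

lemma ip_eq (u v : AddMonoidAlgebra ℝ G) (S : Finset G) (hS : u.coeff.support ⊆ S) :
    ip u v = ∑ x ∈ S, u.coeff x * v.coeff x := by
  unfold ip
  rw [conv_apply u _ 0 S hS]
  simp [rv_coeff]

lemma n2_eq (u : AddMonoidAlgebra ℝ G) (S : Finset G) (hS : u.coeff.support ⊆ S) :
    n2 u = ∑ x ∈ S, u.coeff x ^ 2 := by
  unfold n2
  apply Finset.sum_subset hS
  intro x _ hx
  rw [Finsupp.notMem_support_iff.mp hx]; simp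

lemma n2_nonneg (u : AddMonoidAlgebra ℝ G) : 0 ≤ n2 u :=
  Finset.sum_nonneg fun _ _ => sq_nonneg _

lemma ip_self (u : AddMonoidAlgebra ℝ G) : ip u u = n2 u := by
  rw [ip_eq u u _ subset_rfl, n2]
  exact Finset.sum_congr rfl fun x _ => by ring

lemma n2_sum_le (u : AddMonoidAlgebra ℝ G) (X : Finset G) :
    ∑ x ∈ X, u.coeff x ^ 2 ≤ n2 u := by
  classical
  rw [n2_eq u (u.coeff.support ∪ X) Finset.subset_union_left]
  exact Finset.sum_le_sum_of_subset_of_nonneg Finset.subset_union_right fun _ _ _ => sq_nonneg _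

lemma ip_le (u v : AddMonoidAlgebra ℝ G) : ip u v ≤ √(n2 u) * √(n2 v) := by
  classical
  rw [ip_eq u v (u.coeff.support ∪ v.coeff.support) Finset.subset_union_left,
    n2_eq u (u.coeff.support ∪ v.coeff.support) Finset.subset_union_left,
    n2_eq v (u.coeff.support ∪ v.coeff.support) Finset.subset_union_right]
  exact Real.sum_mul_le_sqrt_mul_sqrt _ _ _

lemma conv_nonneg {u v : AddMonoidAlgebra ℝ G} (hu : ∀ x, 0 ≤ u.coeff x)
    (hv : ∀ x, 0 ≤ v.coeff x) (x : G) : 0 ≤ (u * v).coeff x := by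
  rw [conv_apply u v x _ subset_rfl]
  exact Finset.sum_nonneg fun _ _ => mul_nonneg (hu _) (hv _)

lemma pow_nonneg' {u : AddMonoidAlgebra ℝ G} (hu : ∀ x, 0 ≤ u.coeff x) (n : ℕ) (x : G) :
    0 ≤ (u ^ n).coeff x := by
  classical
  induction n generalizing x with
  | zero =>
    rw [pow_zero, AddMonoidAlgebra.one_def, AddMonoidAlgebra.coeff_single, Finsupp.single_apply]
    split_ifs <;> norm_num
  | succ n ih => rw [pow_succ]; exact conv_nonneg ih hu x

/-- ergodic averages -/
noncomputable def erg (Q : AddMonoidAlgebra ℝ G) (n : ℕ) : AddMonoidAlgebra ℝ G :=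
  (n : ℝ)⁻¹ • ∑ k ∈ Finset.range n, Q ^ k

lemma erg_nonneg {Q : AddMonoidAlgebra ℝ G} (hQ : ∀ x, 0 ≤ Q.coeff x) (n : ℕ) (x : G) :
    0 ≤ (erg Q n).coeff x := by
  unfold erg
  rw [AddMonoidAlgebra.coeff_smul, Finsupp.smul_apply, coeff_sum', smul_eq_mul]
  exact mul_nonneg (by positivity) (Finset.sum_nonneg fun k _ => pow_nonneg' hQ k x)

lemma erg_rv {Q : AddMonoidAlgebra ℝ G} (hQ : rv Q = Q) (n : ℕ) : rv (erg Q n) = erg Q n := by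
  unfold erg
  rw [map_smul, map_sum]
  simp [map_pow, hQ]

/-- pointwise domination of product of averages -/
lemma erg_mul_le {Q : AddMonoidAlgebra ℝ G} (hQ : ∀ x, 0 ≤ Q.coeff x) {n m : ℕ} (hn : 1 ≤ n)
    (hnm : n ≤ m) (x : G) :
    (erg Q n * erg Q m).coeff x ≤ 2 * (erg Q (2 * m)).coeff x := by
  unfold erg
  rw [smul_mul_smul_comm, Finset.sum_mul_sum]
  simp only [AddMonoidAlgebra.coeff_smul, Finsupp.smul_apply, coeff_sum', smul_eq_mul, ← pow_add]
  have h1 : ∀ i ∈ Finset.range n, ∑ j ∈ Finset.range m, (Q ^ (i + j)).coeff x ≤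
      ∑ k ∈ Finset.range (2 * m), (Q ^ k).coeff x := by
    intro i hi
    have hi' := Finset.mem_range.mp hi
    have : ∑ j ∈ Finset.range m, (Q ^ (i + j)).coeff x =
        ∑ k ∈ (Finset.range m).map (addLeftEmbedding i), (Q ^ k).coeff x := by
      rw [Finset.sum_map]; rfl
    rw [this]
    apply Finset.sum_le_sum_of_subset_of_nonneg
    · intro k hk
      simp only [Finset.mem_map, Finset.mem_range, addLeftEmbedding_apply] at hk ⊢
      omega
    · intro k _ _; exact pow_nonneg' hQ k x
  have h2 := Finset.sum_le_sum h1
  rw [Finset.sum_const, Finset.card_range, nsmul_eq_mul] at h2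
  have hn0 : (0:ℝ) < n := by exact_mod_cast hn
  have hm0 : (0:ℝ) < m := by exact_mod_cast (hn.trans hnm)
  calc _ ≤ (n:ℝ)⁻¹ * (m:ℝ)⁻¹ * (n * ∑ k ∈ Finset.range (2 * m), (Q ^ k).coeff x) := by gcongr
    _ = _ := by push_cast; field_simp

lemma erg_mul_le' {Q : AddMonoidAlgebra ℝ G} (hQ : ∀ x, 0 ≤ Q.coeff x) {n m : ℕ} (hn : 1 ≤ n)
    (hm : 1 ≤ m) (x : G) :
    (erg Q n * erg Q m).coeff x ≤
      2 * ((erg Q (2 * n)).coeff x + (erg Q (2 * m)).coeff x) := by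
  rcases le_total n m with h | h
  · have := erg_mul_le hQ hn h x
    have := erg_nonneg hQ (2 * n) x
    linarith
  · have := erg_mul_le hQ hm h x
    rw [mul_comm] at this
    have := erg_nonneg hQ (2 * m) x
    linarith

lemma erg_le_two {Q : AddMonoidAlgebra ℝ G} (hQ : ∀ x, 0 ≤ Q.coeff x) {n m : ℕ}
    (hnm : n ≤ m) (hmn : m ≤ 2 * n) (hn : 1 ≤ n) (x : G) :
    (erg Q n).coeff x ≤ 2 * (erg Q m).coeff x := by
  unfold erg
  simp only [AddMonoidAlgebra.coeff_smul, Finsupp.smul_apply, coeff_sum', smul_eq_mul]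
  have h : ∑ k ∈ Finset.range n, (Q ^ k).coeff x ≤ ∑ k ∈ Finset.range m, (Q ^ k).coeff x :=
    Finset.sum_le_sum_of_subset_of_nonneg (Finset.range_mono hnm)
      fun k _ _ => pow_nonneg' hQ k x
  have h0 : 0 ≤ ∑ k ∈ Finset.range m, (Q ^ k).coeff x :=
    Finset.sum_nonneg fun k _ => pow_nonneg' hQ k x
  have hn0 : (0:ℝ) < n := by exact_mod_cast hn
  have hm0 : (0:ℝ) < m := by exact_mod_cast (hn.trans hnm)
  have hmn' : (m:ℝ) ≤ 2 * n := by exact_mod_cast hmn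
  have h3 : (n:ℝ)⁻¹ ≤ 2 * (m:ℝ)⁻¹ := by
    rw [inv_le_iff_one_le_mul₀ hn0]
    rw [← div_eq_mul_inv, div_mul_eq_mul_div, le_div_iff₀ hm0]; linarith
  calc _ ≤ (n:ℝ)⁻¹ * ∑ k ∈ Finset.range m, (Q ^ k).coeff x := by gcongr
    _ ≤ (2 * (m:ℝ)⁻¹) * ∑ k ∈ Finset.range m, (Q ^ k).coeff x := by gcongr
    _ = _ := by ring

lemma conv_mono_left {u v w : AddMonoidAlgebra ℝ G} (h : ∀ x, u.coeff x ≤ v.coeff x)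
    (hw : ∀ x, 0 ≤ w.coeff x) (x : G) : (u * w).coeff x ≤ (v * w).coeff x := by
  have h1 := conv_nonneg (u := v - u) (v := w)
    (fun x => by simpa using h x) hw x
  rw [sub_mul] at h1
  simpa using h1

/-- validity of a maximal constant -/
def ValidM (Q : AddMonoidAlgebra ℝ G) (S : ℕ) (M : ℝ) : Prop :=
  ∀ (f : AddMonoidAlgebra ℝ G), (∀ x, 0 ≤ f.coeff x) → ∀ (X : Finset G) (s : G → ℕ),
    (∀ x, 1 ≤ s x ∧ s x ≤ S) →
    √(∑ x ∈ X, ((erg Q (s x) * f).coeff x) ^ 2) ≤ M * √(n2 f)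

lemma sqrt_sum_add_le (X : Finset G) (a b : G → ℝ) :
    √(∑ x ∈ X, (a x + b x) ^ 2) ≤ √(∑ x ∈ X, a x ^ 2) + √(∑ x ∈ X, b x ^ 2) := by
  apply Real.sqrt_le_iff.mpr ⟨by positivity, ?_⟩
  have h := Real.sum_mul_le_sqrt_mul_sqrt X a b
  have ha : 0 ≤ ∑ x ∈ X, a x ^ 2 := Finset.sum_nonneg fun _ _ => sq_nonneg _
  have hb : 0 ≤ ∑ x ∈ X, b x ^ 2 := Finset.sum_nonneg fun _ _ => sq_nonneg _
  have e : ∑ x ∈ X, (a x + b x) ^ 2 =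
      ∑ x ∈ X, a x ^ 2 + 2 * ∑ x ∈ X, a x * b x + ∑ x ∈ X, b x ^ 2 := by
    rw [Finset.mul_sum, ← Finset.sum_add_distrib, ← Finset.sum_add_distrib]
    exact Finset.sum_congr rfl fun x _ => by ring
  rw [e, add_sq, Real.sq_sqrt ha, Real.sq_sqrt hb]
  linarith

lemma valid_step {Q : AddMonoidAlgebra ℝ G} (hQ : ∀ x, 0 ≤ Q.coeff x) (hr : rv Q = Q)
    (hc : ∀ n g, n2 (erg Q n * g) ≤ n2 g) {S : ℕ} {M : ℝ} (hM : 0 ≤ M) (hS : 1 ≤ S)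
    (hV : ValidM Q S M) : ValidM Q S (2 * √(M + 2)) := by
  classical
  intro f hf X s hs
  set h : G → ℝ := fun x => (erg Q (s x) * f).coeff x with hh
  have h0 : ∀ x, 0 ≤ h x := fun x => conv_nonneg (erg_nonneg hQ _) hf x
  set g : AddMonoidAlgebra ℝ G := ∑ x ∈ X, AddMonoidAlgebra.single x (h x) with hg
  have hgc : ∀ z, g.coeff z = if z ∈ X then h z else 0 := by
    intro z
    rw [hg, coeff_sum']
    simp [AddMonoidAlgebra.coeff_single, Finsupp.single_apply]
  have hgs : g.coeff.support ⊆ X := by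
    intro z hz
    by_contra hzX
    rw [Finsupp.mem_support_iff, hgc, if_neg hzX] at hz
    exact hz rfl
  have hg0 : ∀ z, 0 ≤ g.coeff z := by
    intro z; rw [hgc]; split_ifs
    · exact h0 z
    · exact le_rfl
  have hn2g : n2 g = ∑ x ∈ X, h x ^ 2 := by
    rw [n2_eq g X hgs]
    exact Finset.sum_congr rfl fun x hx => by rw [hgc, if_pos hx]
  set T : AddMonoidAlgebra ℝ G := ∑ y ∈ X, AddMonoidAlgebra.single y (h y) * erg Q (s y) with hT
  have hTf : ∑ x ∈ X, h x ^ 2 = ip f T := by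
    unfold ip
    rw [hT, map_sum, Finset.mul_sum, coeff_sum']
    refine Finset.sum_congr rfl fun x _ => ?_
    rw [map_mul, rv_single, erg_rv hr, mul_left_comm, AddMonoidAlgebra.coeff_single_mul_apply,
      mul_comm f]
    simp [hh, sq]
  -- bound for the second step
  have hA : √(∑ x ∈ X, ((erg Q (2 * s x) * g).coeff x) ^ 2) ≤ (M + 2) * √(n2 g) := by
    set s' : G → ℕ := fun x => if 2 * s x ≤ S then 2 * s x else 1 with hs'
    have hs'1 : ∀ x, 1 ≤ s' x ∧ s' x ≤ S := by
      intro x; simp only [hs']; have := hs x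
      split_ifs <;> omega
    have hp : ∀ x, (erg Q (2 * s x) * g).coeff x ≤
        (erg Q (s' x) * g).coeff x + 2 * (erg Q (2 * S) * g).coeff x := by
      intro x
      have e1 := conv_nonneg (erg_nonneg hQ (s' x)) hg0 x
      have e2 := conv_nonneg (erg_nonneg hQ (2 * S)) hg0 x
      by_cases hx : 2 * s x ≤ S
      · have : s' x = 2 * s x := by simp [hs', hx]
        rw [this]; linarith
      · have := conv_mono_left (u := erg Q (2 * s x)) (v := (2:ℝ) • erg Q (2 * S)) (w := g)
          (fun z => by
            have := erg_le_two hQ (n := 2 * s x) (m := 2 * S) (by have := hs x; omega)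
              (by omega) (by have := hs x; omega) z
            simpa using this) hg0 x
        rw [smul_mul_assoc, AddMonoidAlgebra.coeff_smul, Finsupp.smul_apply, smul_eq_mul] at this
        linarith
    calc √(∑ x ∈ X, ((erg Q (2 * s x) * g).coeff x) ^ 2)
        ≤ √(∑ x ∈ X, ((erg Q (s' x) * g).coeff x + 2 * (erg Q (2 * S) * g).coeff x) ^ 2) := by
          apply Real.sqrt_le_sqrt
          apply Finset.sum_le_sum
          intro x _
          exact pow_le_pow_left₀ (conv_nonneg (erg_nonneg hQ _) hg0 x) (hp x) 2
      _ ≤ √(∑ x ∈ X, ((erg Q (s' x) * g).coeff x) ^ 2) +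
          √(∑ x ∈ X, (2 * (erg Q (2 * S) * g).coeff x) ^ 2) := sqrt_sum_add_le _ _ _
      _ ≤ M * √(n2 g) + 2 * √(n2 g) := by
          apply add_le_add (hV g hg0 X s' hs'1)
          have : ∑ x ∈ X, (2 * (erg Q (2 * S) * g).coeff x) ^ 2 ≤ 2 ^ 2 * n2 g := by
            simp only [mul_pow]
            rw [← Finset.mul_sum]
            have := (n2_sum_le (erg Q (2 * S) * g) X).trans (hc (2 * S) g)
            gcongr
          calc _ ≤ √(2 ^ 2 * n2 g) := Real.sqrt_le_sqrt this
            _ = 2 * √(n2 g) := by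
              rw [Real.sqrt_mul (by norm_num), Real.sqrt_sq (by norm_num)]
      _ = (M + 2) * √(n2 g) := by ring
  have hTT : n2 T ≤ 4 * ((M + 2) * n2 g) := by
    rw [← ip_self]
    have e1 : ip T T = ∑ y ∈ X, ∑ z ∈ X, h y * h z * (erg Q (s y) * erg Q (s z)).coeff (z - y) := by
      unfold ip
      conv_lhs => rw [hT]
      rw [map_sum, Finset.sum_mul_sum, coeff_sum']
      refine Finset.sum_congr rfl fun y _ => ?_
      rw [coeff_sum']
      refine Finset.sum_congr rfl fun z _ => ?_
      rw [map_mul, rv_single, erg_rv hr, mul_mul_mul_comm, AddMonoidAlgebra.single_mul_single,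
        AddMonoidAlgebra.coeff_single_mul_apply]
      congr 2
      abel
    have e2 : ∀ (t : G → ℕ) y, (erg Q (t y) * g).coeff y =
        ∑ z ∈ X, h z * (erg Q (t y)).coeff (z - y) := by
      intro t y
      rw [mul_comm, conv_apply g _ y X hgs]
      refine Finset.sum_congr rfl fun z hz => ?_
      rw [hgc, if_pos hz, ← erg_rv hr, rv_coeff, erg_rv hr]
      congr 2; abel
    have e3 : ip T T ≤ ∑ y ∈ X, ∑ z ∈ X, (2 * (h y * (h z * (erg Q (2 * s y)).coeff (z - y))) +
        2 * (h z * (h y * (erg Q (2 * s z)).coeff (y - z)))) := by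
      rw [e1]
      refine Finset.sum_le_sum fun y _ => Finset.sum_le_sum fun z _ => ?_
      have := erg_mul_le' hQ (hs y).1 (hs z).1 (z - y)
      have e : (erg Q (2 * s z)).coeff (z - y) = (erg Q (2 * s z)).coeff (y - z) := by
        conv_lhs => rw [← erg_rv hr, rv_coeff]
        congr 1; abel
      rw [e] at this
      have hyz := mul_nonneg (h0 y) (h0 z)
      nlinarith [mul_le_mul_of_nonneg_left this hyz]
    have e4 : ∑ y ∈ X, ∑ z ∈ X, (2 * (h y * (h z * (erg Q (2 * s y)).coeff (z - y))) +
        2 * (h z * (h y * (erg Q (2 * s z)).coeff (y - z)))) =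
        4 * ∑ y ∈ X, h y * (erg Q (2 * s y) * g).coeff y := by
      simp only [Finset.sum_add_distrib]
      rw [Finset.sum_comm (f := fun y z => 2 * (h z * (h y * (erg Q (2 * s z)).coeff (y - z))))]
      rw [← Finset.sum_add_distrib, Finset.mul_sum]
      refine Finset.sum_congr rfl fun y _ => ?_
      rw [e2 (fun y => 2 * s y) y, ← Finset.mul_sum, ← Finset.mul_sum]
      ring
    rw [e4] at e3
    have e5 := Real.sum_mul_le_sqrt_mul_sqrt X h (fun y => (erg Q (2 * s y) * g).coeff y)
    rw [← hn2g] at e5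
    have e6 : √(n2 g) * √(∑ x ∈ X, ((erg Q (2 * s x) * g).coeff x) ^ 2) ≤ (M + 2) * n2 g := by
      calc _ ≤ √(n2 g) * ((M + 2) * √(n2 g)) := by gcongr
        _ = (M + 2) * (√(n2 g) * √(n2 g)) := by ring
        _ = _ := by rw [Real.mul_self_sqrt (n2_nonneg g)]
    linarith
  have hfin := ip_le f T
  rw [← hTf, ← hn2g] at hfin
  have hsq : √(n2 T) ≤ 2 * √(M + 2) * √(n2 g) := by
    calc √(n2 T) ≤ √(4 * ((M + 2) * n2 g)) := Real.sqrt_le_sqrt hTT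
      _ = _ := by
        rw [Real.sqrt_mul (by norm_num), Real.sqrt_mul (by linarith),
          show (4:ℝ) = 2 ^ 2 by norm_num, Real.sqrt_sq (by norm_num)]; ring
  change √(∑ x ∈ X, h x ^ 2) ≤ _
  rw [← hn2g]
  rcases eq_or_lt_of_le (Real.sqrt_nonneg (n2 g)) with h00 | h00
  · rw [← h00]; positivity
  · have : √(n2 g) * √(n2 g) ≤ √(n2 f) * (2 * √(M + 2) * √(n2 g)) := by
      rw [Real.mul_self_sqrt (n2_nonneg g)]
      exact hfin.trans (by gcongr)
    have h3 : √(n2 g) * √(n2 g) ≤ (2 * √(M + 2) * √(n2 f)) * √(n2 g) := by linarith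
    exact le_of_mul_le_mul_right h3 h00

lemma valid_triv {Q : AddMonoidAlgebra ℝ G} (hc : ∀ n g, n2 (erg Q n * g) ≤ n2 g) (S : ℕ) :
    ValidM Q S (S + 1) := by
  intro f hf X s hs
  have h1 : ∑ x ∈ X, ((erg Q (s x) * f).coeff x) ^ 2 ≤ (S + 1) * n2 f := by
    calc _ ≤ ∑ x ∈ X, ∑ k ∈ Finset.range (S + 1), ((erg Q k * f).coeff x) ^ 2 := by
          apply Finset.sum_le_sum; intro x _
          exact Finset.single_le_sum (f := fun k => ((erg Q k * f).coeff x) ^ 2)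
            (fun _ _ => sq_nonneg _) (Finset.mem_range.mpr (by have := hs x; omega))
      _ = ∑ k ∈ Finset.range (S + 1), ∑ x ∈ X, ((erg Q k * f).coeff x) ^ 2 := Finset.sum_comm
      _ ≤ ∑ k ∈ Finset.range (S + 1), n2 f := by
          apply Finset.sum_le_sum; intro k _
          exact (n2_sum_le _ X).trans (hc k f)
      _ = _ := by simp
  calc _ ≤ √((S + 1) * n2 f) := Real.sqrt_le_sqrt h1
    _ ≤ √((S + 1) ^ 2 * n2 f) := by
      apply Real.sqrt_le_sqrt
      apply mul_le_mul_of_nonneg_right _ (n2_nonneg f)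
      have : (0:ℝ) ≤ S := by positivity
      nlinarith
    _ = _ := by rw [Real.sqrt_mul (by positivity), Real.sqrt_sq (by positivity)]

lemma valid_six {Q : AddMonoidAlgebra ℝ G} (hQ : ∀ x, 0 ≤ Q.coeff x) (hr : rv Q = Q)
    (hc : ∀ n g, n2 (erg Q n * g) ≤ n2 g) {S : ℕ} (hS : 1 ≤ S) : ValidM Q S 6 := by
  set A : Set ℝ := {M | 0 ≤ M ∧ ValidM Q S M} with hA
  have hne : A.Nonempty := ⟨S + 1, by positivity, valid_triv hc S⟩
  have hb : BddBelow A := ⟨0, fun M hM => hM.1⟩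
  have h0 : 0 ≤ sInf A := le_csInf hne fun M hM => hM.1
  have hv : ValidM Q S (sInf A) := by
    intro f hf X s hs
    apply le_of_forall_pos_le_add
    intro ε hε
    obtain ⟨M, hM, hlt⟩ := exists_lt_of_csInf_lt hne
      (show sInf A < sInf A + ε / (√(n2 f) + 1) by
        have : 0 < ε / (√(n2 f) + 1) := by positivity
        linarith)
    have h1 := hM.2 f hf X s hs
    have h2 : M * √(n2 f) ≤ (sInf A + ε / (√(n2 f) + 1)) * √(n2 f) := by gcongr
    have h3 : ε / (√(n2 f) + 1) * √(n2 f) ≤ ε := by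
      rw [div_mul_eq_mul_div, div_le_iff₀ (by positivity)]
      nlinarith [Real.sqrt_nonneg (n2 f)]
    nlinarith
  have hle : sInf A ≤ 2 * √(sInf A + 2) :=
    csInf_le hb ⟨by positivity, valid_step hQ hr hc h0 hS hv⟩
  have h6 : sInf A ≤ 6 := by
    by_contra hcon
    push Not at hcon
    have hsq := Real.sq_sqrt (show 0 ≤ sInf A + 2 by linarith)
    nlinarith [Real.sqrt_nonneg (sInf A + 2)]
  intro f hf X s hs
  exact (hv f hf X s hs).trans (by gcongr)

end P1

end Part1

section Part2

section P2

/-- averaging over permutations of a function of an embedded tuple -/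
lemma perm_emb {ι κ : Type*} [Fintype ι] [DecidableEq ι] [Fintype κ] [DecidableEq κ]
    (h : (κ ↪ ι) → ℝ) (x : κ ↪ ι) :
    (Fintype.card (κ ↪ ι) : ℝ) * ∑ σ : Equiv.Perm ι, h (x.trans σ.toEmbedding) =
      (Fintype.card (Equiv.Perm ι) : ℝ) * ∑ z : κ ↪ ι, h z := by
  have hconst : ∀ z : κ ↪ ι, ∑ σ : Equiv.Perm ι, h (z.trans σ.toEmbedding) =
      ∑ σ : Equiv.Perm ι, h (x.trans σ.toEmbedding) := by
    intro z
    obtain ⟨τ, hτ⟩ : ∃ τ : Equiv.Perm ι, ∀ k, τ (x k) = z k := by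
      let e : {i // i ∈ Set.range x} ≃ {i // i ∈ Set.range z} :=
        (Equiv.ofInjective x x.injective).symm.trans (Equiv.ofInjective z z.injective)
      refine ⟨e.extendSubtype, fun k => ?_⟩
      rw [Equiv.extendSubtype_apply_of_mem e (x k) ⟨k, rfl⟩]
      have : (⟨x k, ⟨k, rfl⟩⟩ : {i // i ∈ Set.range x}) = Equiv.ofInjective x x.injective k := rfl
      rw [this]
      simp only [e, Equiv.trans_apply, Equiv.symm_apply_apply]
      rfl
    rw [← Equiv.sum_comp (Equiv.mulRight τ) (fun σ => h (x.trans σ.toEmbedding))]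
    refine Finset.sum_congr rfl fun σ _ => ?_
    congr 1
    ext k
    simp [hτ]
  have h1 : ∑ z : κ ↪ ι, ∑ σ : Equiv.Perm ι, h (z.trans σ.toEmbedding) =
      (Fintype.card (κ ↪ ι) : ℝ) * ∑ σ : Equiv.Perm ι, h (x.trans σ.toEmbedding) := by
    rw [Finset.sum_congr rfl fun z _ => hconst z]
    simp
  rw [← h1, Finset.sum_comm]
  have h2 : ∀ σ : Equiv.Perm ι, ∑ z : κ ↪ ι, h (z.trans σ.toEmbedding) = ∑ z : κ ↪ ι, h z := by
    intro σ
    let E : (κ ↪ ι) ≃ (κ ↪ ι) :=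
      { toFun := fun z => z.trans σ.toEmbedding
        invFun := fun z => z.trans σ.symm.toEmbedding
        left_inv := fun z => by ext k; simp
        right_inv := fun z => by ext k; simp }
    exact Equiv.sum_comp E h
  rw [Finset.sum_congr rfl fun σ _ => h2 σ]
  simp

/-- two-point version -/
lemma perm_two {ι : Type*} [Fintype ι] [DecidableEq ι] (h : ι → ι → ℝ) {i j : ι} (hij : i ≠ j) :
    ((Fintype.card ι : ℝ) * (Fintype.card ι - 1)) * ∑ σ : Equiv.Perm ι, h (σ i) (σ j) =
      (Fintype.card (Equiv.Perm ι) : ℝ) *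
        (∑ a, ∑ b, h a b - ∑ a, h a a) := by
  let x : Fin 2 ↪ ι := ⟨![i, j], by
    intro a b; fin_cases a <;> fin_cases b <;> simp [hij, hij.symm]⟩
  have := perm_emb (fun z : Fin 2 ↪ ι => h (z 0) (z 1)) x
  have hc : (Fintype.card (Fin 2 ↪ ι) : ℝ) = (Fintype.card ι : ℝ) * (Fintype.card ι - 1) := by
    have h2 : 1 ≤ Fintype.card ι := Fintype.card_pos_iff.mpr ⟨i⟩
    rw [Fintype.card_embedding_eq, Fintype.card_fin]
    simp [Nat.descFactorial, Nat.cast_sub h2]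
    ring
  rw [hc] at this
  have hs : ∑ z : Fin 2 ↪ ι, h (z 0) (z 1) = ∑ a, ∑ b, h a b - ∑ a, h a a := by
    have e1 : ∑ a, ∑ b, h a b - ∑ a, h a a = ∑ p ∈ (Finset.univ : Finset ι).offDiag, h p.1 p.2 := by
      have := Finset.sum_product (Finset.univ : Finset ι) (Finset.univ : Finset ι)
        (fun p => h p.1 p.2)
      rw [← this, ← Finset.diag_union_offDiag, Finset.sum_union (Finset.disjoint_diag_offDiag _),
        Finset.sum_diag]
      ring
    rw [e1]
    refine Finset.sum_bij' (fun z _ => (z 0, z 1)) (fun p hp => ⟨![p.1, p.2], by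
      have hp' := (Finset.mem_offDiag.mp hp).2.2
      intro a b; fin_cases a <;> fin_cases b <;> simp [hp', hp'.symm]⟩) ?_ ?_ ?_ ?_ ?_
    · intro z _
      simp
    · intro p hp; simp
    · intro z _
      ext k; fin_cases k <;> rfl
    · intro p hp; rfl
    · intro z _; rfl
  rw [hs] at this
  exact this

lemma perm_four_le {ι : Type*} [Fintype ι] [DecidableEq ι] (A B : ι → ℝ)
    (hA : ∀ i, 0 ≤ A i) (hB : ∀ i, 0 ≤ B i) {i j k l : ι}
    (hij : i ≠ j) (hik : i ≠ k) (hil : i ≠ l) (hjk : j ≠ k) (hjl : j ≠ l) (hkl : k ≠ l) :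
    ((Fintype.card ι : ℝ) * (Fintype.card ι - 1) * (Fintype.card ι - 2) * (Fintype.card ι - 3)) *
      ∑ σ : Equiv.Perm ι, A (σ i) * B (σ j) * (A (σ k) * B (σ l)) ≤
      (Fintype.card (Equiv.Perm ι) : ℝ) * ((∑ a, A a) ^ 2 * (∑ b, B b) ^ 2) := by
  let x : Fin 4 ↪ ι := ⟨![i, j, k, l], by
    intro a b; fin_cases a <;> fin_cases b <;> simp [*, Ne.symm, hij.symm, hik.symm, hil.symm, hjk.symm, hjl.symm, hkl.symm]⟩
  have := perm_emb (fun z : Fin 4 ↪ ι => A (z 0) * B (z 1) * (A (z 2) * B (z 3))) x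
  have hc : (Fintype.card (Fin 4 ↪ ι) : ℝ) = ((Fintype.card ι : ℝ) * (Fintype.card ι - 1) * (Fintype.card ι - 2) * (Fintype.card ι - 3)) := by
    have h2 : 4 ≤ Fintype.card ι := by
      have := Fintype.card_le_of_embedding x
      simpa using this
    rw [Fintype.card_embedding_eq, Fintype.card_fin]
    simp [Nat.descFactorial, Nat.cast_sub (show 1 ≤ Fintype.card ι by omega),
      Nat.cast_sub (show 2 ≤ Fintype.card ι by omega), Nat.cast_sub (show 3 ≤ Fintype.card ι by omega)]
    ring
  rw [hc] at this
  refine (le_of_eq this).trans ?_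
  apply mul_le_mul_of_nonneg_left _ (by positivity)
  let c : Fin 4 → ι → ℝ := ![A, B, A, B]
  have hc0 : ∀ k i, 0 ≤ c k i := by
    intro k i; fin_cases k <;> simp [c, hA, hB]
  have e1 : (∑ a, A a) ^ 2 * (∑ b, B b) ^ 2 = ∑ f : Fin 4 → ι, ∏ k, c k (f k) := by
    rw [← Fintype.prod_sum, Fin.prod_univ_four]
    simp [c]; ring
  rw [e1]
  have e2 : ∑ z : Fin 4 ↪ ι, A (z 0) * B (z 1) * (A (z 2) * B (z 3)) =
      ∑ f ∈ Finset.univ.map ⟨fun z : Fin 4 ↪ ι => (z : Fin 4 → ι), DFunLike.coe_injective⟩,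
        ∏ k, c k (f k) := by
    rw [Finset.sum_map]
    refine Finset.sum_congr rfl fun z _ => ?_
    rw [Fin.prod_univ_four]
    simp [c]; ring
  rw [e2]
  apply Finset.sum_le_sum_of_subset_of_nonneg (Finset.subset_univ _)
  intro f _ _
  exact Finset.prod_nonneg fun k _ => hc0 k _

/-- index type with pairs -/
abbrev PI (L R : Type) := (L × Bool) ⊕ R

/-- swap -/
def swp {L R : Type} (ε : L → Bool) : Equiv.Perm (PI L R) where
  toFun := Sum.map (fun p => (p.1, xor (ε p.1) p.2)) id
  invFun := Sum.map (fun p => (p.1, xor (ε p.1) p.2)) id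
  left_inv := by rintro (⟨l, b⟩ | r) <;> simp
  right_inv := by rintro (⟨l, b⟩ | r) <;> simp

lemma swap_avg {L R : Type} [Fintype L] [Fintype R] [DecidableEq L] [DecidableEq R]
    (c : PI L R → ℤ → ℝ) (y : PI L R → ℤ) :
    (2:ℝ) ^ (Fintype.card L) * ∑ σ : Equiv.Perm (PI L R), ∏ i, c i (y (σ i)) =
    ∑ σ : Equiv.Perm (PI L R), (∏ r, c (.inr r) (y (σ (.inr r)))) *
      ∏ l, ∑ b : Bool, c (.inl (l, false)) (y (σ (.inl (l, b)))) *
        c (.inl (l, true)) (y (σ (.inl (l, !b)))) := by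
  have h1 : ∀ ε : L → Bool, ∑ σ : Equiv.Perm (PI L R), ∏ i, c i (y (σ i)) =
      ∑ σ : Equiv.Perm (PI L R), ∏ i, c i (y (σ (swp ε i))) := by
    intro ε
    rw [← Equiv.sum_comp (Equiv.mulRight (swp ε)) (fun σ => ∏ i, c i (y (σ i)))]
    rfl
  have h2 : ∑ ε : L → Bool, ∑ σ : Equiv.Perm (PI L R), ∏ i, c i (y (σ (swp ε i))) =
      (2:ℝ) ^ (Fintype.card L) * ∑ σ : Equiv.Perm (PI L R), ∏ i, c i (y (σ i)) := by
    rw [← Finset.sum_congr rfl fun ε _ => h1 ε]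
    simp
  rw [← h2, Finset.sum_comm]
  refine Finset.sum_congr rfl fun σ _ => ?_
  rw [Fintype.prod_sum, Finset.mul_sum]
  refine Finset.sum_congr rfl fun ε _ => ?_
  rw [Fintype.prod_sum_type, mul_comm, Fintype.prod_prod_type]
  congr 1
  refine Finset.prod_congr rfl fun l _ => ?_
  simp [swp, mul_comm]

lemma exp_key (x : ℝ) : x ≤ Real.exp (-((1 - x ^ 2) / 2)) := by
  have h1 : x ≤ Real.exp (x - 1) := by linarith [Real.add_one_le_exp (x - 1)]
  refine h1.trans (Real.exp_le_exp.mpr ?_)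
  nlinarith [sq_nonneg (x - 1)]

lemma exp_cheb {Z μ : ℝ} (hZ : 0 ≤ Z) (hμ : 0 < μ) :
    Real.exp (-Z) ≤ 2 / μ + 4 * (Z - μ) ^ 2 / μ ^ 2 := by
  by_cases h : μ / 2 ≤ Z
  · have h1 : Real.exp (-Z) ≤ 2 / μ := by
      rw [Real.exp_neg, inv_le_comm₀ (Real.exp_pos _) (by positivity)]
      have := Real.add_one_le_exp Z
      rw [inv_div]; linarith
    have : 0 ≤ 4 * (Z - μ) ^ 2 / μ ^ 2 := by positivity
    linarith
  · push Not at h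
    have h1 : Real.exp (-Z) ≤ 1 := Real.exp_le_one_iff.mpr (by linarith)
    have h2 : 1 ≤ 4 * (Z - μ) ^ 2 / μ ^ 2 := by
      rw [le_div_iff₀ (by positivity)]
      nlinarith
    have : 0 ≤ 2 / μ := by positivity
    linarith

/-- orbit estimate for a fixed pairing -/
lemma orbit_pair {L R : Type} [Fintype L] [Fintype R] [DecidableEq L] [DecidableEq R]
    (c : PI L R → ℤ → ℝ) (y : PI L R → ℤ) (a : PI L R → ℝ)
    (hc1 : ∀ i n, |c i n| ≤ 1) (hc0 : ∀ i, c i 0 = 1) (hca : ∀ i, c i 1 = a i)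
    (hca' : ∀ i, c i (-1) = a i) :
    |∑ σ : Equiv.Perm (PI L R), ∏ i, c i (y (σ i))| ≤
      ∑ σ : Equiv.Perm (PI L R), Real.exp (-(∑ l : L,
        ((1 - ((a (.inl (l, false)) + a (.inl (l, true))) / 2) ^ 2) / 2) *
          ((if |y (σ (.inl (l, false)))| = 1 then 1 else 0) *
            (if y (σ (.inl (l, true))) = 0 then 1 else 0)))) := by
  have key := swap_avg c y
  have hpow : (0:ℝ) < (2:ℝ) ^ (Fintype.card L) := by positivity
  have h2 : ∑ σ : Equiv.Perm (PI L R), ∏ i, c i (y (σ i)) =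
      ∑ σ : Equiv.Perm (PI L R), (∏ r, c (.inr r) (y (σ (.inr r)))) *
      ∏ l, ((∑ b : Bool, c (.inl (l, false)) (y (σ (.inl (l, b)))) *
        c (.inl (l, true)) (y (σ (.inl (l, !b))))) / 2) := by
    apply mul_left_cancel₀ hpow.ne'
    rw [key, Finset.mul_sum]
    refine Finset.sum_congr rfl fun σ _ => ?_
    rw [Finset.prod_div_distrib, Finset.prod_const, Finset.card_univ]
    field_simp
  rw [h2]
  refine (Finset.abs_sum_le_sum_abs _ _).trans (Finset.sum_le_sum fun σ _ => ?_)
  rw [abs_mul, Finset.abs_prod, Finset.abs_prod]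
  have hR : ∏ r, |c (.inr r) (y (σ (.inr r)))| ≤ 1 :=
    Finset.prod_le_one (fun _ _ => abs_nonneg _) fun _ _ => hc1 _ _
  rw [← Finset.sum_neg_distrib, Real.exp_sum]
  refine (mul_le_of_le_one_left (Finset.prod_nonneg fun _ _ => abs_nonneg _) hR).trans ?_
  refine Finset.prod_le_prod (fun _ _ => abs_nonneg _) fun l _ => ?_
  have hab : ∀ i, |a i| ≤ 1 := fun i => by rw [← hca]; exact hc1 _ _
  simp only [Fintype.sum_bool, Bool.not_true, Bool.not_false]
  by_cases hE : |y (σ (.inl (l, false)))| = 1 ∧ y (σ (.inl (l, true))) = 0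
  · rw [if_pos hE.1, if_pos hE.2, hE.2]
    have ev : ∀ i, c i (y (σ (.inl (l, false)))) = a i := by
      intro i
      rcases (abs_eq (by norm_num : (0:ℤ) ≤ 1)).mp hE.1 with h | h
      · rw [h, hca]
      · rw [h, hca']
    rw [ev, ev, hc0, hc0]
    have := exp_key |(a (.inl (l, false)) + a (.inl (l, true))) / 2|
    rw [sq_abs] at this
    simp only [mul_one, one_mul]
    rw [add_comm (a (.inl (l, true)))] 
    exact this
  · have h0 : ((if |y (σ (.inl (l, false)))| = 1 then (1:ℝ) else 0) *
            (if y (σ (.inl (l, true))) = 0 then 1 else 0)) = 0 := by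
      by_cases h1 : |y (σ (.inl (l, false)))| = 1
      · have : ¬ y (σ (.inl (l, true))) = 0 := fun h => hE ⟨h1, h⟩
        simp [this]
      · simp [h1]
    rw [h0, mul_zero, neg_zero, Real.exp_zero, abs_div, abs_two, div_le_one (by norm_num)]
    refine (abs_add_le _ _).trans ?_
    rw [abs_mul, abs_mul]
    have := mul_le_one₀ (hc1 (.inl (l, false)) (y (σ (.inl (l, true))))) (abs_nonneg _) (hc1 (.inl (l, true)) (y (σ (.inl (l, false)))))
    have := mul_le_one₀ (hc1 (.inl (l, false)) (y (σ (.inl (l, false))))) (abs_nonneg _) (hc1 (.inl (l, true)) (y (σ (.inl (l, true)))))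
    linarith

/-- second moment estimate -/
lemma second_moment {L R : Type} [Fintype L] [Fintype R] [DecidableEq L] [DecidableEq R]
    (w : L → ℝ) (hw0 : ∀ l, 0 ≤ w l) (hw1 : ∀ l, w l ≤ 1)
    (A B : PI L R → ℝ) (hA : ∀ i, A i = 0 ∨ A i = 1) (hB : ∀ i, B i = 0 ∨ B i = 1)
    (hAB : ∀ i, A i * B i = 0) (d : ℝ) (hd : d = Fintype.card (PI L R)) (hd16 : 16 ≤ d)
    (μ : ℝ) (hμ : μ = (∑ i, A i) * (∑ i, B i) / (d * (d - 1)) * ∑ l, w l) (hμ0 : 0 < μ) :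
    ∑ σ : Equiv.Perm (PI L R), Real.exp (-(∑ l : L, w l *
      (A (σ (.inl (l, false))) * B (σ (.inl (l, true)))))) ≤
      (Fintype.card (Equiv.Perm (PI L R)) : ℝ) * (42 / μ) := by
  set P : ℝ := (Fintype.card (Equiv.Perm (PI L R)) : ℝ) with hP
  have hP0 : 0 ≤ P := by positivity
  have hA0 : ∀ i, 0 ≤ A i := fun i => by rcases hA i with h | h <;> rw [h]; norm_num
  have hB0 : ∀ i, 0 ≤ B i := fun i => by rcases hB i with h | h <;> rw [h]; norm_num
  have hA1 : ∀ i, A i ≤ 1 := fun i => by rcases hA i with h | h <;> rw [h]; norm_num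
  have hB1 : ∀ i, B i ≤ 1 := fun i => by rcases hB i with h | h <;> rw [h]; norm_num
  set SA := ∑ i, A i with hSA
  set SB := ∑ i, B i with hSB
  set W := ∑ l, w l with hW
  have hSA0 : 0 ≤ SA := Finset.sum_nonneg fun i _ => hA0 i
  have hSB0 : 0 ≤ SB := Finset.sum_nonneg fun i _ => hB0 i
  have hW0 : 0 ≤ W := Finset.sum_nonneg fun i _ => hw0 i
  have hdd : 0 < d * (d - 1) := by nlinarith
  set p := SA * SB / (d * (d - 1)) with hp
  have hp0 : 0 ≤ p := by positivity
  set E : L → Equiv.Perm (PI L R) → ℝ :=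
    fun l σ => A (σ (.inl (l, false))) * B (σ (.inl (l, true))) with hE
  have hE0 : ∀ l σ, 0 ≤ E l σ := fun l σ => mul_nonneg (hA0 _) (hB0 _)
  -- first moment
  have hE1 : ∀ l, ∑ σ, E l σ = P * p := by
    intro l
    have h := perm_two (fun a b => A a * B b) (i := (.inl (l, false) : PI L R))
      (j := .inl (l, true)) (by simp)
    rw [← hd] at h
    have e : ∑ a, ∑ b, A a * B b - ∑ a, A a * B a = SA * SB := by
      rw [Finset.sum_congr rfl fun i _ => hAB i, ← Finset.sum_mul_sum]; simp [SA, SB]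
    rw [e] at h
    rw [hp, mul_div_assoc', eq_div_iff hdd.ne', mul_comm]
    exact h
  have hEE : ∀ l l', l ≠ l' → ∑ σ, E l σ * E l' σ ≤ P * (p ^ 2 * (1 + 8 / d)) := by
    intro l l' hll
    have h := perm_four_le A B hA0 hB0 (i := (.inl (l, false) : PI L R))
      (j := .inl (l, true)) (k := .inl (l', false)) (l := .inl (l', true))
      (by simp) (by simp [hll]) (by simp) (by simp) (by simp [hll]) (by simp)
    rw [← hd] at h
    have hd4 : 0 < d * (d - 1) * (d - 2) * (d - 3) := by
      have h1 : 0 < d - 1 := by linarith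
      have h2 : 0 < d - 2 := by linarith
      have h3 : 0 < d - 3 := by linarith
      have h0 : 0 < d := by linarith
      positivity
    have h' : ∑ σ, E l σ * E l' σ ≤ P * (SA ^ 2 * SB ^ 2) / (d * (d - 1) * (d - 2) * (d - 3)) := by
      rw [le_div_iff₀ hd4, mul_comm]; exact h
    refine h'.trans ?_
    rw [mul_div_assoc]
    apply mul_le_mul_of_nonneg_left _ hP0
    rw [hp, div_pow, mul_pow, div_mul_eq_mul_div, div_le_div_iff₀ hd4 (by positivity)]
    have hq : (d * (d - 1)) ^ 2 ≤ (1 + 8 / d) * (d * (d - 1) * (d - 2) * (d - 3)) := by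
      have h0 : 0 < d := by linarith
      have : (1 + 8 / d) * (d * (d - 1) * (d - 2) * (d - 3)) =
        (d + 8) * ((d - 1) * (d - 2) * (d - 3)) := by field_simp
      rw [this]
      have h3 : d ^ 2 * (d - 1) ≤ (d + 8) * ((d - 2) * (d - 3)) := by nlinarith
      have h1 : 0 ≤ d - 1 := by linarith
      nlinarith [mul_le_mul_of_nonneg_right h3 h1]
    calc SA ^ 2 * SB ^ 2 * (d * (d - 1)) ^ 2 ≤ SA ^ 2 * SB ^ 2 *
        ((1 + 8 / d) * (d * (d - 1) * (d - 2) * (d - 3))) := by gcongr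
      _ = _ := by ring
  set Z : Equiv.Perm (PI L R) → ℝ := fun σ => ∑ l, w l * E l σ with hZ
  have hZ0 : ∀ σ, 0 ≤ Z σ := fun σ => Finset.sum_nonneg fun l _ => mul_nonneg (hw0 l) (hE0 l σ)
  have hZ1 : ∑ σ, Z σ = P * μ := by
    simp only [hZ]
    rw [Finset.sum_comm]
    have : ∀ l, ∑ σ, w l * E l σ = w l * (P * p) := fun l => by rw [← Finset.mul_sum, hE1]
    rw [Finset.sum_congr rfl fun l _ => this l, ← Finset.sum_mul, hμ]
    ring
  have hZ2 : ∑ σ, Z σ ^ 2 ≤ P * (μ + μ ^ 2 * (1 + 8 / d)) := by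
    have e1 : ∑ σ, Z σ ^ 2 = ∑ l, ∑ l', w l * w l' * ∑ σ, E l σ * E l' σ := by
      simp only [hZ, sq, Finset.sum_mul_sum]
      rw [Finset.sum_comm]
      refine Finset.sum_congr rfl fun l _ => ?_
      rw [Finset.sum_comm]
      refine Finset.sum_congr rfl fun l' _ => ?_
      rw [Finset.mul_sum]
      exact Finset.sum_congr rfl fun σ _ => by ring
    have e2 : ∀ l l', w l * w l' * ∑ σ, E l σ * E l' σ ≤
        (if l = l' then w l * (P * p) else 0) + w l * w l' * (P * (p ^ 2 * (1 + 8 / d))) := by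
      intro l l'
      have hww := mul_nonneg (hw0 l) (hw0 l')
      have hd0 : 0 < d := by linarith
      have hpp : 0 ≤ w l * w l' * (P * (p ^ 2 * (1 + 8 / d))) := by positivity
      by_cases hl : l = l'
      · subst hl
        rw [if_pos rfl]
        have : ∑ σ, E l σ * E l σ ≤ P * p := by
          rw [← hE1 l]
          refine Finset.sum_le_sum fun σ _ => ?_
          exact mul_le_of_le_one_left (hE0 _ _) (mul_le_one₀ (hA1 _) (hB0 _) (hB1 _))
        have h4 : 0 ≤ P * p := by positivity
        have h3 : w l * w l * ∑ σ, E l σ * E l σ ≤ w l * 1 * (P * p) := by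
          have := hw0 l
          have := hw1 l
          have : 0 ≤ ∑ σ, E l σ * E l σ := Finset.sum_nonneg fun σ _ => mul_self_nonneg _
          gcongr
        linarith
      · rw [if_neg hl, zero_add]
        exact mul_le_mul_of_nonneg_left (hEE l l' hl) hww
    rw [e1]
    refine (Finset.sum_le_sum fun l _ => Finset.sum_le_sum fun l' _ => e2 l l').trans ?_
    simp only [Finset.sum_add_distrib, Finset.sum_ite_eq, Finset.mem_univ, if_true]
    simp only [← Finset.sum_mul, ← Finset.mul_sum]
    rw [← hW, hμ]
    apply le_of_eq; ring
  have hμd : μ ≤ d := by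
    have h1 : W ≤ d := by
      have : W ≤ ∑ l : L, 1 := Finset.sum_le_sum fun l _ => hw1 l
      have h2 : (Fintype.card (PI L R) : ℝ) = (Fintype.card L : ℝ) * 2 + Fintype.card R := by
        simp
      simp at this
      have h3 : (0:ℝ) ≤ Fintype.card L := by positivity
      have h4 : (0:ℝ) ≤ Fintype.card R := by positivity
      rw [hd, h2]; linarith
    have h2 : SA * SB ≤ d * (d - 1) := by
      have hs : SA + SB ≤ d := by
        rw [hSA, hSB, ← Finset.sum_add_distrib]
        have : ∑ i, (A i + B i) ≤ ∑ i : PI L R, (1:ℝ) := by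
          refine Finset.sum_le_sum fun i _ => ?_
          have := hAB i
          rcases hA i with h | h
          · rcases hB i with h' | h' <;> rw [h, h'] <;> norm_num
          · have h' : B i = 0 := by simpa [h] using this
            rw [h, h']; norm_num
        rw [hd]; simpa using this
      nlinarith [sq_nonneg (SA - SB)]
    have h3 : p ≤ 1 := by rw [hp, div_le_one hdd]; exact h2
    rw [hμ]
    calc p * W ≤ 1 * W := by gcongr
      _ ≤ d := by linarith
  have hd0 : 0 < d := by linarith
  have hvar : ∑ σ, (Z σ - μ) ^ 2 ≤ P * (9 * μ) := by
    have : ∑ σ, (Z σ - μ) ^ 2 = ∑ σ, Z σ ^ 2 - 2 * μ * ∑ σ, Z σ + P * μ ^ 2 := by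
      have h5 : P * μ ^ 2 = ∑ σ : Equiv.Perm (PI L R), μ ^ 2 := by simp [hP]
      rw [h5, Finset.mul_sum, ← Finset.sum_sub_distrib, ← Finset.sum_add_distrib]
      exact Finset.sum_congr rfl fun σ _ => by ring
    rw [this, hZ1]
    have h6 : μ ^ 2 * (8 / d) ≤ 8 * μ := by
      rw [mul_div_assoc', div_le_iff₀ hd0]; nlinarith
    have h7 : P * (μ ^ 2 * (8 / d)) ≤ P * (8 * μ) := by gcongr
    nlinarith
  calc ∑ σ : Equiv.Perm (PI L R), Real.exp (-(Z σ))
      ≤ ∑ σ : Equiv.Perm (PI L R), (2 / μ + 4 * (Z σ - μ) ^ 2 / μ ^ 2) :=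
        Finset.sum_le_sum fun σ _ => exp_cheb (hZ0 σ) hμ0
    _ = P * (2 / μ) + 4 / μ ^ 2 * ∑ σ, (Z σ - μ) ^ 2 := by
        rw [Finset.sum_add_distrib, Finset.mul_sum]
        congr 1
        · simp [hP]
        · exact Finset.sum_congr rfl fun σ _ => by ring
    _ ≤ P * (2 / μ) + 4 / μ ^ 2 * (P * (9 * μ)) := by gcongr
    _ = P * (38 / μ) := by field_simp; ring
    _ ≤ P * (42 / μ) := by gcongr; norm_num


lemma exists_pairing {L R : Type} [Fintype L] [Fintype R] [DecidableEq L] [DecidableEq R]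
    (a : PI L R → ℝ) (ha : ∀ i, |a i| ≤ 1) (d lam : ℝ) (hd : d = Fintype.card (PI L R))
    (hd2 : 2 ≤ d) (hlam : lam = (∑ i, (1 - a i)) / (2 * d)) :
    ∃ τ : Equiv.Perm (PI L R), (Fintype.card L : ℝ) * (lam * (1 - lam)) ≤
      ∑ l, (1 - ((a (τ (.inl (l, false))) + a (τ (.inl (l, true)))) / 2) ^ 2) / 2 := by
  by_contra hcon
  push Not at hcon
  set h : PI L R → PI L R → ℝ := fun i j => (1 - ((a i + a j) / 2) ^ 2) / 2 with hh
  set P : ℝ := (Fintype.card (Equiv.Perm (PI L R)) : ℝ) with hP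
  set m : ℝ := (Fintype.card L : ℝ) with hm
  have hP0 : 0 < P := by
    rw [hP]; exact_mod_cast Fintype.card_pos
  have h1 : ∑ τ : Equiv.Perm (PI L R), ∑ l, h (τ (.inl (l, false))) (τ (.inl (l, true))) <
      P * (m * (lam * (1 - lam))) := by
    have := Finset.sum_lt_sum_of_nonempty (s := (Finset.univ : Finset (Equiv.Perm (PI L R))))
      Finset.univ_nonempty fun τ _ => hcon τ
    refine this.trans_le ?_
    simp [hP]
  rw [Finset.sum_comm] at h1
  set S := ∑ i, a i with hS
  set M := ∑ i, a i ^ 2 with hM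
  have hMd : M ≤ d := by
    have : M ≤ ∑ i : PI L R, (1:ℝ) := Finset.sum_le_sum fun i _ => by
      rw [sq_le_one_iff_abs_le_one]; exact ha i
    rw [hd]; simpa using this
  have hcard : ∑ i : PI L R, (1:ℝ) = d := by rw [hd]; simp
  have hoff : ∑ i, ∑ j, h i j - ∑ i, h i i = d ^ 2 / 2 - d * M / 4 - S ^ 2 / 4 - (d - M) / 2 := by
    have e1 : ∀ i, ∑ j, h i j = d * (1 / 2 - a i ^ 2 / 8) - a i * S / 4 - M / 8 := by
      intro i
      have : ∀ j, h i j = (1 / 2 - a i ^ 2 / 8) * 1 - a i / 4 * a j - 1 / 8 * a j ^ 2 := by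
        intro j; simp only [hh]; ring
      rw [Finset.sum_congr rfl fun j _ => this j, Finset.sum_sub_distrib, Finset.sum_sub_distrib,
        ← Finset.mul_sum, ← Finset.mul_sum, ← Finset.mul_sum, hcard]
      ring
    have e2 : ∑ i, ∑ j, h i j = d * (d * (1 / 2)) - d * M / 8 - S * S / 4 - d * M / 8 := by
      rw [Finset.sum_congr rfl fun j _ => e1 j]
      have : ∀ i, d * (1 / 2 - a i ^ 2 / 8) - a i * S / 4 - M / 8 =
        (d / 2 - M / 8) * 1 - d / 8 * a i ^ 2 - S / 4 * a i := by intro i; ring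
      rw [Finset.sum_congr rfl fun j _ => this j, Finset.sum_sub_distrib, Finset.sum_sub_distrib,
        ← Finset.mul_sum, ← Finset.mul_sum, ← Finset.mul_sum, hcard]
      ring
    have e3 : ∑ i, h i i = (d - M) / 2 := by
      have : ∀ i, h i i = (1 / 2) * 1 - (1 / 2) * a i ^ 2 := by intro i; simp only [hh]; ring
      rw [Finset.sum_congr rfl fun j _ => this j, Finset.sum_sub_distrib,
        ← Finset.mul_sum, ← Finset.mul_sum, hcard]
      ring
    rw [e2, e3]; ring
  have hSl : S = d * (1 - 2 * lam) := by
    rw [hlam, Finset.sum_sub_distrib, hcard]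
    field_simp; ring
  have hdd : 0 < d * (d - 1) := by nlinarith
  have h2 : ∀ l : L, P * (lam * (1 - lam)) ≤
      ∑ τ : Equiv.Perm (PI L R), h (τ (.inl (l, false))) (τ (.inl (l, true))) := by
    intro l
    have h3 := perm_two h (i := (.inl (l, false) : PI L R)) (j := .inl (l, true)) (by simp)
    rw [← hd, hoff] at h3
    have h4 : d * (d - 1) * (lam * (1 - lam)) ≤
        d ^ 2 / 2 - d * M / 4 - S ^ 2 / 4 - (d - M) / 2 := by
      have e : d ^ 2 * (lam * (1 - lam)) = (d ^ 2 - S ^ 2) / 4 := by rw [hSl]; ring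
      have hSd : S ^ 2 ≤ d ^ 2 := by
        apply sq_le_sq'
        · have : ∑ i : PI L R, (-1:ℝ) ≤ S := Finset.sum_le_sum fun i _ => (abs_le.mp (ha i)).1
          rw [Finset.sum_neg_distrib, hcard] at this; exact this
        · have : S ≤ ∑ i : PI L R, (1:ℝ) := Finset.sum_le_sum fun i _ => (abs_le.mp (ha i)).2
          rw [hcard] at this; exact this
      have hl0 : 0 ≤ d * (lam * (1 - lam)) := by
        have : 0 ≤ d * (d * (lam * (1 - lam))) := by nlinarith
        exact nonneg_of_mul_nonneg_right this (by linarith)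
      nlinarith [mul_nonneg (sub_nonneg.mpr hMd) (sub_nonneg.mpr hd2)]
    have h5 : d * (d - 1) * (P * (lam * (1 - lam))) ≤ d * (d - 1) *
        ∑ τ : Equiv.Perm (PI L R), h (τ (.inl (l, false))) (τ (.inl (l, true))) := by
      rw [h3]
      nlinarith [mul_le_mul_of_nonneg_left h4 hP0.le]
    exact le_of_mul_le_mul_left h5 hdd
  have h6 := Finset.sum_le_sum fun l (_ : l ∈ (Finset.univ : Finset L)) => h2 l
  have h7 : ∑ l : L, P * (lam * (1 - lam)) = P * (m * (lam * (1 - lam))) := by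
    simp [hm]; ring
  linarith

/-- main orbit estimate -/
lemma orbit_main (d : ℕ) (hd : 16 ≤ d) (c : Fin d → ℤ → ℝ) (y : Fin d → ℤ)
    (hc1 : ∀ i n, |c i n| ≤ 1) (hc0 : ∀ i, c i 0 = 1) (hca' : ∀ i, c i (-1) = c i 1)
    (lam N : ℝ) (hlam : lam = (∑ i, (1 - c i 1)) / (2 * d)) (hl0 : 0 < lam) (hl1 : lam < 1)
    (hN : 0 < N) (hn1 : N / 4 ≤ ∑ i, if |y i| = 1 then (1:ℝ) else 0)
    (hn0 : (d:ℝ) / 2 ≤ ∑ i, if y i = 0 then (1:ℝ) else 0) :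
    |∑ σ : Equiv.Perm (Fin d), ∏ i, c i (y (σ i))| ≤
      (Fintype.card (Equiv.Perm (Fin d)) : ℝ) * (1008 / (N * lam * (1 - lam))) := by
  have hcard : Fintype.card (PI (Fin (d / 2)) (Fin (d % 2))) = d := by
    simp; omega
  let e0 : PI (Fin (d / 2)) (Fin (d % 2)) ≃ Fin d := Fintype.equivOfCardEq (by simpa using hcard)
  have hD : (d:ℝ) = Fintype.card (PI (Fin (d / 2)) (Fin (d % 2))) := by rw [hcard]
  have hd16 : (16:ℝ) ≤ d := by exact_mod_cast hd
  obtain ⟨τ, hτ⟩ := exists_pairing (L := Fin (d / 2)) (R := Fin (d % 2)) (fun j => c (e0 j) 1)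
    (fun j => hc1 _ _) d lam hD (by linarith)
    (by rw [hlam]; congr 1; exact (Equiv.sum_comp e0 (fun i => 1 - c i 1)).symm)
  let e : PI (Fin (d / 2)) (Fin (d % 2)) ≃ Fin d := τ.trans e0
  have hre : ∑ σ : Equiv.Perm (Fin d), ∏ i, c i (y (σ i)) =
      ∑ σ : Equiv.Perm (PI (Fin (d / 2)) (Fin (d % 2))), ∏ j, c (e j) (y (e (σ j))) := by
    rw [← Equiv.sum_comp (Equiv.permCongr e) (fun σ => ∏ i, c i (y (σ i)))]
    refine Finset.sum_congr rfl fun σ _ => ?_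
    rw [← Equiv.prod_comp e (fun i => c i (y ((Equiv.permCongr e σ) i)))]
    simp
  have hPc : Fintype.card (Equiv.Perm (Fin d)) =
      Fintype.card (Equiv.Perm (PI (Fin (d / 2)) (Fin (d % 2)))) :=
    Fintype.card_congr (Equiv.permCongr e.symm)
  rw [hre, hPc]
  refine (orbit_pair (fun j => c (e j)) (fun j => y (e j)) (fun j => c (e j) 1)
    (fun _ _ => hc1 _ _) (fun _ => hc0 _) (fun _ => rfl) (fun _ => hca' _)).trans ?_
  set w : Fin (d / 2) → ℝ := fun l =>
    (1 - ((c (e (.inl (l, false))) 1 + c (e (.inl (l, true))) 1) / 2) ^ 2) / 2 with hw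
  set A : PI (Fin (d / 2)) (Fin (d % 2)) → ℝ := fun j => if |y (e j)| = 1 then 1 else 0 with hA
  set B : PI (Fin (d / 2)) (Fin (d % 2)) → ℝ := fun j => if y (e j) = 0 then 1 else 0 with hB
  have hSA : ∑ j, A j = ∑ i, if |y i| = 1 then (1:ℝ) else 0 :=
    Equiv.sum_comp e (fun i => if |y i| = 1 then (1:ℝ) else 0)
  have hSB : ∑ j, B j = ∑ i, if y i = 0 then (1:ℝ) else 0 :=
    Equiv.sum_comp e (fun i => if y i = 0 then (1:ℝ) else 0)
  have hW : ((d / 2 : ℕ) : ℝ) * (lam * (1 - lam)) ≤ ∑ l, w l := by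
    rw [Fintype.card_fin] at hτ
    exact hτ
  have hm : (d:ℝ) / 3 ≤ ((d / 2 : ℕ) : ℝ) := by
    rw [div_le_iff₀ (by norm_num)]
    exact_mod_cast (by omega : d ≤ d / 2 * 3)
  have hll : 0 < lam * (1 - lam) := mul_pos hl0 (by linarith)
  set μ := (∑ i, A i) * (∑ i, B i) / ((d:ℝ) * (d - 1)) * ∑ l, w l with hμ
  have hμ1 : N * lam * (1 - lam) / 24 ≤ μ := by
    have h1 : N / (8 * d) ≤ (∑ i, A i) * (∑ i, B i) / ((d:ℝ) * (d - 1)) := by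
      rw [hSA, hSB, div_le_div_iff₀ (by linarith) (by nlinarith)]
      have h2 : N / 4 * (d / 2) ≤ (∑ i, if |y i| = 1 then (1:ℝ) else 0) *
          (∑ i, if y i = 0 then (1:ℝ) else 0) :=
        mul_le_mul hn1 hn0 (by linarith) (le_trans (by linarith) hn1)
      have h3 := mul_le_mul_of_nonneg_right h2 (show (0:ℝ) ≤ 8 * d by linarith)
      have h4 : 0 ≤ N * d := by positivity
      nlinarith
    have h2 : (d:ℝ) / 3 * (lam * (1 - lam)) ≤ ∑ l, w l := le_trans (by gcongr) hW
    calc N * lam * (1 - lam) / 24 = N / (8 * d) * ((d:ℝ) / 3 * (lam * (1 - lam))) := by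
          field_simp; ring
      _ ≤ μ := by
          rw [hμ]
          exact mul_le_mul h1 h2 (by positivity) (le_trans (by positivity) h1)
  have hNl : 0 < N * lam * (1 - lam) := by rw [mul_assoc]; positivity
  have hμ0 : 0 < μ := lt_of_lt_of_le (by positivity) hμ1
  have hx : ∀ l : Fin (d / 2), ((c (e (.inl (l, false))) 1 + c (e (.inl (l, true))) 1) / 2) ^ 2 ≤ 1 := by
    intro l
    rw [sq_le_one_iff_abs_le_one, abs_le]
    have h1 := abs_le.mp (hc1 (e (.inl (l, false))) 1)
    have h2 := abs_le.mp (hc1 (e (.inl (l, true))) 1)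
    constructor <;> linarith [h1.1, h1.2, h2.1, h2.2]
  have := second_moment w (fun l => by have := hx l; simp only [hw]; linarith)
    (fun l => by
      simp only [hw]
      have := sq_nonneg ((c (e (.inl (l, false))) 1 + c (e (.inl (l, true))) 1) / 2); linarith)
    A B (fun i => by by_cases h : |y (e i)| = 1 <;> simp [hA, h])
    (fun i => by by_cases h : y (e i) = 0 <;> simp [hB, h])
    (fun i => by by_cases h : y (e i) = 0 <;> simp [hA, hB, h]) d hD hd16 μ hμ hμ0
  refine this.trans ?_
  apply mul_le_mul_of_nonneg_left _ (by positivity)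
  rw [div_le_div_iff₀ hμ0 hNl]
  linarith

end P2

end Part2

section Part3

open Finset

noncomputable def cst (q : ℝ) {d : ℕ} (y : Fin d → ℤ) : ℝ := ∑ i, |(y i : ℝ)| ^ q

open Classical in
noncomputable def bs (q : ℝ) (d : ℕ) (s : ℝ) : Finset (Fin d → ℤ) :=
  (Finset.Icc (fun _ => -(⌈s⌉₊ : ℤ)) (fun _ => (⌈s⌉₊ : ℤ))).filter (fun x => cst q x ≤ s)

lemma abs_le_rpow {q : ℝ} (hq : 1 ≤ q) (n : ℤ) : |(n : ℝ)| ≤ |(n : ℝ)| ^ q := by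
  rcases eq_or_ne n 0 with h | h
  · subst h; simp; exact Real.rpow_nonneg le_rfl q
  · have : (1:ℝ) ≤ |(n:ℝ)| := by exact_mod_cast Int.one_le_abs h
    simpa using Real.rpow_le_rpow_of_exponent_le this hq

lemma cst_term_le (q : ℝ) {d : ℕ} (y : Fin d → ℤ) (i : Fin d) : |(y i : ℝ)| ^ q ≤ cst q y :=
  Finset.single_le_sum (f := fun i => |(y i : ℝ)| ^ q)
    (fun j _ => Real.rpow_nonneg (abs_nonneg _) q) (Finset.mem_univ i)

lemma cst_nonneg (q : ℝ) {d : ℕ} (y : Fin d → ℤ) : 0 ≤ cst q y :=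
  Finset.sum_nonneg fun i _ => Real.rpow_nonneg (abs_nonneg _) q

lemma mem_bs {q : ℝ} (hq : 1 ≤ q) {d : ℕ} {s : ℝ} {y : Fin d → ℤ} :
    y ∈ bs q d s ↔ cst q y ≤ s := by
  unfold bs
  rw [Finset.mem_filter, Finset.mem_Icc]
  refine ⟨fun h => h.2, fun h => ⟨?_, h⟩⟩
  have : ∀ i, |y i| ≤ (⌈s⌉₊ : ℤ) := by
    intro i
    have h1 := (abs_le_rpow hq (y i)).trans ((cst_term_le q y i).trans (h.trans (Nat.le_ceil s)))
    exact_mod_cast h1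
  exact ⟨fun i => (abs_le.1 (this i)).1, fun i => (abs_le.1 (this i)).2⟩

lemma cst_update (q : ℝ) {d : ℕ} (y : Fin d → ℤ) (i : Fin d) (j : ℤ) :
    cst q (Function.update y i j) + |(y i : ℝ)| ^ q = cst q y + |(j : ℝ)| ^ q := by
  unfold cst
  rw [← Finset.add_sum_erase _ _ (Finset.mem_univ i),
    ← Finset.add_sum_erase (Finset.univ) (fun k => |(y k : ℝ)| ^ q) (Finset.mem_univ i)]
  have : ∑ k ∈ Finset.univ.erase i, |((Function.update y i j k : ℤ) : ℝ)| ^ q =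
      ∑ k ∈ Finset.univ.erase i, |(y k : ℝ)| ^ q := by
    refine Finset.sum_congr rfl fun k hk => ?_
    rw [Function.update_of_ne (Finset.ne_of_mem_erase hk)]
  rw [this]; simp; ring

noncomputable def Zs (q : ℝ) {d : ℕ} (D : Finset (Fin d)) (s : ℝ) : Finset (Fin d → ℤ) :=
  (bs q d s).filter (fun y => ∀ i ∈ D, y i = 0)

lemma mem_Zs {q : ℝ} (hq : 1 ≤ q) {d : ℕ} {D : Finset (Fin d)} {s : ℝ} {y : Fin d → ℤ} :
    y ∈ Zs q D s ↔ cst q y ≤ s ∧ ∀ i ∈ D, y i = 0 := by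
  unfold Zs; rw [Finset.mem_filter, mem_bs hq]

lemma fib {q : ℝ} (hq : 1 ≤ q) {d : ℕ} {D : Finset (Fin d)} {s : ℝ} {i : Fin d} (hi : i ∉ D)
    (j : ℤ) : ((Zs q D s).filter (fun y => y i = j)).card =
      ((Zs q D (s - |(j : ℝ)| ^ q)).filter (fun y => y i = 0)).card := by
  have h0 : (0:ℝ) ^ q = 0 := Real.zero_rpow (by linarith)
  refine Finset.card_bij' (fun y _ => Function.update y i 0) (fun y _ => Function.update y i j)
    ?_ ?_ ?_ ?_
  · intro y hy
    rw [Finset.mem_filter, mem_Zs hq] at hy ⊢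
    obtain ⟨⟨h1, h2⟩, h3⟩ := hy
    have := cst_update q y i 0
    rw [h3] at this
    simp [h0] at this
    refine ⟨⟨by linarith, fun k hk => ?_⟩, by simp⟩
    rw [Function.update_of_ne (fun h : k = i => hi (h ▸ hk))]; exact h2 k hk
  · intro y hy
    rw [Finset.mem_filter, mem_Zs hq] at hy ⊢
    obtain ⟨⟨h1, h2⟩, h3⟩ := hy
    have := cst_update q y i j
    rw [h3] at this
    simp [h0] at this
    refine ⟨⟨by linarith, fun k hk => ?_⟩, by simp⟩
    rw [Function.update_of_ne (fun h : k = i => hi (h ▸ hk))]; exact h2 k hk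
  · intro y hy
    rw [Finset.mem_filter] at hy
    simp [← hy.2]
  · intro y hy
    rw [Finset.mem_filter] at hy
    simp [← hy.2]

lemma one_le_rp {q : ℝ} (hq : 1 ≤ q) {n : ℤ} (h : n ≠ 0) : (1:ℝ) ≤ |(n:ℝ)| ^ q := by
  have : (1:ℝ) ≤ |(n:ℝ)| := by exact_mod_cast Int.one_le_abs h
  exact this.trans (abs_le_rpow hq n)

lemma supp_le {q : ℝ} (hq : 1 ≤ q) {d : ℕ} (y : Fin d → ℤ) :
    (∑ i, if y i = 0 then (0:ℝ) else 1) ≤ cst q y := by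
  refine Finset.sum_le_sum fun i _ => ?_
  split_ifs with h
  · exact Real.rpow_nonneg (abs_nonneg _) q
  · exact one_le_rp hq h

lemma ones_le {q : ℝ} (hq : 1 ≤ q) {d : ℕ} (y : Fin d → ℤ) :
    (∑ i, if |y i| = 1 then (1:ℝ) else 0) ≤ cst q y := by
  refine le_trans (Finset.sum_le_sum fun i _ => ?_) (supp_le hq y)
  split_ifs with h h' <;> simp_all

lemma zeros_ge {q : ℝ} (hq : 1 ≤ q) {d : ℕ} (y : Fin d → ℤ) :
    d - cst q y ≤ ∑ i, if y i = 0 then (1:ℝ) else 0 := by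
  have h1 := supp_le hq y
  have h2 : (∑ i, if y i = 0 then (0:ℝ) else 1) + (∑ i, if y i = 0 then (1:ℝ) else 0) = d := by
    rw [← Finset.sum_add_distrib, Finset.sum_congr rfl (g := fun _ => (1:ℝ))]
    · simp
    · intro i _; split_ifs <;> simp
  linarith

lemma card_ind {α : Type*} (S : Finset α) (p : α → Prop) [DecidablePred p] :
    ((S.filter p).card : ℝ) = ∑ y ∈ S, if p y then (1:ℝ) else 0 := by
  simp

lemma abs_one_card {d : ℕ} (S : Finset (Fin d → ℤ)) (i : Fin d) (m : ℤ) (hm : 0 < m) :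
    (S.filter (fun y => |y i| = (m:ℤ))).card = (S.filter (fun y => y i = m)).card +
      (S.filter (fun y => y i = -m)).card := by
  rw [← Finset.card_union_of_disjoint]
  · congr 1
    ext y
    simp only [Finset.mem_filter, Finset.mem_union, abs_eq hm.le]
    tauto
  · rw [Finset.disjoint_filter]
    intro y _ h1 h2
    omega

lemma one_step {q : ℝ} (hq : 1 ≤ q) {d : ℕ} (D : Finset (Fin d)) (s : ℝ) :
    2 * (d - D.card - s) * ((Zs q D (s - 1)).card : ℝ) ≤ s * ((Zs q D s).card : ℝ) := by
  have hA : ∑ i ∈ univ \ D, (((Zs q D s).filter (fun y => |y i| = 1)).card : ℝ) ≤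
      s * ((Zs q D s).card : ℝ) := by
    simp_rw [card_ind]
    rw [Finset.sum_comm]
    have : ∀ y ∈ Zs q D s, (∑ i ∈ univ \ D, if |y i| = 1 then (1:ℝ) else 0) ≤ s := by
      intro y hy
      refine le_trans ?_ ((ones_le hq y).trans ((mem_Zs hq).1 hy).1)
      exact Finset.sum_le_sum_of_subset_of_nonneg (Finset.sdiff_subset)
        (fun _ _ _ => by split_ifs <;> norm_num)
    refine (Finset.sum_le_sum this).trans ?_
    simp [mul_comm]
  have hB : ∀ i ∈ univ \ D, (((Zs q D s).filter (fun y => |y i| = 1)).card : ℝ) =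
      2 * (((Zs q D (s - 1)).filter (fun y => y i = 0)).card : ℝ) := by
    intro i hi
    have hi' : i ∉ D := (Finset.mem_sdiff.1 hi).2
    rw [abs_one_card _ _ _ one_pos, fib hq hi' 1, fib hq hi' (-1)]
    simp; ring
  rw [Finset.sum_congr rfl hB, ← Finset.mul_sum] at hA
  refine le_trans ?_ hA
  rw [mul_assoc]
  refine mul_le_mul_of_nonneg_left ?_ (by norm_num)
  simp_rw [card_ind]
  rw [Finset.sum_comm]
  have : ∀ y ∈ Zs q D (s - 1), (d:ℝ) - D.card - s ≤ (∑ i ∈ univ \ D, if y i = 0 then (1:ℝ) else 0) := by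
    intro y hy
    have h1 := zeros_ge hq y
    have h2 := ((mem_Zs hq).1 hy).1
    have h3 := Finset.sum_sdiff (f := fun i => if y i = 0 then (1:ℝ) else 0) (Finset.subset_univ D)
    have h4 : (∑ i ∈ D, if y i = 0 then (1:ℝ) else 0) ≤ D.card := by
      have : (∑ i ∈ D, if y i = 0 then (1:ℝ) else 0) ≤ ∑ i ∈ D, (1:ℝ) :=
        Finset.sum_le_sum fun i _ => by split_ifs <;> norm_num
      simpa using this
    linarith
  refine le_trans (le_of_eq ?_) (Finset.sum_le_sum this)
  rw [Finset.sum_const, nsmul_eq_mul, mul_comm]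

lemma kstep {q : ℝ} (hq : 1 ≤ q) {d : ℕ} (hd : 16 ≤ d) {D : Finset (Fin d)} (hD : D.card ≤ 1)
    {N s : ℝ} (hN : N ≤ d / 16) (hs : s ≤ N) :
    ((Zs q D (s - 1)).card : ℝ) ≤ N / d * ((Zs q D s).card : ℝ) := by
  have h := one_step hq D s
  have hD' : (D.card : ℝ) ≤ 1 := by exact_mod_cast hD
  have hd' : (16:ℝ) ≤ d := by exact_mod_cast hd
  have h0 : (0:ℝ) ≤ (Zs q D (s - 1)).card := by positivity
  have h0' : (0:ℝ) ≤ (Zs q D s).card := by positivity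
  rw [div_mul_eq_mul_div, le_div_iff₀ (by linarith)]
  have h1 : (d:ℝ) * ((Zs q D (s - 1)).card : ℝ) ≤ 2 * (d - D.card - s) * ((Zs q D (s - 1)).card : ℝ) := by
    gcongr; linarith
  have h2 : s * ((Zs q D s).card : ℝ) ≤ N * ((Zs q D s).card : ℝ) := by gcongr
  linarith

lemma kiter {q : ℝ} (hq : 1 ≤ q) {d : ℕ} (hd : 16 ≤ d) {D : Finset (Fin d)} (hD : D.card ≤ 1)
    {N : ℝ} (hN0 : 0 ≤ N) (hN : N ≤ d / 16) (m : ℕ) : ∀ s : ℝ, s ≤ N → 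
    ((Zs q D (s - m)).card : ℝ) ≤ (N / d) ^ m * ((Zs q D s).card : ℝ) := by
  induction m with
  | zero => intro s _; simp
  | succ m ih =>
    intro s hs
    have h1 := kstep hq hd hD hN (s := s - m) (by linarith [(Nat.cast_nonneg m : (0:ℝ) ≤ m)])
    have h2 := ih s hs
    have h3 : (0:ℝ) ≤ N / d := by positivity
    have e : s - ((m + 1 : ℕ) : ℝ) = s - m - 1 := by push_cast; ring
    rw [e, pow_succ']
    calc _ ≤ _ := h1
      _ ≤ N / d * ((N / d) ^ m * ((Zs q D s).card : ℝ)) := by gcongr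
      _ = _ := by ring

lemma Zs_mono {q : ℝ} (hq : 1 ≤ q) {d : ℕ} (D : Finset (Fin d)) {s t : ℝ} (h : s ≤ t) :
    (Zs q D s).card ≤ (Zs q D t).card := by
  refine Finset.card_le_card fun y hy => ?_
  rw [mem_Zs hq] at hy ⊢
  exact ⟨hy.1.trans h, hy.2⟩

lemma bs_eq (q : ℝ) (d : ℕ) (s : ℝ) : Zs q (∅ : Finset (Fin d)) s = bs q d s := by
  simp [Zs]

lemma Zs_single (q : ℝ) {d : ℕ} (i : Fin d) (s : ℝ) :
    (Zs q (∅ : Finset (Fin d)) s).filter (fun y => y i = 0) = Zs q {i} s := by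
  simp [Zs]

lemma fibB {q : ℝ} (hq : 1 ≤ q) {d : ℕ} (s : ℝ) (i : Fin d) (m : ℕ) (hm : 0 < m) :
    ((bs q d s).filter (fun y => |y i| = (m:ℤ))).card = 2 * (Zs q {i} (s - (m:ℝ) ^ q)).card := by
  rw [← bs_eq, abs_one_card _ _ _ (by exact_mod_cast hm), fib hq (by simp) (m:ℤ),
    fib hq (by simp) (-(m:ℤ)),
    Zs_single, Zs_single]
  simp; ring

lemma floor_rpow_ge {q : ℝ} (hq : 1 ≤ q) (m : ℕ) (hm : 0 < m) : m ≤ ⌊(m:ℝ) ^ q⌋₊ := by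
  refine Nat.le_floor ?_
  have := abs_le_rpow hq (m:ℤ)
  simpa using this

lemma fib_bound {q : ℝ} (hq : 1 ≤ q) {d : ℕ} (hd : 16 ≤ d)
    {N : ℝ} (hN0 : 0 ≤ N) (hN : N ≤ d / 16) (i : Fin d) (m : ℕ) (hm : 0 < m) :
    (((bs q d N).filter (fun y => |y i| = (m:ℤ))).card : ℝ) ≤ (N / d) ^ (⌊(m:ℝ) ^ q⌋₊ - 1) *
      (((bs q d N).filter (fun y => |y i| = 1)).card : ℝ) := by
  have e1 := fibB hq N i 1 one_pos
  have e := fibB hq N i m hm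
  simp only [Nat.cast_one, Real.one_rpow] at e1
  rw [e, e1]
  have hM := floor_rpow_ge hq m hm
  set M := ⌊(m:ℝ) ^ q⌋₊ with hMd
  have h1 : (M:ℝ) ≤ (m:ℝ) ^ q := Nat.floor_le (by positivity)
  have h2 : (Zs q {i} (N - (m:ℝ) ^ q)).card ≤ (Zs q {i} (N - 1 - ((M - 1 : ℕ) : ℝ))).card := by
    refine Zs_mono hq _ ?_
    rw [Nat.cast_sub (by omega)]; push_cast; linarith
  have h3 := kiter hq hd (D := {i}) (by simp) hN0 hN (M - 1) (N - 1) (by linarith)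
  have h2' : ((Zs q {i} (N - (m:ℝ) ^ q)).card : ℝ) ≤ (Zs q {i} (N - 1 - ((M - 1 : ℕ) : ℝ))).card := by
    exact_mod_cast h2
  push_cast
  linarith

lemma weighted {q : ℝ} (hq : 1 ≤ q) {d : ℕ} (hd : 16 ≤ d)
    {N : ℝ} (hN0 : 0 ≤ N) (hN : N ≤ d / 16) (i : Fin d) (W : ℕ → ℝ) (hW0 : W 0 = 0)
    (hW : ∀ m, 0 ≤ W m) (C : ℝ)
    (hC : ∀ R, ∑ m ∈ range R, W (m + 1) * (N / d) ^ (⌊((m + 1 : ℕ) : ℝ) ^ q⌋₊ - 1) ≤ C) :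
    ∑ y ∈ bs q d N, W (y i).natAbs ≤
      C * (((bs q d N).filter (fun y => |y i| = 1)).card : ℝ) := by
  set R := (bs q d N).sup (fun y => (y i).natAbs) with hR
  have h1 : ∑ y ∈ bs q d N, W (y i).natAbs =
      ∑ m ∈ range (R + 1), W m * (((bs q d N).filter (fun y => |y i| = (m:ℤ))).card : ℝ) := by
    rw [← Finset.sum_fiberwise_of_maps_to (t := range (R + 1)) (g := fun y => (y i).natAbs)]
    · refine Finset.sum_congr rfl fun m _ => ?_
      have : (bs q d N).filter (fun y => |y i| = (m:ℤ)) =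
          (bs q d N).filter (fun y => (y i).natAbs = m) := by
        refine Finset.filter_congr fun y _ => ?_
        rw [Int.abs_eq_natAbs]; exact Nat.cast_inj
      rw [this, Finset.sum_congr rfl (g := fun _ => W m)]
      · simp [mul_comm]
      · intro y hy
        rw [(Finset.mem_filter.1 hy).2]
    · intro y hy
      rw [Finset.mem_range, Nat.lt_succ_iff]
      exact Finset.le_sup (f := fun y : Fin d → ℤ => (y i).natAbs) hy
  rw [h1, Finset.sum_range_succ', hW0, zero_mul, add_zero]
  refine le_trans ?_ (mul_le_mul_of_nonneg_right (hC R) (by positivity))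
  rw [Finset.sum_mul]
  refine Finset.sum_le_sum fun m _ => ?_
  rw [mul_assoc]
  exact mul_le_mul_of_nonneg_left (fib_bound hq hd hN0 hN i (m + 1) (by omega)) (hW _)

lemma geo_bd {r : ℝ} (h0 : 0 ≤ r) (h1 : r < 1) (R : ℕ) : ∑ m ∈ range R, r ^ m ≤ 1 / (1 - r) := by
  rw [one_div, ← tsum_geometric_of_lt_one h0 h1]
  exact (summable_geometric_of_lt_one h0 h1).sum_le_tsum _ (fun _ _ => by positivity)

lemma succ_le_two_pow (m : ℕ) : ((m + 1 : ℕ) : ℝ) ≤ 2 ^ m := by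
  exact_mod_cast (Nat.lt_two_pow_self : m < 2 ^ m)

lemma sq_moment {q : ℝ} (hq : 1 ≤ q) {d : ℕ} (hd : 16 ≤ d)
    {N : ℝ} (hN0 : 0 ≤ N) (hN : N ≤ d / 16) (i : Fin d) :
    ∑ y ∈ bs q d N, (y i : ℝ) ^ 2 ≤ 2 * (((bs q d N).filter (fun y => |y i| = 1)).card : ℝ) := by
  have hd' : (16:ℝ) ≤ d := by exact_mod_cast hd
  have hk : N / d ≤ 1 / 16 := by rw [div_le_iff₀ (by linarith)]; linarith
  have hk0 : 0 ≤ N / d := by positivity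
  have := weighted hq hd hN0 hN i (fun m => (m:ℝ) ^ 2) (by simp) (fun m => by positivity) 2 ?_
  · refine le_trans (le_of_eq ?_) this
    refine Finset.sum_congr rfl fun y _ => ?_
    rw [Nat.cast_natAbs]; push_cast; rw [sq_abs]
  · intro R
    have h2 : ∀ m ∈ range R, ((m + 1 : ℕ) : ℝ) ^ 2 * (N / d) ^ (⌊((m + 1 : ℕ) : ℝ) ^ q⌋₊ - 1) ≤
        (1 / 4 : ℝ) ^ m := by
      intro m _
      have hM := floor_rpow_ge hq (m + 1) (by omega)
      have h3 : (N / d) ^ (⌊((m + 1 : ℕ) : ℝ) ^ q⌋₊ - 1) ≤ (N / d) ^ m :=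
        pow_le_pow_of_le_one hk0 (by linarith) (by omega)
      have h4 : (N / d) ^ m ≤ (1 / 16 : ℝ) ^ m := by gcongr
      have h5 := succ_le_two_pow m
      calc _ ≤ ((2:ℝ) ^ m) ^ 2 * (1 / 16 : ℝ) ^ m := by gcongr; exact h3.trans h4
        _ = (1 / 4 : ℝ) ^ m := by
          rw [← pow_mul, mul_comm m 2, pow_mul, ← mul_pow]; norm_num
    refine (Finset.sum_le_sum h2).trans ((geo_bd (by norm_num) (by norm_num) R).trans ?_)
    norm_num

lemma big_moment {q : ℝ} (hq : 1 ≤ q) {d : ℕ} (hd : 16 ≤ d)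
    {N : ℝ} (hN0 : 0 ≤ N) (hN : N ≤ d / 16) (i : Fin d) :
    ∑ y ∈ bs q d N, (if 2 ≤ (y i).natAbs then |(y i : ℝ)| ^ q else 0) ≤
      4 * (N / d) * (((bs q d N).filter (fun y => |y i| = 1)).card : ℝ) := by
  have hd' : (16:ℝ) ≤ d := by exact_mod_cast hd
  have hk : N / d ≤ 1 / 16 := by rw [div_le_iff₀ (by linarith)]; linarith
  have hk0 : 0 ≤ N / d := by positivity
  have := weighted hq hd hN0 hN i (fun m => if 2 ≤ m then (m:ℝ) ^ q else 0) (by simp)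
    (fun m => by positivity) (4 * (N / d)) ?_
  · refine le_trans (le_of_eq ?_) this
    refine Finset.sum_congr rfl fun y _ => ?_
    rw [Nat.cast_natAbs]; push_cast; rfl
  · intro R
    rcases R with _ | R
    · simp; positivity
    rw [Finset.sum_range_succ']
    simp only [zero_add, show ¬ (2 ≤ 1) by omega, if_false, zero_mul, add_zero]
    have h2 : ∀ m ∈ range R, (if 2 ≤ m + 1 + 1 then ((m + 1 + 1 : ℕ) : ℝ) ^ q else 0) *
        (N / d) ^ (⌊((m + 1 + 1 : ℕ) : ℝ) ^ q⌋₊ - 1) ≤ 3 * (N / d) * (1 / 8 : ℝ) ^ m := by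
      intro m _
      rw [if_pos (by omega)]
      have hM := floor_rpow_ge hq (m + 2) (by omega)
      change m + 2 ≤ ⌊((m + 1 + 1 : ℕ) : ℝ) ^ q⌋₊ at hM
      have hlt := Nat.lt_floor_add_one (((m + 1 + 1 : ℕ) : ℝ) ^ q)
      set M := ⌊((m + 1 + 1 : ℕ) : ℝ) ^ q⌋₊ with hMd
      obtain ⟨k, hk'⟩ : ∃ k, M = k + 2 := ⟨M - 2, by omega⟩
      have h5 := succ_le_two_pow k
      rw [hk'] at hlt ⊢
      have hlt' : ((m + 1 + 1 : ℕ) : ℝ) ^ q < (k:ℝ) + 2 + 1 := by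
        have e : ((k + 2 : ℕ) : ℝ) = (k:ℝ) + 2 := by push_cast; ring
        rw [e] at hlt; exact hlt
      have e : ((k + 1 : ℕ) : ℝ) = (k:ℝ) + 1 := by push_cast; ring
      rw [e] at h5
      have h6 : ((m + 1 + 1 : ℕ) : ℝ) ^ q ≤ 3 * 2 ^ k := by
        have : (0:ℝ) ≤ k := by positivity
        linarith
      calc _ ≤ (3 * 2 ^ k) * (N / d) ^ (k + 1) := by
            rw [show k + 2 - 1 = k + 1 by omega]; gcongr
        _ = 3 * (N / d) * (2 ^ k * (N / d) ^ k) := by ring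
        _ ≤ 3 * (N / d) * (2 ^ k * (1 / 16) ^ k) := by gcongr
        _ = 3 * (N / d) * (1 / 8) ^ k := by rw [← mul_pow]; norm_num
        _ ≤ 3 * (N / d) * (1 / 8) ^ m := by
            refine mul_le_mul_of_nonneg_left ?_ (by positivity)
            exact pow_le_pow_of_le_one (by norm_num) (by norm_num) (by omega)
    refine (Finset.sum_le_sum h2).trans ?_
    rw [← Finset.mul_sum]
    have := geo_bd (r := 1 / 8) (by norm_num) (by norm_num) R
    calc _ ≤ 3 * (N / d) * (1 / (1 - 1 / 8)) := by gcongr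
      _ ≤ _ := by nlinarith

lemma ones_sum {q : ℝ} (hq : 1 ≤ q) {d : ℕ} (N : ℝ) :
    ∑ i, (((bs q d N).filter (fun y => |y i| = 1)).card : ℝ) ≤ N * ((bs q d N).card : ℝ) := by
  simp_rw [card_ind]
  rw [Finset.sum_comm]
  refine (Finset.sum_le_sum (fun y hy => (ones_le hq y).trans ((mem_bs hq).1 hy))).trans ?_
  simp [mul_comm]

lemma cst_perm (q : ℝ) {d : ℕ} (σ : Equiv.Perm (Fin d)) (y : Fin d → ℤ) :
    cst q (fun i => y (σ i)) = cst q y := by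
  unfold cst
  exact Equiv.sum_comp σ (fun i => |(y i : ℝ)| ^ q)

lemma perm_sum {q : ℝ} (hq : 1 ≤ q) {d : ℕ} (N : ℝ) (σ : Equiv.Perm (Fin d))
    (F : (Fin d → ℤ) → ℝ) :
    ∑ y ∈ bs q d N, F (fun i => y (σ i)) = ∑ y ∈ bs q d N, F y := by
  refine Finset.sum_bij' (fun y _ i => y (σ i)) (fun y _ i => y (σ.symm i)) ?_ ?_ ?_ ?_ ?_
  · intro y hy; rw [mem_bs hq] at hy ⊢; rw [cst_perm]; exact hy
  · intro y hy; rw [mem_bs hq] at hy ⊢; rw [cst_perm]; exact hy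
  · intro y _; simp
  · intro y _; simp
  · intro y _; rfl

lemma sq_moment' {q : ℝ} (hq : 1 ≤ q) {d : ℕ} (hd : 16 ≤ d)
    {N : ℝ} (hN0 : 0 ≤ N) (hN : N ≤ d / 16) (i : Fin d) :
    d * ∑ y ∈ bs q d N, (y i : ℝ) ^ 2 ≤ 2 * (N * ((bs q d N).card : ℝ)) := by
  have h1 : ∀ j, ∑ y ∈ bs q d N, (y j : ℝ) ^ 2 = ∑ y ∈ bs q d N, (y i : ℝ) ^ 2 := by
    intro j
    have := perm_sum hq N (Equiv.swap i j) (fun y => (y i : ℝ) ^ 2)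
    simpa using this
  calc d * ∑ y ∈ bs q d N, (y i : ℝ) ^ 2 = ∑ j : Fin d, ∑ y ∈ bs q d N, (y j : ℝ) ^ 2 := by
        rw [Finset.sum_congr rfl fun j _ => h1 j]; simp
    _ ≤ ∑ j : Fin d, 2 * (((bs q d N).filter (fun y => |y j| = 1)).card : ℝ) :=
        Finset.sum_le_sum fun j _ => sq_moment hq hd hN0 hN j
    _ ≤ _ := by rw [← Finset.mul_sum]; linarith [ones_sum hq (d := d) N]

lemma bs_pos {q : ℝ} (hq : 1 ≤ q) (d : ℕ) {N : ℝ} (hN : 0 ≤ N) : 0 < ((bs q d N).card : ℝ) := by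
  have : (0 : Fin d → ℤ) ∈ bs q d N := by
    rw [mem_bs hq]; unfold cst; simp [Real.zero_rpow (show q ≠ 0 by linarith), hN]
  exact_mod_cast Finset.card_pos.2 ⟨_, this⟩

lemma one_sub_prod {ι : Type*} (s : Finset ι) (x : ι → ℝ) (hx : ∀ i, |x i| ≤ 1) :
    |∏ i ∈ s, x i| ≤ 1 ∧ 1 - ∏ i ∈ s, x i ≤ ∑ i ∈ s, (1 - x i) := by
  classical
  induction s using Finset.induction_on with
  | empty => simp
  | insert a s ha ih =>
    rw [Finset.prod_insert ha, Finset.sum_insert ha]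
    refine ⟨?_, ?_⟩
    · rw [abs_mul]; exact mul_le_one₀ (hx a) (abs_nonneg _) ih.1
    · have h1 := (abs_le.1 (hx a)).2
      have h2 := (abs_le.1 ih.1).2
      nlinarith [mul_nonneg (sub_nonneg.2 h1) (sub_nonneg.2 h2)]

noncomputable def mm (q : ℝ) (d : ℕ) (N : ℝ) (c : Fin d → ℤ → ℝ) : ℝ :=
  ((bs q d N).card : ℝ)⁻¹ * ∑ y ∈ bs q d N, ∏ i, c i (y i)

lemma mm_abs {q : ℝ} (hq : 1 ≤ q) {d : ℕ} {N : ℝ} (hN : 0 ≤ N) (c : Fin d → ℤ → ℝ)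
    (hc1 : ∀ i n, |c i n| ≤ 1) : |mm q d N c| ≤ 1 := by
  unfold mm
  have h0 := bs_pos hq d hN
  rw [abs_mul, abs_inv, abs_of_pos h0, inv_mul_le_iff₀ h0, mul_one]
  refine (Finset.abs_sum_le_sum_abs _ _).trans ?_
  refine (Finset.sum_le_sum fun y _ => (one_sub_prod univ (fun i => c i (y i)) (fun i => hc1 i _)).1).trans ?_
  simp

lemma mm_a {q : ℝ} (hq : 1 ≤ q) {d : ℕ} (hd : 16 ≤ d) {N : ℝ} (hN0 : 0 ≤ N) (hN : N ≤ d / 16)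
    (c : Fin d → ℤ → ℝ) (hc1 : ∀ i n, |c i n| ≤ 1)
    (hc2 : ∀ i n, 1 - c i n ≤ (n:ℝ) ^ 2 * (1 - c i 1)) :
    1 - mm q d N c ≤ 4 * N * ((∑ i, (1 - c i 1)) / (2 * d)) := by
  have h0 := bs_pos hq d hN0
  have hd' : (16:ℝ) ≤ d := by exact_mod_cast hd
  have h1 : 1 - mm q d N c = ((bs q d N).card : ℝ)⁻¹ * ∑ y ∈ bs q d N, (1 - ∏ i, c i (y i)) := by
    unfold mm
    rw [Finset.sum_sub_distrib, mul_sub]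
    simp [h0.ne']
  rw [h1, inv_mul_le_iff₀ h0]
  calc ∑ y ∈ bs q d N, (1 - ∏ i, c i (y i)) ≤ ∑ y ∈ bs q d N, ∑ i, ((y i : ℝ) ^ 2 * (1 - c i 1)) := by
        refine Finset.sum_le_sum fun y _ => ?_
        exact (one_sub_prod univ (fun i => c i (y i)) (fun i => hc1 i _)).2.trans
          (Finset.sum_le_sum fun i _ => hc2 i _)
    _ = ∑ i, (∑ y ∈ bs q d N, (y i : ℝ) ^ 2) * (1 - c i 1) := by
        rw [Finset.sum_comm]; simp_rw [Finset.sum_mul]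
    _ ≤ ∑ i, (2 * (N * ((bs q d N).card : ℝ)) / d) * (1 - c i 1) := by
        refine Finset.sum_le_sum fun i _ => mul_le_mul_of_nonneg_right ?_
          (by linarith [(abs_le.1 (hc1 i 1)).2])
        rw [le_div_iff₀ (by linarith), mul_comm]
        exact sq_moment' hq hd hN0 hN i
    _ = _ := by
        rw [← Finset.mul_sum]; field_simp; ring

lemma mm_perm {q : ℝ} (hq : 1 ≤ q) {d : ℕ} (N : ℝ) (c : Fin d → ℤ → ℝ) :
    (Fintype.card (Equiv.Perm (Fin d)) : ℝ) * ∑ y ∈ bs q d N, ∏ i, c i (y i) =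
      ∑ y ∈ bs q d N, ∑ σ : Equiv.Perm (Fin d), ∏ i, c i (y (σ i)) := by
  rw [Finset.sum_comm]
  have : ∀ σ : Equiv.Perm (Fin d), ∑ y ∈ bs q d N, ∏ i, c i (y (σ i)) =
      ∑ y ∈ bs q d N, ∏ i, c i (y i) := fun σ => perm_sum hq N σ (fun y => ∏ i, c i (y i))
  rw [Finset.sum_congr rfl fun σ _ => this σ]
  simp

lemma bad_count {q : ℝ} (hq : 1 ≤ q) {d : ℕ} (hd : 16 ≤ d) {N : ℝ} (hN0 : 0 < N) (hN : N ≤ d / 16) :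
    (((bs q d N).filter (fun y => cst q y ≤ N - 1 ∨
      N / 2 < ∑ i, (if 2 ≤ (y i).natAbs then |(y i : ℝ)| ^ q else 0))).card : ℝ) ≤
      9 * (N / d) * ((bs q d N).card : ℝ) := by
  classical
  rw [Finset.filter_or]
  have h1 : (((bs q d N).filter (fun y => cst q y ≤ N - 1)).card : ℝ) ≤
      N / d * ((bs q d N).card : ℝ) := by
    have := kstep hq hd (D := (∅ : Finset (Fin d))) (by simp) hN (le_refl N)
    rw [bs_eq, bs_eq] at this
    refine le_trans ?_ this
    have : (bs q d N).filter (fun y => cst q y ≤ N - 1) ⊆ bs q d (N - 1) := by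
      intro y hy
      rw [mem_bs hq]; exact (Finset.mem_filter.1 hy).2
    exact_mod_cast Finset.card_le_card this
  have h2 : (((bs q d N).filter (fun y =>
      N / 2 < ∑ i, (if 2 ≤ (y i).natAbs then |(y i : ℝ)| ^ q else 0))).card : ℝ) ≤
      8 * (N / d) * ((bs q d N).card : ℝ) := by
    have h3 : ∑ y ∈ bs q d N, ∑ i, (if 2 ≤ (y i).natAbs then |(y i : ℝ)| ^ q else 0) ≤
        4 * (N / d) * (N * ((bs q d N).card : ℝ)) := by
      rw [Finset.sum_comm]
      refine (Finset.sum_le_sum fun i _ => big_moment hq hd hN0.le hN i).trans ?_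
      rw [← Finset.mul_sum]
      exact mul_le_mul_of_nonneg_left (ones_sum hq N) (by positivity)
    have h4 : N / 2 * (((bs q d N).filter (fun y =>
      N / 2 < ∑ i, (if 2 ≤ (y i).natAbs then |(y i : ℝ)| ^ q else 0))).card : ℝ) ≤
        ∑ y ∈ bs q d N, ∑ i, (if 2 ≤ (y i).natAbs then |(y i : ℝ)| ^ q else 0) := by
      rw [card_ind, Finset.mul_sum]
      refine Finset.sum_le_sum fun y _ => ?_
      split_ifs with h
      · linarith
      · rw [mul_zero]; exact Finset.sum_nonneg fun i _ => by positivity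
    have h5 := h4.trans h3
    have h6 : N / 2 * (((bs q d N).filter (fun y =>
      N / 2 < ∑ i, (if 2 ≤ (y i).natAbs then |(y i : ℝ)| ^ q else 0))).card : ℝ) ≤
      N / 2 * (8 * (N / d) * ((bs q d N).card : ℝ)) := h5.trans (le_of_eq (by ring))
    exact le_of_mul_le_mul_left h6 (by linarith)
  have h3 := Finset.card_union_le ((bs q d N).filter (fun y => cst q y ≤ N - 1))
    ((bs q d N).filter (fun y => N / 2 < ∑ i, (if 2 ≤ (y i).natAbs then |(y i : ℝ)| ^ q else 0)))
  have h3' := (Nat.cast_le (α := ℝ)).2 h3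
  push_cast at h3'
  linarith

lemma cst_split {q : ℝ} (hq : 1 ≤ q) {d : ℕ} (y : Fin d → ℤ) :
    cst q y = (∑ i, if |y i| = 1 then (1:ℝ) else 0) +
      ∑ i, (if 2 ≤ (y i).natAbs then |(y i : ℝ)| ^ q else 0) := by
  unfold cst
  rw [← Finset.sum_add_distrib]
  refine Finset.sum_congr rfl fun i _ => ?_
  have ha := Int.abs_eq_natAbs (y i)
  rcases (by omega : y i = 0 ∨ |y i| = 1 ∨ 2 ≤ (y i).natAbs) with h | h | h
  · simp [h, Real.zero_rpow (show q ≠ 0 by linarith)]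
  · have : |(y i : ℝ)| = 1 := by exact_mod_cast h
    rw [if_pos h, if_neg (by omega), this]; simp
  · rw [if_neg (by omega), if_pos h]; simp

lemma mm_b {q : ℝ} (hq : 1 ≤ q) {d : ℕ} (hd : 16 ≤ d) {N : ℝ} (hN4 : 4 ≤ N) (hN : N ≤ d / 16)
    (c : Fin d → ℤ → ℝ) (hc1 : ∀ i n, |c i n| ≤ 1) (hc0 : ∀ i, c i 0 = 1)
    (hca : ∀ i, c i (-1) = c i 1) (lam : ℝ) (hlam : lam = (∑ i, (1 - c i 1)) / (2 * d))
    (hl0 : 0 < lam) (hl1 : lam < 1) :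
    |mm q d N c| ≤ 1008 / (N * lam * (1 - lam)) + 9 * (N / d) := by
  classical
  have h0 := bs_pos hq d (show 0 ≤ N by linarith)
  have hd' : (16:ℝ) ≤ d := by exact_mod_cast hd
  set P := (Fintype.card (Equiv.Perm (Fin d)) : ℝ) with hP
  have hP0 : 0 < P := by rw [hP]; exact_mod_cast Fintype.card_pos
  set E := 1008 / (N * lam * (1 - lam)) with hE
  have hE0 : 0 ≤ E := by
    rw [hE]; exact div_nonneg (by norm_num) (mul_nonneg (by positivity) (by linarith))
  have key : ∀ y ∈ bs q d N, |∑ σ : Equiv.Perm (Fin d), ∏ i, c i (y (σ i))| ≤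
      P * E + P * (if cst q y ≤ N - 1 ∨
      N / 2 < ∑ i, (if 2 ≤ (y i).natAbs then |(y i : ℝ)| ^ q else 0) then 1 else 0) := by
    intro y hy
    split_ifs with h
    · have : |∑ σ : Equiv.Perm (Fin d), ∏ i, c i (y (σ i))| ≤ P := by
        refine (Finset.abs_sum_le_sum_abs _ _).trans ?_
        refine (Finset.sum_le_sum fun σ _ =>
          (one_sub_prod univ (fun i => c i (y (σ i))) (fun i => hc1 i _)).1).trans ?_
        simp [hP]
      nlinarith [mul_nonneg hP0.le hE0]
    · push Not at h
      have hy' := (mem_bs hq).1 hy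
      have hs := cst_split hq y
      have hz := zeros_ge hq y
      rw [mul_zero, add_zero]
      exact orbit_main d hd c y hc1 hc0 hca lam N hlam hl0 hl1 (by linarith) (by linarith)
        (by linarith)
  have h1 : P * |∑ y ∈ bs q d N, ∏ i, c i (y i)| ≤
      P * ((E + 9 * (N / d)) * ((bs q d N).card : ℝ)) := by
    rw [← abs_of_pos hP0, ← abs_mul, abs_of_pos hP0, mm_perm hq]
    refine (Finset.abs_sum_le_sum_abs _ _).trans ((Finset.sum_le_sum key).trans ?_)
    rw [Finset.sum_add_distrib, ← Finset.mul_sum, ← Finset.mul_sum, ← card_ind]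
    have := bad_count hq hd (show 0 < N by linarith) hN
    simp only [Finset.sum_const, nsmul_eq_mul]
    nlinarith [mul_le_mul_of_nonneg_left this hP0.le]
  have h2 := le_of_mul_le_mul_left h1 hP0
  unfold mm
  rw [abs_mul, abs_inv, abs_of_pos h0, inv_mul_le_iff₀ h0]
  linarith

noncomputable def psi (l : ℝ) (n : ℕ) : ℝ := (n:ℝ)⁻¹ * ∑ k ∈ range n, (1 - l) ^ k

lemma psi_bounds {l : ℝ} (hl0 : 0 ≤ l) (hl1 : l ≤ 1) {n : ℕ} (hn : 0 < n) :
    0 ≤ psi l n ∧ psi l n ≤ 1 ∧ 1 - psi l n ≤ n * l ∧ psi l n * (n * l) ≤ 1 := by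
  have hn' : (0:ℝ) < n := by exact_mod_cast hn
  have h1 : ∀ k, (1 - l) ^ k ≤ 1 := fun k => pow_le_one₀ (by linarith) (by linarith)
  have h0 : ∀ k, 0 ≤ (1 - l) ^ k := fun k => pow_nonneg (by linarith) k
  have hg : (∑ k ∈ range n, (1 - l) ^ k) * l = 1 - (1 - l) ^ n := by
    have := geom_sum_mul (1 - l) n
    linarith
  refine ⟨mul_nonneg (by positivity) (Finset.sum_nonneg fun k _ => h0 k), ?_, ?_, ?_⟩
  · unfold psi
    rw [inv_mul_le_iff₀ hn']
    refine (Finset.sum_le_sum fun k _ => h1 k).trans ?_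
    simp
  · have : (n:ℝ) * (1 - n * l) ≤ ∑ k ∈ range n, (1 - l) ^ k := by
      have h2 : ∀ k ∈ range n, 1 - n * l ≤ (1 - l) ^ k := by
        intro k hk
        have := one_add_mul_le_pow (a := -l) (by linarith) k
        have hk' : (k:ℝ) ≤ n := by exact_mod_cast (Finset.mem_range.1 hk).le
        rw [show 1 + -l = 1 - l by ring] at this
        nlinarith
      refine le_trans (le_of_eq ?_) (Finset.sum_le_sum h2)
      rw [Finset.sum_const, nsmul_eq_mul, Finset.card_range]
    unfold psi
    have h3 : 1 - n * l ≤ (n:ℝ)⁻¹ * ∑ k ∈ range n, (1 - l) ^ k := by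
      rw [le_inv_mul_iff₀ hn']; exact this
    linarith
  · unfold psi
    have : (n:ℝ)⁻¹ * (∑ k ∈ range n, (1 - l) ^ k) * (n * l) = (∑ k ∈ range n, (1 - l) ^ k) * l := by
      field_simp
    rw [this, hg]; linarith [h0 n]

lemma mult_bound {q : ℝ} (hq : 1 ≤ q) {d : ℕ} {N : ℝ} (hN1 : 1 ≤ N) (hN : N ≤ d)
    (c : Fin d → ℤ → ℝ) (hc1 : ∀ i n, |c i n| ≤ 1) (hc0 : ∀ i, c i 0 = 1)
    (hca : ∀ i, c i (-1) = c i 1) (hc2 : ∀ i n, 1 - c i n ≤ (n:ℝ) ^ 2 * (1 - c i 1))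
    (lam : ℝ) (hlam : lam = (∑ i, (1 - c i 1)) / (2 * d)) :
    |mm q d N c * (1 - lam) - psi lam ⌊N⌋₊| ≤
      1010 * (min (N * lam) (N * lam)⁻¹ + N / d) := by
  have hd0 : (0:ℝ) < d := by linarith
  have hl0 : 0 ≤ lam := by
    rw [hlam]
    exact div_nonneg (Finset.sum_nonneg fun i _ => by linarith [(abs_le.1 (hc1 i 1)).2]) (by linarith)
  have hl1 : lam ≤ 1 := by
    rw [hlam, div_le_one (by linarith)]
    have : ∑ i, (1 - c i 1) ≤ ∑ i : Fin d, (2:ℝ) :=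
      Finset.sum_le_sum fun i _ => by linarith [(abs_le.1 (hc1 i 1)).1]
    rw [Finset.sum_const, nsmul_eq_mul, Finset.card_univ, Fintype.card_fin] at this; linarith
  have hn : 0 < ⌊N⌋₊ := Nat.floor_pos.2 hN1
  have hnN : (⌊N⌋₊ : ℝ) ≤ N := Nat.floor_le (by linarith)
  have hnN' : N ≤ 2 * (⌊N⌋₊ : ℝ) := by
    have h1 := Nat.lt_floor_add_one N
    have h2 : (1:ℝ) ≤ ⌊N⌋₊ := by exact_mod_cast hn
    linarith
  obtain ⟨p0, p1, p2, p3⟩ := psi_bounds hl0 hl1 hn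
  have hm := mm_abs hq (show 0 ≤ N by linarith) c hc1
  have hm' := abs_le.1 hm
  set m := mm q d N c with hmd
  set ψ := psi lam ⌊N⌋₊ with hψ
  have hmin : 0 ≤ min (N * lam) (N * lam)⁻¹ := by positivity
  have hNd : 0 ≤ N / d := by positivity
  have hN0 : 0 < N := by linarith
  have htri : |m * (1 - lam) - ψ| ≤ |m| * (1 - lam) + ψ := by
    refine (abs_sub _ _).trans ?_
    rw [abs_mul, abs_of_nonneg (show 0 ≤ 1 - lam by linarith), abs_of_nonneg p0]
  rcases lt_or_ge (d / 16 : ℝ) N with hbig | hsmall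
  · have : 1 / 16 ≤ N / d := by rw [le_div_iff₀ hd0]; linarith
    nlinarith [abs_nonneg m]
  have hd16 : 16 ≤ d := by
    have : (16:ℝ) ≤ d := by linarith
    exact_mod_cast this
  have ha := mm_a hq hd16 hN0.le hsmall c hc1 hc2
  rw [← hlam, ← hmd] at ha
  rcases le_or_gt (N * lam) 4 with hx | hx
  · have h1 : |m * (1 - lam) - ψ| ≤ 6 * (N * lam) := by
      have h2 : (⌊N⌋₊ : ℝ) * lam ≤ N * lam := by gcongr
      have h3 : lam ≤ N * lam := by nlinarith
      rw [abs_le]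
      constructor <;> nlinarith
    have h2 : N * lam ≤ 16 * min (N * lam) (N * lam)⁻¹ := by
      rcases eq_or_lt_of_le hl0 with h | h
      · rw [← h]; simp
      · have h3 : 0 < N * lam := by positivity
        rw [mul_min_of_nonneg _ _ (by norm_num)]
        refine le_min (by linarith) ?_
        rw [← div_eq_mul_inv, le_div_iff₀ h3]
        nlinarith
    linarith
  · have hl0' : 0 < lam := by
      rcases eq_or_lt_of_le hl0 with h | h
      · rw [← h] at hx; norm_num at hx
      · exact h
    have h3 : 0 < N * lam := by positivity
    have hmi : min (N * lam) (N * lam)⁻¹ = (N * lam)⁻¹ := by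
      refine min_eq_right ?_
      rw [inv_le_comm₀ h3 h3]
      exact (inv_le_one_of_one_le₀ (by linarith)).trans (by linarith)
    rw [hmi]
    have hψ' : ψ ≤ 2 * (N * lam)⁻¹ := by
      rw [← div_eq_mul_inv, le_div_iff₀ h3]
      have : N * lam ≤ 2 * ((⌊N⌋₊ : ℝ) * lam) := by nlinarith
      nlinarith
    have hm2 : |m| * (1 - lam) ≤ 1008 * (N * lam)⁻¹ + 9 * (N / d) := by
      rcases eq_or_lt_of_le hl1 with h | h
      · rw [h]; simp; positivity
      · have h4 := mm_b hq hd16 (show 4 ≤ N by nlinarith) hsmall c hc1 hc0 hca lam hlam hl0' h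
        rw [← hmd] at h4
        have h5 : 0 < 1 - lam := by linarith
        calc |m| * (1 - lam) ≤ (1008 / (N * lam * (1 - lam)) + 9 * (N / d)) * (1 - lam) := by gcongr
          _ = 1008 * (N * lam)⁻¹ + 9 * (N / d) * (1 - lam) := by field_simp
          _ ≤ _ := by nlinarith
    linarith

lemma lac_step {x x' : ℝ} (hx : 0 < x) (h : 2 * x ≤ x') :
    (if x ≤ 2 then x else 4 - 4 / x) + min x x⁻¹ ≤ (if x' ≤ 2 then x' else 4 - 4 / x') := by
  have hx' : 0 < x' := by linarith
  have hm1 := min_le_left x x⁻¹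
  have hm2 := min_le_right x x⁻¹
  by_cases h2 : x' ≤ 2
  · rw [if_pos h2, if_pos (by linarith)]; linarith
  · rw [if_neg h2]
    push Not at h2
    by_cases h1 : x ≤ 2
    · rw [if_pos h1]
      have h3 : 4 / x' ≤ 2 := by rw [div_le_iff₀ hx']; linarith
      rcases le_or_gt x 1 with h4 | h4
      · linarith
      · have h5 : 4 / x' ≤ 2 * x⁻¹ := by
          rw [div_le_iff₀ hx', mul_assoc, ← div_eq_inv_mul]
          have : 2 ≤ x' / x := by rw [le_div_iff₀ hx]; exact h
          linarith
        have h6 : x + 3 * x⁻¹ ≤ 4 := by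
          have : x * x⁻¹ = 1 := by field_simp
          have hi : 0 < x⁻¹ := by positivity
          nlinarith [mul_nonneg hi.le (mul_nonneg (show 0 ≤ x - 1 by linarith) (show 0 ≤ 3 - x by linarith))]
        linarith
    · rw [if_neg h1]
      have h5 : 4 / x' ≤ 2 * x⁻¹ := by
        rw [div_le_iff₀ hx', mul_assoc, ← div_eq_inv_mul]
        have : 2 ≤ x' / x := by rw [le_div_iff₀ hx]; exact h
        linarith
      have : 4 / x = 4 * x⁻¹ := by rw [div_eq_mul_inv]
      have hi : 0 < x⁻¹ := by positivity
      linarith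

lemma lac_sum (x : ℕ → ℝ) (hx : ∀ j, 0 < x j) (h : ∀ j, 2 * x j ≤ x (j + 1)) (J : ℕ) :
    ∑ j ∈ range J, min (x j) (x j)⁻¹ ≤ 4 := by
  have : ∑ j ∈ range J, min (x j) (x j)⁻¹ ≤ (if x J ≤ 2 then x J else 4 - 4 / x J) := by
    induction J with
    | zero =>
      simp only [Finset.range_zero, Finset.sum_empty]
      split_ifs with h1
      · exact (hx 0).le
      · have : 4 / x 0 ≤ 2 := by rw [div_le_iff₀ (hx 0)]; linarith
        linarith
    | succ J ih =>
      rw [Finset.sum_range_succ]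
      exact (add_le_add_left ih _).trans (lac_step (hx J) (h J))
  refine this.trans ?_
  split_ifs with h1
  · linarith
  · have := hx J
    have : 0 ≤ 4 / x J := by positivity
    linarith

lemma lac_sum2 (x : ℕ → ℝ) (hx : ∀ j, 0 ≤ x j) (h : ∀ j, 2 * x j ≤ x (j + 1)) (J : ℕ) :
    ∑ j ∈ range J, x j ≤ x J := by
  induction J with
  | zero => simpa using hx 0
  | succ J ih => rw [Finset.sum_range_succ]; linarith [h J]

end Part3

section Part4

open Finset MeasureTheory AddMonoidAlgebra

noncomputable def chi {d : ℕ} (z : Fin d → UnitAddCircle) (y : Fin d → ℤ) : ℂ :=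
  ∏ i, fourier (y i) (z i)

noncomputable def chiHom {d : ℕ} (z : Fin d → UnitAddCircle) : Multiplicative (Fin d → ℤ) →* ℂ where
  toFun y := chi z y.toAdd
  map_one' := by simp [chi]
  map_mul' x y := by
    unfold chi
    rw [← Finset.prod_mul_distrib]
    refine Finset.prod_congr rfl fun i _ => ?_
    rw [← fourier_add]; rfl

noncomputable def Phi {d : ℕ} (z : Fin d → UnitAddCircle) :
    AddMonoidAlgebra ℝ (Fin d → ℤ) →ₐ[ℝ] ℂ :=
  AddMonoidAlgebra.lift ℝ ℂ (Fin d → ℤ) (chiHom z)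

lemma Phi_single {d : ℕ} (z : Fin d → UnitAddCircle) (y : Fin d → ℤ) (r : ℝ) :
    Phi z (single y r) = (r:ℂ) * chi z y := by
  unfold Phi
  rw [AddMonoidAlgebra.lift_single, Complex.real_smul]; rfl

lemma Phi_eq {d : ℕ} (z : Fin d → UnitAddCircle) (u : AddMonoidAlgebra ℝ (Fin d → ℤ)) :
    Phi z u = ∑ y ∈ u.coeff.support, (u.coeff y : ℂ) * chi z y := by
  conv_lhs => rw [eq_sum_single u]
  rw [map_sum]
  exact Finset.sum_congr rfl fun y _ => Phi_single z y _

lemma chi_neg {d : ℕ} (z : Fin d → UnitAddCircle) (y : Fin d → ℤ) :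
    chi z (-y) = (starRingEnd ℂ) (chi z y) := by
  unfold chi
  rw [map_prod]
  exact Finset.prod_congr rfl fun i _ => by rw [Pi.neg_apply, fourier_neg]

lemma Phi_rv {d : ℕ} (z : Fin d → UnitAddCircle) (u : AddMonoidAlgebra ℝ (Fin d → ℤ)) :
    Phi z (rv u) = (starRingEnd ℂ) (Phi z u) := by
  conv_lhs => rw [eq_sum_single u]
  rw [map_sum, map_sum, Phi_eq, map_sum]
  refine Finset.sum_congr rfl fun y _ => ?_
  rw [rv_single, Phi_single, chi_neg, map_mul, Complex.conj_ofReal]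

noncomputable def tmu (d : ℕ) : Measure (Fin d → UnitAddCircle) :=
  Measure.pi (fun _ => AddCircle.haarAddCircle)

instance tmu_prob (d : ℕ) : IsProbabilityMeasure (tmu d) := by
  unfold tmu; infer_instance

lemma continuous_chi {d : ℕ} (y : Fin d → ℤ) :
    Continuous (fun z : Fin d → UnitAddCircle => chi z y) := by
  unfold chi; fun_prop

lemma continuous_Phi {d : ℕ} (u : AddMonoidAlgebra ℝ (Fin d → ℤ)) :
    Continuous (fun z : Fin d → UnitAddCircle => Phi z u) := by
  simp_rw [Phi_eq]
  exact continuous_finsetSum _ fun y _ => continuous_const.mul (continuous_chi y)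

lemma cont_int {d : ℕ} {E : Type*} [NormedAddCommGroup E] [NormedSpace ℝ E]
    [SecondCountableTopology E] {f : (Fin d → UnitAddCircle) → E} (hf : Continuous f) :
    Integrable f (tmu d) := by
  have := hf.continuousOn.integrableOn_compact (μ := tmu d) isCompact_univ
  rwa [integrableOn_univ] at this

lemma integral_fourier {n : ℤ} (hn : n ≠ 0) :
    ∫ x : UnitAddCircle, fourier n x ∂AddCircle.haarAddCircle = 0 :=
  integral_eq_zero_of_add_right_eq_neg (μ := AddCircle.haarAddCircle)
      (fourier_add_half_inv_index hn one_pos)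

lemma integral_chi {d : ℕ} (y : Fin d → ℤ) :
    ∫ z, chi z y ∂(tmu d) = if y = 0 then 1 else 0 := by
  split_ifs with h
  · subst h; simp [chi]
  · unfold chi tmu
    rw [MeasureTheory.integral_fintype_prod_eq_prod (fun i x => fourier (y i) x)]
    obtain ⟨i, hi⟩ := Function.ne_iff.mp h
    exact Finset.prod_eq_zero (Finset.mem_univ i) (integral_fourier hi)

lemma integral_Phi {d : ℕ} (u : AddMonoidAlgebra ℝ (Fin d → ℤ)) :
    ∫ z, Phi z u ∂(tmu d) = (u.coeff 0 : ℂ) := by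
  simp_rw [Phi_eq]
  have hi : ∀ y ∈ u.coeff.support, Integrable (fun z => (u.coeff y : ℂ) * chi z y) (tmu d) :=
    fun y _ => cont_int (continuous_const.mul (continuous_chi y))
  rw [integral_finsetSum _ hi]
  simp_rw [integral_const_mul, integral_chi]
  simp
  intro h
  simp [h]

lemma plancherel {d : ℕ} (u : AddMonoidAlgebra ℝ (Fin d → ℤ)) :
    ∫ z, ‖Phi z u‖ ^ 2 ∂(tmu d) = n2 u := by
  have h1 : ∫ z, ((‖Phi z u‖ ^ 2 : ℝ) : ℂ) ∂(tmu d) = (n2 u : ℂ) := by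
    rw [← ip_self]
    unfold ip
    rw [← integral_Phi]
    refine integral_congr_ae (Filter.Eventually.of_forall fun z => ?_)
    simp only
    rw [map_mul, Phi_rv, Complex.mul_conj, Complex.normSq_eq_norm_sq]
  have h2 := integral_ofReal (𝕜 := ℂ) (μ := tmu d) (f := fun z => ‖Phi z u‖ ^ 2)
  have h3 := h2.symm.trans h1
  exact Complex.ofReal_injective h3

lemma plancherel_sum {d : ℕ} {ι : Type*} (J : Finset ι) (w : ι → AddMonoidAlgebra ℝ (Fin d → ℤ))
    (C : ℝ) (hC : ∀ z, ∑ j ∈ J, ‖Phi z (w j)‖ ^ 2 ≤ C) (g : AddMonoidAlgebra ℝ (Fin d → ℤ)) :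
    ∑ j ∈ J, n2 (w j * g) ≤ C * n2 g := by
  simp_rw [← plancherel]
  have hi : ∀ j ∈ J, Integrable (fun z => ‖Phi z (w j * g)‖ ^ 2) (tmu d) :=
    fun j _ => cont_int ((continuous_Phi _).norm.pow 2)
  rw [← integral_finsetSum _ hi, ← integral_const_mul]
  refine integral_mono (cont_int ?_) (cont_int ?_) fun z => ?_
  · exact continuous_finsetSum _ fun j _ => (continuous_Phi _).norm.pow 2
  · exact continuous_const.mul ((continuous_Phi _).norm.pow 2)
  · simp only
    refine le_trans (le_of_eq ?_) (mul_le_mul_of_nonneg_right (hC z) (sq_nonneg _))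
    rw [Finset.sum_mul]
    exact Finset.sum_congr rfl fun j _ => by rw [map_mul, norm_mul, mul_pow]

noncomputable def cc {d : ℕ} (z : Fin d → UnitAddCircle) (i : Fin d) (n : ℤ) : ℝ :=
  (fourier n (z i) : ℂ).re

lemma fourier_nrm (n : ℤ) (x : UnitAddCircle) : ‖(fourier n x : ℂ)‖ = 1 := Circle.norm_coe _

lemma cc_abs {d : ℕ} (z : Fin d → UnitAddCircle) (i : Fin d) (n : ℤ) : |cc z i n| ≤ 1 := by
  rw [← fourier_nrm n (z i)]; exact Complex.abs_re_le_norm _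

lemma cc_zero {d : ℕ} (z : Fin d → UnitAddCircle) (i : Fin d) : cc z i 0 = 1 := by
  simp [cc]

lemma cc_neg {d : ℕ} (z : Fin d → UnitAddCircle) (i : Fin d) (n : ℤ) : cc z i (-n) = cc z i n := by
  unfold cc; rw [fourier_neg, Complex.conj_re]

lemma fourier_sum_neg (x : UnitAddCircle) (n : ℤ) :
    (fourier n x : ℂ) + fourier (-n) x = 2 * ((fourier n x : ℂ).re : ℂ) := by
  rw [fourier_neg, Complex.add_conj]; push_cast; ring

lemma one_sub_re {w : ℂ} (hw : ‖w‖ = 1) : 1 - w.re = ‖1 - w‖ ^ 2 / 2 := by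
  have h1 : w.re ^ 2 + w.im ^ 2 = 1 := by
    have := Complex.sq_norm w
    rw [hw, Complex.normSq_apply] at this; linarith
  rw [Complex.sq_norm, Complex.normSq_apply]
  simp
  linarith

lemma fourier_nat_bound (x : UnitAddCircle) (n : ℕ) :
    ‖1 - (fourier (n:ℤ) x : ℂ)‖ ≤ n * ‖1 - (fourier 1 x : ℂ)‖ := by
  induction n with
  | zero => simp
  | succ n ih =>
    have : 1 - (fourier ((n + 1 : ℕ):ℤ) x : ℂ) = (1 - (fourier (n:ℤ) x : ℂ)) +
        fourier (n:ℤ) x * (1 - fourier 1 x) := by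
      rw [Nat.cast_add, Nat.cast_one, fourier_add]; ring
    rw [this]
    refine (norm_add_le _ _).trans ?_
    rw [norm_mul, fourier_nrm]
    push_cast
    linarith

lemma cc_sq {d : ℕ} (z : Fin d → UnitAddCircle) (i : Fin d) (n : ℤ) :
    1 - cc z i n ≤ (n:ℝ) ^ 2 * (1 - cc z i 1) := by
  have key : ∀ m : ℕ, 1 - cc z i m ≤ (m:ℝ) ^ 2 * (1 - cc z i 1) := by
    intro m
    unfold cc
    rw [one_sub_re (fourier_nrm _ _), one_sub_re (fourier_nrm _ _)]
    have := fourier_nat_bound (z i) m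
    have h2 := pow_le_pow_left₀ (norm_nonneg _) this 2
    rw [mul_pow] at h2
    linarith
  obtain ⟨m, rfl | rfl⟩ := Int.eq_nat_or_neg n
  · rw [Int.cast_natCast]; exact key m
  · rw [cc_neg, Int.cast_neg, neg_sq, Int.cast_natCast]; exact key m

noncomputable def sg (b : Bool) : ℤ := if b then 1 else -1

lemma sg_abs (b : Bool) (n : ℤ) : |((sg b * n : ℤ) : ℝ)| = |(n:ℝ)| := by
  cases b <;> simp [sg]

lemma sg_sg (b : Bool) (n : ℤ) : sg b * (sg b * n) = n := by
  cases b <;> simp [sg]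

lemma cst_sg (q : ℝ) {d : ℕ} (e : Fin d → Bool) (y : Fin d → ℤ) :
    cst q (fun i => sg (e i) * y i) = cst q y := by
  unfold cst
  exact Finset.sum_congr rfl fun i _ => by rw [sg_abs]

lemma sum_chi {q : ℝ} (hq : 1 ≤ q) {d : ℕ} (N : ℝ) (z : Fin d → UnitAddCircle) :
    ∑ y ∈ bs q d N, chi z y = ((∑ y ∈ bs q d N, ∏ i, cc z i (y i) : ℝ) : ℂ) := by
  have h1 : ∀ e : Fin d → Bool, ∑ y ∈ bs q d N, chi z (fun i => sg (e i) * y i) =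
      ∑ y ∈ bs q d N, chi z y := by
    intro e
    refine Finset.sum_bij' (fun y _ i => sg (e i) * y i) (fun y _ i => sg (e i) * y i) ?_ ?_ ?_ ?_ ?_
    · intro y hy; rw [mem_bs hq] at hy ⊢; rw [cst_sg]; exact hy
    · intro y hy; rw [mem_bs hq] at hy ⊢; rw [cst_sg]; exact hy
    · intro y _; funext i; exact sg_sg _ _
    · intro y _; funext i; exact sg_sg _ _
    · intro y _; rfl
  have h2 : (2:ℂ) ^ d * ∑ y ∈ bs q d N, chi z y =
      (2:ℂ) ^ d * ((∑ y ∈ bs q d N, ∏ i, cc z i (y i) : ℝ) : ℂ) := by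
    calc (2:ℂ) ^ d * ∑ y ∈ bs q d N, chi z y
        = ∑ e : Fin d → Bool, ∑ y ∈ bs q d N, chi z (fun i => sg (e i) * y i) := by
          rw [Finset.sum_congr rfl fun e _ => h1 e]; simp
      _ = ∑ y ∈ bs q d N, ∑ e : Fin d → Bool, ∏ i, (fourier (sg (e i) * y i) (z i) : ℂ) := by
          rw [Finset.sum_comm]; rfl
      _ = ∑ y ∈ bs q d N, ∏ i, ∑ b : Bool, (fourier (sg b * y i) (z i) : ℂ) := by
          refine Finset.sum_congr rfl fun y _ => ?_
          rw [Finset.prod_univ_sum, Fintype.piFinset_univ]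
      _ = ∑ y ∈ bs q d N, ∏ i, (2 * (cc z i (y i) : ℂ)) := by
          refine Finset.sum_congr rfl fun y _ => Finset.prod_congr rfl fun i _ => ?_
          rw [Fintype.sum_bool]
          have := fourier_sum_neg (z i) (y i)
          simp only [sg, if_true, one_mul, Bool.false_eq_true, if_false, neg_one_mul]
          exact this
      _ = _ := by
          simp_rw [Finset.prod_mul_distrib]
          rw [← Finset.mul_sum]
          simp
  exact mul_left_cancel₀ (pow_ne_zero d two_ne_zero) h2

noncomputable def KK (q : ℝ) (d : ℕ) (N : ℝ) : AddMonoidAlgebra ℝ (Fin d → ℤ) :=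
  ((bs q d N).card : ℝ)⁻¹ • ∑ y ∈ bs q d N, single y 1

lemma Phi_KK {q : ℝ} (hq : 1 ≤ q) {d : ℕ} (N : ℝ) (z : Fin d → UnitAddCircle) :
    Phi z (KK q d N) = (mm q d N (cc z) : ℂ) := by
  unfold KK mm
  rw [map_smul, map_sum, Complex.real_smul]
  simp_rw [Phi_single, Complex.ofReal_one, one_mul]
  rw [sum_chi hq, Complex.ofReal_mul]

noncomputable def QQ (d : ℕ) : AddMonoidAlgebra ℝ (Fin d → ℤ) :=
  (1 / 2 : ℝ) • 1 + (1 / (4 * d) : ℝ) • ∑ i : Fin d, (single (Pi.single i 1) 1 + single (-Pi.single i 1) 1)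

noncomputable def lm {d : ℕ} (z : Fin d → UnitAddCircle) : ℝ := (∑ i, (1 - cc z i 1)) / (2 * d)

lemma chi_e {d : ℕ} (z : Fin d → UnitAddCircle) (i : Fin d) :
    chi z (Pi.single i 1) = fourier 1 (z i) := UnitAddTorus.mFourier_single z i

lemma Phi_QQ {d : ℕ} (hd : 0 < d) (z : Fin d → UnitAddCircle) :
    Phi z (QQ d) = ((1 - lm z : ℝ) : ℂ) := by
  have hd' : (d:ℂ) ≠ 0 := by exact_mod_cast hd.ne'
  unfold QQ lm
  rw [map_add, map_smul, map_smul, map_one, map_sum, Complex.real_smul, Complex.real_smul]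
  have : ∀ i, Phi z (single (Pi.single i 1) 1 + single (-Pi.single i 1) 1) = 2 * (cc z i 1 : ℂ) := by
    intro i
    rw [map_add, Phi_single, Phi_single, chi_neg, chi_e, ← fourier_neg, Complex.ofReal_one, one_mul,
      one_mul, fourier_sum_neg]
    rfl
  rw [Finset.sum_congr rfl fun i _ => this i, ← Finset.mul_sum, Finset.sum_sub_distrib]
  push_cast
  simp only [Finset.sum_const, Finset.card_univ, Fintype.card_fin, nsmul_eq_mul]
  field_simp
  ring

lemma Phi_erg {d : ℕ} (hd : 0 < d) (z : Fin d → UnitAddCircle) (n : ℕ) :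
    Phi z (erg (QQ d) n) = (psi (lm z) n : ℂ) := by
  unfold erg psi
  rw [map_smul, map_sum, Complex.real_smul]
  simp_rw [map_pow, Phi_QQ hd]
  push_cast
  rfl

lemma lm_nonneg {d : ℕ} (z : Fin d → UnitAddCircle) : 0 ≤ lm z :=
  div_nonneg (Finset.sum_nonneg fun i _ => by linarith [(abs_le.1 (cc_abs z i 1)).2]) (by positivity)

lemma lm_le {d : ℕ} (z : Fin d → UnitAddCircle) : lm z ≤ 1 := by
  refine div_le_one_of_le₀ ?_ (by positivity)
  have : ∑ i, (1 - cc z i 1) ≤ ∑ i : Fin d, (2:ℝ) :=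
    Finset.sum_le_sum fun i _ => by linarith [(abs_le.1 (cc_abs z i 1)).1]
  rw [Finset.sum_const, nsmul_eq_mul, Finset.card_univ, Fintype.card_fin] at this
  linarith

lemma erg_contr {d : ℕ} (hd : 0 < d) (n : ℕ) (g : AddMonoidAlgebra ℝ (Fin d → ℤ)) :
    n2 (erg (QQ d) n * g) ≤ n2 g := by
  have := plancherel_sum {()} (fun _ => erg (QQ d) n) 1 ?_ g
  · simpa using this
  · intro z
    rw [Finset.sum_singleton, Phi_erg hd, Complex.norm_real, Real.norm_eq_abs]
    rcases Nat.eq_zero_or_pos n with h | h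
    · subst h; simp [psi]
    · obtain ⟨h0, h1, _⟩ := psi_bounds (lm_nonneg z) (lm_le z) h
      rw [abs_of_nonneg h0]
      exact pow_le_one₀ h0 h1

lemma single_nonneg {d : ℕ} (y x : Fin d → ℤ) {r : ℝ} (hr : 0 ≤ r) :
    0 ≤ (single y r : AddMonoidAlgebra ℝ (Fin d → ℤ)).coeff x := by
  classical
  rw [AddMonoidAlgebra.coeff_single, Finsupp.single_apply]
  split_ifs <;> simp [hr]

lemma QQ_ge {d : ℕ} (x : Fin d → ℤ) :
    (1 : AddMonoidAlgebra ℝ (Fin d → ℤ)).coeff x ≤ ((2:ℝ) • QQ d).coeff x := by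
  unfold QQ
  rw [smul_add, smul_smul, smul_smul, AddMonoidAlgebra.coeff_add, Finsupp.add_apply]
  have : 0 ≤ ((2 * (1 / (4 * d)) : ℝ) • ∑ i : Fin d, (single (Pi.single i 1) (1:ℝ) +
      single (-Pi.single i 1) (1:ℝ)) : AddMonoidAlgebra ℝ (Fin d → ℤ)).coeff x := by
    rw [AddMonoidAlgebra.coeff_smul, Finsupp.smul_apply, smul_eq_mul, coeff_sum']
    refine mul_nonneg (by positivity) (Finset.sum_nonneg fun i _ => ?_)
    rw [AddMonoidAlgebra.coeff_add, Finsupp.add_apply]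
    exact add_nonneg (single_nonneg _ _ one_pos.le) (single_nonneg _ _ one_pos.le)
  have h2 : ((2:ℝ) * (1 / 2)) • (1 : AddMonoidAlgebra ℝ (Fin d → ℤ)) = 1 := by norm_num
  rw [h2]
  linarith

lemma QQ_nonneg {d : ℕ} (x : Fin d → ℤ) : 0 ≤ (QQ d).coeff x := by
  have h := QQ_ge x
  rw [AddMonoidAlgebra.coeff_smul, Finsupp.smul_apply, smul_eq_mul] at h
  have h1 : 0 ≤ (1 : AddMonoidAlgebra ℝ (Fin d → ℤ)).coeff x := single_nonneg _ _ one_pos.le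
  linarith

lemma QQ_rv (d : ℕ) : rv (QQ d) = QQ d := by
  unfold QQ
  rw [map_add, map_smul, map_smul, map_one, map_sum]
  congr 2
  refine Finset.sum_congr rfl fun i _ => ?_
  rw [map_add, rv_single, rv_single, neg_neg, add_comm]

lemma KK_nonneg (q : ℝ) (d : ℕ) (N : ℝ) (x : Fin d → ℤ) : 0 ≤ (KK q d N).coeff x := by
  unfold KK
  rw [AddMonoidAlgebra.coeff_smul, Finsupp.smul_apply, smul_eq_mul, coeff_sum']
  exact mul_nonneg (by positivity) (Finset.sum_nonneg fun i _ => single_nonneg _ _ one_pos.le)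

noncomputable def NN (q : ℝ) (j : ℕ) : ℝ := ((2:ℝ) ^ j) ^ q

lemma NN_pos (q : ℝ) (j : ℕ) : 0 < NN q j := by unfold NN; positivity

lemma NN_one {q : ℝ} (hq : 1 ≤ q) (j : ℕ) : 1 ≤ NN q j :=
  Real.one_le_rpow (one_le_pow₀ (by norm_num)) (by linarith)

lemma NN_step {q : ℝ} (hq : 1 ≤ q) (j : ℕ) : 2 * NN q j ≤ NN q (j + 1) := by
  unfold NN
  rw [pow_succ', Real.mul_rpow (by norm_num) (by positivity)]
  have : (2:ℝ) ≤ 2 ^ q := by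
    simpa using Real.rpow_le_rpow_of_exponent_le (show (1:ℝ) ≤ 2 by norm_num) hq
  gcongr

noncomputable def tau (q : ℝ) (d : ℕ) (j : ℕ) : AddMonoidAlgebra ℝ (Fin d → ℤ) :=
  KK q d (NN q j) * QQ d - erg (QQ d) ⌊NN q j⌋₊

lemma tau_sum {q : ℝ} (hq : 1 ≤ q) {d : ℕ} (hd : 0 < d) (J : ℕ) (hJ : ∀ j < J, NN q j ≤ d)
    (z : Fin d → UnitAddCircle) : ∑ j ∈ range J, ‖Phi z (tau q d j)‖ ^ 2 ≤ 12120 := by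
  have hd' : (0:ℝ) < d := by exact_mod_cast hd
  have h1 : ∀ j ∈ range J, ‖Phi z (tau q d j)‖ ^ 2 ≤
      2020 * (min (NN q j * lm z) (NN q j * lm z)⁻¹ + NN q j / d) := by
    intro j hj
    have hj' := hJ j (Finset.mem_range.1 hj)
    have e : Phi z (tau q d j) =
        ((mm q d (NN q j) (cc z) * (1 - lm z) - psi (lm z) ⌊NN q j⌋₊ : ℝ) : ℂ) := by
      unfold tau
      rw [map_sub, map_mul, Phi_KK hq, Phi_QQ hd, Phi_erg hd]
      push_cast; rfl
    rw [e, Complex.norm_real, Real.norm_eq_abs]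
    have hb := mult_bound hq (NN_one hq j) hj' (cc z) (cc_abs z) (cc_zero z) (fun i => cc_neg z i 1)
      (cc_sq z) (lm z) rfl
    have hm := mm_abs hq (NN_pos q j).le (cc z) (cc_abs z)
    obtain ⟨p0, p1, _⟩ := psi_bounds (lm_nonneg z) (lm_le z) (Nat.floor_pos.2 (NN_one hq j))
    have h2 : |mm q d (NN q j) (cc z) * (1 - lm z) - psi (lm z) ⌊NN q j⌋₊| ≤ 2 := by
      refine (abs_sub _ _).trans ?_
      have l0 := lm_nonneg z
      have l1 := lm_le z
      rw [abs_mul, abs_of_nonneg p0, abs_of_nonneg (show 0 ≤ 1 - lm z by linarith)]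
      nlinarith [abs_nonneg (mm q d (NN q j) (cc z))]
    have h3 := abs_nonneg (mm q d (NN q j) (cc z) * (1 - lm z) - psi (lm z) ⌊NN q j⌋₊)
    nlinarith
  refine (Finset.sum_le_sum h1).trans ?_
  rw [← Finset.mul_sum, Finset.sum_add_distrib]
  have h2 : ∑ j ∈ range J, min (NN q j * lm z) (NN q j * lm z)⁻¹ ≤ 4 := by
    rcases eq_or_lt_of_le (lm_nonneg z) with h | h
    · rw [← h]; simp
    · refine lac_sum (fun j => NN q j * lm z) (fun j => mul_pos (NN_pos q j) h) (fun j => ?_) J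
      have := mul_le_mul_of_nonneg_right (NN_step hq j) h.le
      linarith
  have h3 : ∑ j ∈ range J, NN q j / d ≤ 2 := by
    rw [← Finset.sum_div, div_le_iff₀ hd']
    rcases J with _ | J
    · simp
    · rw [Finset.sum_range_succ]
      have := lac_sum2 (NN q) (fun j => (NN_pos q j).le) (NN_step hq) J
      have := hJ J (by omega)
      linarith
  linarith

lemma core {q : ℝ} (hq : 1 ≤ q) {d : ℕ} (hd : 0 < d) (J : ℕ) (hJ : ∀ j < J, NN q j ≤ d)
    (f : AddMonoidAlgebra ℝ (Fin d → ℤ)) (hf : ∀ x, 0 ≤ f.coeff x) (X : Finset (Fin d → ℤ))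
    (s : (Fin d → ℤ) → ℕ) (hs : ∀ x, s x < J) :
    √(∑ x ∈ X, ((KK q d (NN q (s x)) * f).coeff x) ^ 2) ≤ 300 * √(n2 f) := by
  have hpt : ∀ x, (KK q d (NN q (s x)) * f).coeff x ≤
      2 * ((tau q d (s x) * f).coeff x + (erg (QQ d) ⌊NN q (s x)⌋₊ * f).coeff x) := by
    intro x
    have h1 := conv_mono_left (QQ_ge (d := d)) (conv_nonneg (KK_nonneg q d (NN q (s x))) hf) x
    rw [one_mul, smul_mul_assoc, AddMonoidAlgebra.coeff_smul, Finsupp.smul_apply, smul_eq_mul] at h1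
    have h2 : QQ d * (KK q d (NN q (s x)) * f) = tau q d (s x) * f +
        erg (QQ d) ⌊NN q (s x)⌋₊ * f := by unfold tau; ring
    rw [h2, AddMonoidAlgebra.coeff_add, Finsupp.add_apply] at h1
    exact h1
  have h0 : ∀ x, 0 ≤ (KK q d (NN q (s x)) * f).coeff x := fun x =>
    conv_nonneg (KK_nonneg q d (NN q (s x))) hf x
  have hA : ∑ x ∈ X, ((tau q d (s x) * f).coeff x) ^ 2 ≤ 12120 * n2 f := by
    refine le_trans ?_ (plancherel_sum (range J) (tau q d) 12120 (tau_sum hq hd J hJ) f)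
    calc ∑ x ∈ X, ((tau q d (s x) * f).coeff x) ^ 2 ≤
          ∑ x ∈ X, ∑ j ∈ range J, ((tau q d j * f).coeff x) ^ 2 := by
          refine Finset.sum_le_sum fun x _ => ?_
          exact Finset.single_le_sum (f := fun j => ((tau q d j * f).coeff x) ^ 2)
            (fun _ _ => sq_nonneg _) (Finset.mem_range.2 (hs x))
      _ = ∑ j ∈ range J, ∑ x ∈ X, ((tau q d j * f).coeff x) ^ 2 := Finset.sum_comm
      _ ≤ _ := Finset.sum_le_sum fun j _ => n2_sum_le _ _
  have hA' : √(∑ x ∈ X, ((tau q d (s x) * f).coeff x) ^ 2) ≤ 120 * √(n2 f) := by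
    refine Real.sqrt_le_iff.2 ⟨by positivity, ?_⟩
    rw [mul_pow, Real.sq_sqrt (n2_nonneg f)]
    have := n2_nonneg f
    linarith
  have hB := valid_six QQ_nonneg (QQ_rv d) (erg_contr hd) hd f hf X
    (fun x => ⌊NN q (s x)⌋₊) (fun x => ⟨Nat.floor_pos.2 (NN_one hq _),
      Nat.floor_le_of_le (hJ _ (hs x))⟩)
  have hsum := sqrt_sum_add_le X (fun x => (tau q d (s x) * f).coeff x)
    (fun x => (erg (QQ d) ⌊NN q (s x)⌋₊ * f).coeff x)
  have hfin : √(∑ x ∈ X, ((KK q d (NN q (s x)) * f).coeff x) ^ 2) ≤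
      2 * √(∑ x ∈ X, ((tau q d (s x) * f).coeff x + (erg (QQ d) ⌊NN q (s x)⌋₊ * f).coeff x) ^ 2) := by
    refine Real.sqrt_le_iff.2 ⟨by positivity, ?_⟩
    rw [mul_pow, Real.sq_sqrt (Finset.sum_nonneg fun _ _ => sq_nonneg _), Finset.mul_sum]
    refine Finset.sum_le_sum fun x _ => ?_
    rw [← mul_pow]
    exact pow_le_pow_left₀ (h0 x) (hpt x) 2
  have := Real.sqrt_nonneg (n2 f)
  linarith

end Part4

section P5
open AddMonoidAlgebra

lemma latticeBall_eq {q : ℝ} (hq : 1 ≤ q) (d : ℕ) (n : ℕ) :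
    latticeBall q d ((2:ℝ) ^ n) = bs q d (NN q n) := by
  ext y
  rw [mem_bs hq]
  unfold latticeBall
  rw [Finset.mem_filter, Finset.mem_Icc]
  have hq0 : 0 < q := by linarith
  constructor
  · rintro ⟨_, h⟩
    exact h
  · intro h
    have hi : ∀ i, |y i| ≤ (⌈(2:ℝ) ^ n⌉₊ : ℤ) := by
      intro i
      have h1 : |(y i : ℝ)| ^ q ≤ ((2:ℝ) ^ n) ^ q := by
        refine le_trans ?_ h
        unfold cst
        exact Finset.single_le_sum (f := fun i => |(y i : ℝ)| ^ q)
          (fun j _ => Real.rpow_nonneg (abs_nonneg _) q) (Finset.mem_univ i)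
      have h2 : |(y i : ℝ)| ≤ (2:ℝ) ^ n :=
        (Real.rpow_le_rpow_iff (abs_nonneg _) (by positivity) hq0).1 h1
      have h3 : |(y i : ℝ)| ≤ (⌈(2:ℝ) ^ n⌉₊ : ℝ) := h2.trans (Nat.le_ceil _)
      exact_mod_cast h3
    exact ⟨⟨fun i => (abs_le.1 (hi i)).1, fun i => (abs_le.1 (hi i)).2⟩, h⟩

lemma cond_iff {q : ℝ} (hq : 1 ≤ q) (d n : ℕ) :
    (2:ℝ) ^ n ≤ (d:ℝ) ^ (1 / q) ↔ NN q n ≤ d := by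
  have hq0 : 0 < q := by linarith
  unfold NN
  rw [one_div, Real.le_rpow_inv_iff_of_pos (by positivity) (by positivity) hq0]

lemma KK_mul_coeff (q : ℝ) (d : ℕ) (N : ℝ) (F : AddMonoidAlgebra ℝ (Fin d → ℤ)) (x : Fin d → ℤ) :
    (KK q d N * F).coeff x = ((bs q d N).card : ℝ)⁻¹ * ∑ y ∈ bs q d N, F.coeff (x - y) := by
  classical
  have hc : ∀ y, (KK q d N).coeff y = if y ∈ bs q d N then ((bs q d N).card : ℝ)⁻¹ else 0 := by
    intro y
    unfold KK
    rw [AddMonoidAlgebra.coeff_smul, Finsupp.smul_apply, coeff_sum']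
    simp [AddMonoidAlgebra.coeff_single, Finsupp.single_apply]
  rw [conv_apply _ _ _ (bs q d N), Finset.mul_sum]
  · refine Finset.sum_congr rfl fun y hy => ?_
    rw [hc, if_pos hy]
  · intro y hy
    by_contra h
    rw [Finsupp.mem_support_iff, hc, if_neg h] at hy
    exact hy rfl

lemma fin_bound {q : ℝ} (hq : 1 ≤ q) {d : ℕ} (hd : 0 < d) (J : ℕ) (hJ : ∀ j < J, NN q j ≤ d)
    (f : (Fin d → ℤ) → ℂ) (X : Finset (Fin d → ℤ)) (s : (Fin d → ℤ) → ℕ) (hs : ∀ x, s x < J) :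
    ∃ T : Finset (Fin d → ℤ), ∑ x ∈ X, ‖avgOp q d ((2:ℝ) ^ (s x)) f x‖ ^ 2
      ≤ 300 ^ 2 * ∑ x ∈ T, ‖f x‖ ^ 2 := by
  classical
  let T : Finset (Fin d → ℤ) := X.biUnion fun x => (bs q d (NN q (s x))).image fun y => x - y
  let F : AddMonoidAlgebra ℝ (Fin d → ℤ) := ∑ t ∈ T, single t ‖f t‖
  have hF : ∀ t, F.coeff t = if t ∈ T then ‖f t‖ else 0 := by
    intro t
    show (∑ t ∈ T, single t ‖f t‖ : AddMonoidAlgebra ℝ (Fin d → ℤ)).coeff t = _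
    rw [coeff_sum']
    simp [AddMonoidAlgebra.coeff_single, Finsupp.single_apply]
  have hF0 : ∀ t, 0 ≤ F.coeff t := by
    intro t; rw [hF]; split_ifs <;> positivity
  have hn : n2 F = ∑ t ∈ T, ‖f t‖ ^ 2 := by
    rw [n2_eq F T]
    · refine Finset.sum_congr rfl fun t ht => ?_
      rw [hF, if_pos ht]
    · intro t ht
      by_contra h
      rw [Finsupp.mem_support_iff, hF, if_neg h] at ht
      exact ht rfl
  refine ⟨T, ?_⟩
  have hc := core hq hd J hJ F hF0 X s hs
  have hav : ∀ x ∈ X, ‖avgOp q d ((2:ℝ) ^ (s x)) f x‖ ≤ (KK q d (NN q (s x)) * F).coeff x := by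
    intro x hx
    rw [KK_mul_coeff]
    unfold avgOp
    rw [latticeBall_eq hq, norm_mul, norm_inv, Complex.norm_natCast]
    refine mul_le_mul_of_nonneg_left ?_ (by positivity)
    refine (norm_sum_le _ _).trans (Finset.sum_le_sum fun y hy => ?_)
    rw [hF, if_pos]
    exact Finset.mem_biUnion.2 ⟨x, hx, Finset.mem_image.2 ⟨y, hy, rfl⟩⟩
  calc ∑ x ∈ X, ‖avgOp q d ((2:ℝ) ^ (s x)) f x‖ ^ 2
      ≤ ∑ x ∈ X, ((KK q d (NN q (s x)) * F).coeff x) ^ 2 :=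
        Finset.sum_le_sum fun x hx => pow_le_pow_left₀ (norm_nonneg _) (hav x hx) 2
    _ = (√(∑ x ∈ X, ((KK q d (NN q (s x)) * F).coeff x) ^ 2)) ^ 2 :=
        (Real.sq_sqrt (Finset.sum_nonneg fun _ _ => sq_nonneg _)).symm
    _ ≤ (300 * √(n2 F)) ^ 2 := pow_le_pow_left₀ (Real.sqrt_nonneg _) hc 2
    _ = 300 ^ 2 * ∑ x ∈ T, ‖f x‖ ^ 2 := by
        rw [mul_pow, Real.sq_sqrt (n2_nonneg F), hn]

lemma enn_sq (z : ℂ) : (‖z‖₊ : ENNReal) ^ (2:ℝ) = ENNReal.ofReal (‖z‖ ^ 2) := by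
  rw [ENNReal.ofReal_pow (norm_nonneg _), ENNReal.rpow_ofNat, ofReal_norm]
  rfl

lemma final {q : ℝ} (hq : 1 ≤ q) {d : ℕ} (hd : 0 < d) (f : (Fin d → ℤ) → ℂ) :
    ∑' x, (⨆ (n : ℕ) (_ : (2 : ℝ) ^ n ≤ (d : ℝ) ^ (1 / q)),
          (‖avgOp q d ((2 : ℝ) ^ n) f x‖₊ : ENNReal)) ^ (2:ℝ)
      ≤ (300 : ENNReal) ^ (2:ℝ) * ∑' x, (‖f x‖₊ : ENNReal) ^ (2:ℝ) := by
  classical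
  have hmono : Monotone (NN q) := monotone_nat_of_le_succ fun j => by
    have := NN_step hq j; have := NN_pos q j; linarith
  have hex : ∃ n, (d:ℝ) < NN q n := by
    obtain ⟨n, hn⟩ := pow_unbounded_of_one_lt (d:ℝ) (one_lt_two)
    refine ⟨n, hn.trans_le ?_⟩
    unfold NN
    exact Real.self_le_rpow_of_one_le (one_le_pow₀ one_le_two) hq
  set J := Nat.find hex with hJdef
  have hJ : ∀ j, j < J ↔ NN q j ≤ d := by
    intro j
    constructor
    · intro h
      exact not_lt.1 (Nat.find_min hex h)
    · intro h
      by_contra h2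
      have := (Nat.find_spec hex).trans_le (hmono (not_lt.1 h2))
      linarith
  have hJ0 : 0 < J := by
    rw [hJ]; unfold NN; simp; omega
  have hsup : ∀ x, ∃ s < J, (⨆ (n : ℕ) (_ : (2 : ℝ) ^ n ≤ (d : ℝ) ^ (1 / q)),
          (‖avgOp q d ((2 : ℝ) ^ n) f x‖₊ : ENNReal)) ≤ (‖avgOp q d ((2 : ℝ) ^ s) f x‖₊ : ENNReal) := by
    intro x
    obtain ⟨s, hs, hm⟩ := Finset.exists_max_image (Finset.range J)
      (fun n => (‖avgOp q d ((2 : ℝ) ^ n) f x‖₊ : ENNReal)) ⟨0, Finset.mem_range.2 hJ0⟩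
    refine ⟨s, Finset.mem_range.1 hs, iSup₂_le fun n hn => hm n ?_⟩
    rw [Finset.mem_range, hJ, ← cond_iff hq]
    exact hn
  choose s hs hle using hsup
  rw [ENNReal.tsum_eq_iSup_sum]
  refine iSup_le fun X => ?_
  obtain ⟨T, hT⟩ := fin_bound hq hd J (fun j hj => (hJ j).1 hj) f X s hs
  calc _ ≤ ∑ x ∈ X, (‖avgOp q d ((2 : ℝ) ^ (s x)) f x‖₊ : ENNReal) ^ (2:ℝ) :=
        Finset.sum_le_sum fun x _ => ENNReal.rpow_le_rpow (hle x) (by norm_num)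
    _ = ENNReal.ofReal (∑ x ∈ X, ‖avgOp q d ((2 : ℝ) ^ (s x)) f x‖ ^ 2) := by
        rw [ENNReal.ofReal_sum_of_nonneg (fun _ _ => by positivity)]
        exact Finset.sum_congr rfl fun x _ => enn_sq _
    _ ≤ ENNReal.ofReal (300 ^ 2 * ∑ x ∈ T, ‖f x‖ ^ 2) := ENNReal.ofReal_le_ofReal hT
    _ = (300 : ENNReal) ^ (2:ℝ) * ∑ x ∈ T, (‖f x‖₊ : ENNReal) ^ (2:ℝ) := by
        rw [ENNReal.ofReal_mul (by positivity), ENNReal.ofReal_sum_of_nonneg (fun _ _ => by positivity)]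
        congr 1
        · rw [ENNReal.ofReal_pow (by positivity), ENNReal.rpow_ofNat]
          simp
        · exact Finset.sum_congr rfl fun x _ => (enn_sq _).symm
    _ ≤ _ := by
        gcongr
        exact ENNReal.sum_le_tsum T

end P5

theorem stmt2 :
    ∃ C : ℝ≥0, 0 < C ∧ ∀ (q : ℝ), 1 ≤ q → ∀ d : ℕ, 0 < d → ∀ f : (Fin d → ℤ) → ℂ,
      l2Norm (fun x => ⨆ (n : ℕ) (_ : (2 : ℝ) ^ n ≤ (d : ℝ) ^ (1 / q)),
          (‖avgOp q d ((2 : ℝ) ^ n) f x‖₊ : ℝ≥0∞))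
        ≤ (C : ℝ≥0∞) * l2Norm (fun x => (‖f x‖₊ : ℝ≥0∞)) := by
  refine ⟨300, by norm_num, fun q hq d hd f => ?_⟩
  unfold l2Norm
  have h := ENNReal.rpow_le_rpow (final hq hd f) (z := (1:ℝ) / 2) (by norm_num)
  rw [ENNReal.mul_rpow_of_nonneg _ _ (by norm_num), ← ENNReal.rpow_mul] at h
  norm_num at h ⊢
  exact h
end

section
/- Let d ∈ ℕ, N > 0 and q ≥ 1, and set N₁ = N + d^{1/q}/2. Then (2⌊κ_q(d,N)⌋ + 1)^d ≤ |B_N^q ∩ ℤ^d| ≤ |B_{N₁}^q|, where |B_{N₁}^q| denotes the Lebesgue measure of the ball B_{N₁}^q in ℝ^d. -/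
open scoped ENNReal
theorem stmt3 (q : ℝ) (hq : 1 ≤ q) (d : ℕ) (hd : 0 < d) (N : ℝ) (hN : 0 < N) :
    ((2 * ⌊N / (d : ℝ) ^ (1 / q)⌋₊ + 1) ^ d : ℝ≥0∞) ≤ ((latticeBall q d N).card : ℝ≥0∞) ∧
    ((latticeBall q d N).card : ℝ≥0∞) ≤
      MeasureTheory.volume
        {x : Fin d → ℝ | ∑ i, |x i| ^ q ≤ (N + (d : ℝ) ^ (1 / q) / 2) ^ q} := by
  have hq0 : 0 < q := by linarith
  have hd1 : (1 : ℝ) ≤ d := by exact_mod_cast hd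
  have hdq : (1 : ℝ) ≤ (d : ℝ) ^ (1 / q) := Real.one_le_rpow hd1 (by positivity)
  constructor
  · set k := ⌊N / (d : ℝ) ^ (1 / q)⌋₊ with hk
    have hkN : (k : ℝ) ≤ N / (d : ℝ) ^ (1 / q) := Nat.floor_le (by positivity)
    have hkN' : (k : ℝ) ≤ N := hkN.trans (div_le_self hN.le hdq)
    have hkc : k ≤ ⌈N⌉₊ := by exact_mod_cast hkN'.trans (Nat.le_ceil N)
    have hsub : Finset.Icc (fun _ : Fin d => -(k : ℤ)) (fun _ => (k : ℤ)) ⊆ latticeBall q d N := by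
      intro x hx
      rw [Finset.mem_Icc, Pi.le_def, Pi.le_def] at hx
      obtain ⟨h1, h2⟩ := hx
      rw [latticeBall, Finset.mem_filter, Finset.mem_Icc, Pi.le_def, Pi.le_def]
      refine ⟨⟨fun i => ?_, fun i => ?_⟩, ?_⟩
      · have := h1 i
        omega
      · have := h2 i
        omega
      · have hb : ∀ i ∈ Finset.univ, |(x i : ℝ)| ^ q ≤ (N / (d : ℝ) ^ (1 / q)) ^ q := by
          intro i _
          apply Real.rpow_le_rpow (abs_nonneg _) _ hq0.le
          refine le_trans ?_ hkN
          rw [abs_le]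
          have a := h1 i
          have b := h2 i
          exact ⟨by exact_mod_cast a, by exact_mod_cast b⟩
        refine (Finset.sum_le_sum hb).trans ?_
        rw [Finset.sum_const, Finset.card_univ, Fintype.card_fin, nsmul_eq_mul,
          Real.div_rpow hN.le (by positivity), ← Real.rpow_mul (by positivity),
          one_div_mul_cancel hq0.ne', Real.rpow_one]
        apply le_of_eq
        field_simp
    have hc := Finset.card_le_card hsub
    have hcard : (Finset.Icc (fun _ : Fin d => -(k : ℤ)) (fun _ => (k : ℤ))).card
        = (2 * k + 1) ^ d := by
      rw [Pi.card_Icc]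
      simp only [Int.card_Icc, Finset.prod_const, Finset.card_univ, Fintype.card_fin]
      congr 1
      omega
    rw [hcard] at hc
    exact_mod_cast hc
  · let C : (Fin d → ℤ) → Set (Fin d → ℝ) := fun x =>
      Set.pi Set.univ (fun i => Set.Ico ((x i : ℝ) - 1/2) ((x i : ℝ) + 1/2))
    have hvol : ∀ x, MeasureTheory.volume (C x) = 1 := by
      intro x
      simp only [C]
      rw [MeasureTheory.volume_pi_pi]
      apply Finset.prod_eq_one
      intro i _
      rw [Real.volume_Ico]
      norm_num
    have hmeas : ∀ x, MeasurableSet (C x) := fun x =>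
      MeasurableSet.univ_pi (fun i => measurableSet_Ico)
    have hdisj : Set.PairwiseDisjoint (↑(latticeBall q d N)) C := by
      intro x _ y _ hxy
      rw [Function.onFun, Set.disjoint_left]
      intro z hz hz'
      apply hxy
      funext i
      have a := hz i (Set.mem_univ i)
      have b := hz' i (Set.mem_univ i)
      simp only [Set.mem_Ico] at a b
      have h1 : (x i : ℝ) < y i + 1 := by linarith
      have h2 : (y i : ℝ) < x i + 1 := by linarith
      have h1' : x i < y i + 1 := by exact_mod_cast h1
      have h2' : y i < x i + 1 := by exact_mod_cast h2
      omega
    have hU := MeasureTheory.measure_biUnion_finset (μ := MeasureTheory.volume) hdisj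
      (fun x _ => hmeas x)
    simp only [hvol, Finset.sum_const, nsmul_eq_mul, mul_one] at hU
    rw [← hU]
    apply MeasureTheory.measure_mono
    intro z hz
    simp only [Set.mem_iUnion] at hz
    obtain ⟨x, hx, hz⟩ := hz
    rw [latticeBall, Finset.mem_filter] at hx
    have hxN := hx.2
    have hM := Real.Lp_add_le Finset.univ (fun i => (x i : ℝ)) (fun i => z i - x i) hq
    have e1 : (∑ i, |(x i : ℝ)| ^ q) ^ (1 / q) ≤ N := by
      calc _ ≤ (N ^ q) ^ (1 / q) := Real.rpow_le_rpow (by positivity) hxN (by positivity)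
        _ = N := by rw [← Real.rpow_mul hN.le, mul_one_div_cancel hq0.ne', Real.rpow_one]
    have e2 : (∑ i, |z i - (x i : ℝ)| ^ q) ^ (1 / q) ≤ (d : ℝ) ^ (1 / q) / 2 := by
      have hs : ∑ i, |z i - (x i : ℝ)| ^ q ≤ d * (1 / 2 : ℝ) ^ q := by
        have hb : ∀ i ∈ Finset.univ, |z i - (x i : ℝ)| ^ q ≤ (1 / 2 : ℝ) ^ q := by
          intro i _
          apply Real.rpow_le_rpow (abs_nonneg _) _ hq0.le
          have a := hz i (Set.mem_univ i)
          simp only [Set.mem_Ico] at a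
          rw [abs_le]
          constructor <;> linarith
        refine (Finset.sum_le_sum hb).trans (le_of_eq ?_)
        simp
      calc _ ≤ (d * (1 / 2 : ℝ) ^ q) ^ (1 / q) :=
            Real.rpow_le_rpow (by positivity) hs (by positivity)
        _ = _ := by
          rw [Real.mul_rpow (by positivity) (by positivity), ← Real.rpow_mul (by norm_num),
            mul_one_div_cancel hq0.ne', Real.rpow_one]
          ring
    have hfin : (∑ i, |z i| ^ q) ^ (1 / q) ≤ N + (d : ℝ) ^ (1 / q) / 2 := by
      simp only [add_sub_cancel] at hM
      linarith
    have := Real.rpow_le_rpow (by positivity) hfin hq0.le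
    rw [← Real.rpow_mul (by positivity), one_div_mul_cancel hq0.ne', Real.rpow_one] at this
    exact this
end

section
/- For all q ≥ 1 and d, N ∈ ℕ, if κ_q(d,N) ≤ 409^{−1/q} and k is a real number with N^q ≥ k ≥ 409·κ_q(d,N)^q·N^q, then the number of points x ∈ B_N^q ∩ ℤ^d such that |{i ∈ [d] : x_i = ±1}| ≤ N^q − k is at most 2^{2−k}·|B_N^q ∩ ℤ^d|. -/
lemma aux_choose (d M a : ℕ) : ∀ s : ℕ, a + s ≤ M →
    d.choose a * (d - M) ^ s ≤ d.choose (a + s) * M ^ s := by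
  intro s
  induction s with
  | zero => intro _; simp
  | succ s ih =>
    intro h
    have h1 := ih (by omega)
    have h2 := Nat.choose_succ_right_eq d (a + s)
    calc d.choose a * (d - M) ^ (s + 1) = (d.choose a * (d - M) ^ s) * (d - M) := by ring
      _ ≤ (d.choose (a + s) * M ^ s) * (d - (a + s)) :=
          Nat.mul_le_mul h1 (by omega)
      _ = (d.choose (a + s) * (d - (a + s))) * M ^ s := by ring
      _ = (d.choose (a + s + 1) * (a + s + 1)) * M ^ s := by rw [h2]
      _ ≤ (d.choose (a + s + 1) * M) * M ^ s := by gcongr; omega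
      _ = d.choose (a + (s + 1)) * M ^ (s + 1) := by rw [← add_assoc]; ring

/-- The integers of absolute value at most about `M`, without `1` and `-1`. -/
def offSet (M : ℕ) : Finset ℤ :=
  insert 0 ((Finset.range M).image (fun m : ℕ => (m : ℤ) + 2) ∪
    (Finset.range M).image (fun m : ℕ => -((m : ℤ) + 2)))

lemma mem_offSet (M : ℕ) (j : ℤ) (hj : j.natAbs ≤ M) (h1 : j ≠ 1) (h2 : j ≠ -1) :
    j ∈ offSet M := by
  unfold offSet
  simp only [Finset.mem_insert, Finset.mem_union, Finset.mem_image, Finset.mem_range]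
  rcases lt_trichotomy j 0 with h | h | h
  · right; right; exact ⟨j.natAbs - 2, by omega, by omega⟩
  · left; exact h
  · right; left; exact ⟨j.natAbs - 2, by omega, by omega⟩

lemma sum_offSet (M : ℕ) (z : ℝ) (hz : 0 < z) (hz1 : z < 1) :
    ∑ j ∈ offSet M, z ^ j.natAbs ≤ 1 + 2 * z ^ 2 / (1 - z) := by
  have hg : ∑ m ∈ Finset.range M, z ^ (m + 2) ≤ z ^ 2 / (1 - z) := by
    have h := geom_sum_eq hz1.ne M
    have : ∑ m ∈ Finset.range M, z ^ (m + 2) = z ^ 2 * ∑ m ∈ Finset.range M, z ^ m := by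
      rw [Finset.mul_sum]; exact Finset.sum_congr rfl (fun m _ => by ring)
    rw [this, div_eq_mul_inv]
    have h1z : 0 < 1 - z := by linarith
    gcongr
    rw [h, ← one_div, ← neg_div_neg_eq, neg_sub, neg_sub]
    gcongr
    have := pow_pos hz M
    linarith
  unfold offSet
  rw [Finset.sum_insert, Finset.sum_union, Finset.sum_image, Finset.sum_image]
  · have e1 : ∀ m : ℕ, ((m : ℤ) + 2).natAbs = m + 2 := fun m => by omega
    have e2 : ∀ m : ℕ, (-((m : ℤ) + 2)).natAbs = m + 2 := fun m => by omega
    simp only [e1, e2]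
    have : 2 * z ^ 2 / (1 - z) = z ^ 2 / (1 - z) + z ^ 2 / (1 - z) := by ring
    rw [this]
    simp only [Int.natAbs_zero, pow_zero]
    linarith
  · intro a _ b _ h; simp only at h; omega
  · intro a _ b _ h; simp only at h; omega
  · rw [Finset.disjoint_left]
    simp only [Finset.mem_image, Finset.mem_range]
    rintro j ⟨m, _, hm⟩ ⟨m', _, hm'⟩
    omega
  · simp only [Finset.mem_union, Finset.mem_image, Finset.mem_range]
    rintro (⟨m, _, hm⟩ | ⟨m, _, hm⟩) <;> omega

open Classical in
/-- The set of coordinates equal to `1` or `-1`. -/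
noncomputable def oneSet {d : ℕ} (x : Fin d → ℤ) : Finset (Fin d) :=
  Finset.univ.filter (fun i => x i = 1 ∨ x i = -1)

open Classical in
lemma count_fixed {d : ℕ} (M s : ℕ) (z : ℝ) (hz : 0 < z) (hz1 : z < 1)
    (A : Finset (Fin d)) (hA : A.card + s = M) (S : Finset (Fin d → ℤ))
    (hS : ∀ x ∈ S, oneSet x = A ∧ ∑ i, (x i).natAbs ≤ M) :
    (S.card : ℝ) * z ^ s ≤ 2 ^ A.card * Real.exp (2 * z ^ 2 / (1 - z) * d) := by
  let t : Fin d → Finset ℤ := fun i => if i ∈ A then {1, -1} else offSet M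
  let f : Fin d → ℤ → ℝ := fun i j => if i ∈ A then 1 else z ^ j.natAbs
  have hsub : S ⊆ Fintype.piFinset t := by
    intro x hx
    obtain ⟨h1, h2⟩ := hS x hx
    rw [Fintype.mem_piFinset]
    intro i
    have hi : i ∈ A ↔ (x i = 1 ∨ x i = -1) := by rw [← h1]; simp [oneSet]
    by_cases h : i ∈ A
    · simp only [t, h, if_true]
      simpa using hi.1 h
    · simp only [t, h, if_false]
      have h3 := mt hi.2 h
      push Not at h3
      refine mem_offSet M _ ?_ h3.1 h3.2
      exact (Finset.single_le_sum (f := fun i => (x i).natAbs) (fun _ _ => Nat.zero_le _)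
        (Finset.mem_univ i)).trans h2
  have hfnn : ∀ x : Fin d → ℤ, 0 ≤ ∏ i, f i (x i) := by
    intro x
    refine Finset.prod_nonneg (fun i _ => ?_)
    simp only [f]; split_ifs <;> positivity
  have hlow : ∀ x ∈ S, z ^ s ≤ ∏ i, f i (x i) := by
    intro x hx
    obtain ⟨h1, h2⟩ := hS x hx
    have hp : ∏ i, f i (x i) = z ^ (∑ i ∈ Aᶜ, (x i).natAbs) := by
      rw [← Finset.prod_mul_prod_compl A]
      have e1 : ∏ i ∈ A, f i (x i) = 1 :=
        Finset.prod_eq_one (fun i hi => by simp [f, hi])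
      have e2 : ∏ i ∈ Aᶜ, f i (x i) = ∏ i ∈ Aᶜ, z ^ (x i).natAbs :=
        Finset.prod_congr rfl (fun i hi => by
          have : i ∉ A := Finset.mem_compl.1 hi
          simp [f, this])
      rw [e1, e2, one_mul, Finset.prod_pow_eq_pow_sum]
    rw [hp]
    refine pow_le_pow_of_le_one hz.le hz1.le ?_
    have e3 : ∑ i ∈ A, (x i).natAbs = A.card := by
      rw [Finset.card_eq_sum_ones]
      refine Finset.sum_congr rfl (fun i hi => ?_)
      have : x i = 1 ∨ x i = -1 := by
        rw [← h1] at hi; simpa [oneSet] using hi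
      omega
    have e4 := Finset.sum_add_sum_compl A (fun i => (x i).natAbs)
    omega
  have hz' : 0 ≤ 2 * z ^ 2 / (1 - z) := by
    have : 0 < 1 - z := by linarith
    positivity
  calc (S.card : ℝ) * z ^ s = ∑ x ∈ S, z ^ s := by simp
    _ ≤ ∑ x ∈ S, ∏ i, f i (x i) := Finset.sum_le_sum hlow
    _ ≤ ∑ x ∈ Fintype.piFinset t, ∏ i, f i (x i) :=
        Finset.sum_le_sum_of_subset_of_nonneg hsub (fun x _ _ => hfnn x)
    _ = ∏ i, ∑ j ∈ t i, f i j := (Finset.prod_univ_sum t f).symm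
    _ ≤ ∏ i, ((if i ∈ A then 2 else 1) * Real.exp (2 * z ^ 2 / (1 - z))) := by
        refine Finset.prod_le_prod (fun i _ => Finset.sum_nonneg (fun j _ => ?_)) (fun i _ => ?_)
        · simp only [f]; split_ifs <;> positivity
        · by_cases h : i ∈ A
          · simp only [t, f, h, if_true]
            have : (1 : ℝ) ≤ Real.exp (2 * z ^ 2 / (1 - z)) := Real.one_le_exp hz'
            have e : ∑ j ∈ ({1, -1} : Finset ℤ), (1 : ℝ) = 2 := by
              rw [Finset.sum_pair (by norm_num)]; norm_num
            rw [e]; linarith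
          · simp only [t, f, h, if_false, one_mul]
            refine (sum_offSet M z hz hz1).trans ?_
            have := Real.add_one_le_exp (2 * z ^ 2 / (1 - z))
            linarith
    _ = 2 ^ A.card * Real.exp (2 * z ^ 2 / (1 - z) * d) := by
        rw [Finset.prod_mul_distrib, Finset.prod_const, ← Real.exp_nat_mul]
        congr 1
        · rw [Finset.prod_ite]; simp
        · simp [mul_comm]

open Classical in
lemma count_level {d : ℕ} (M s a : ℕ) (z : ℝ) (hz : 0 < z) (hz1 : z < 1)
    (hA : a + s = M) (S : Finset (Fin d → ℤ))
    (hS : ∀ x ∈ S, (oneSet x).card = a ∧ ∑ i, (x i).natAbs ≤ M) :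
    (S.card : ℝ) * z ^ s ≤ d.choose a * 2 ^ a * Real.exp (2 * z ^ 2 / (1 - z) * d) := by
  have h1 : S.card = ∑ A ∈ Finset.powersetCard a (Finset.univ : Finset (Fin d)),
      (S.filter (fun x => oneSet x = A)).card := by
    refine Finset.card_eq_sum_card_fiberwise (fun x hx => ?_)
    simp [Finset.mem_powersetCard, (hS x hx).1]
  rw [h1]
  push_cast
  rw [Finset.sum_mul]
  calc _ ≤ ∑ A ∈ Finset.powersetCard a (Finset.univ : Finset (Fin d)),
        (2 ^ a * Real.exp (2 * z ^ 2 / (1 - z) * d)) := by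
        refine Finset.sum_le_sum (fun A hA' => ?_)
        have hc : A.card = a := (Finset.mem_powersetCard.1 hA').2
        rw [← hc]
        refine count_fixed M s z hz hz1 A (by omega) _ (fun x hx => ?_)
        rw [Finset.mem_filter] at hx
        exact ⟨hx.2, (hS x hx.1).2⟩
    _ = _ := by simp [mul_assoc]

lemma level_bound {d : ℕ} (M s a : ℕ) (hA : a + s = M) (hM : 1 ≤ M)
    (hdM : 409 * M ≤ d) (hs : 409 * (M : ℝ) ^ 2 ≤ 2 * s * d) (S : Finset (Fin d → ℤ))
    (hS : ∀ x ∈ S, (oneSet x).card = a ∧ ∑ i, (x i).natAbs ≤ M) :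
    (S.card : ℝ) ≤ (1 / 4) ^ s * (d.choose M * 2 ^ M) := by
  have hM' : (1 : ℝ) ≤ M := by exact_mod_cast hM
  have hd' : 409 * (M : ℝ) ≤ d := by exact_mod_cast hdM
  have hd0 : (0 : ℝ) < d := by linarith
  set z : ℝ := 4 * M / d with hzdef
  have hz : 0 < z := by positivity
  have hz4 : z ≤ 4 / 409 := by
    rw [hzdef, div_le_div_iff₀ hd0 (by norm_num)]; linarith
  have hz1 : z < 1 := by linarith [show (4 / 409 : ℝ) < 1 by norm_num]
  have h1 := count_level M s a z hz hz1 hA S hS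
  have hexp : Real.exp (2 * z ^ 2 / (1 - z) * d) ≤ (6 / 5) ^ s := by
    have e1 : 2 * z ^ 2 / (1 - z) * d ≤ s * (1 / 6) := by
      have hzd : z * d = 4 * M := by rw [hzdef]; field_simp
      have hzz : z ^ 2 * d * 409 ≤ 32 * s := by
        have : z ^ 2 * d * d = 16 * (M : ℝ) ^ 2 := by
          calc z ^ 2 * d * d = (z * d) ^ 2 := by ring
            _ = _ := by rw [hzd]; ring
        have : (z ^ 2 * d * 409) * d ≤ (32 * s) * d := by nlinarith
        exact le_of_mul_le_mul_right this hd0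
      have h1z : 0 < 1 - z := by linarith
      rw [div_mul_eq_mul_div, div_le_iff₀ h1z]
      have : (0 : ℝ) ≤ s := by positivity
      nlinarith
    have e2 : Real.exp (1 / 6) ≤ 6 / 5 := by
      have h := Real.add_one_le_exp (-(1 / 6 : ℝ))
      rw [Real.exp_neg] at h
      have hp := Real.exp_pos (1 / 6)
      have := mul_le_mul_of_nonneg_right h hp.le
      rw [inv_mul_cancel₀ hp.ne'] at this
      linarith
    calc _ ≤ Real.exp (s * (1 / 6)) := Real.exp_le_exp.2 e1
      _ = Real.exp (1 / 6) ^ s := Real.exp_nat_mul _ _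
      _ ≤ _ := by gcongr
  have hch : (d.choose a : ℝ) * ((d : ℝ) - M) ^ s ≤ d.choose M * (M : ℝ) ^ s := by
    have h := aux_choose d M a s hA.le
    rw [hA] at h
    have h' : ((d.choose a * (d - M) ^ s : ℕ) : ℝ) ≤ ((d.choose M * M ^ s : ℕ) : ℝ) := by
      exact_mod_cast h
    push_cast [Nat.cast_sub (show M ≤ d by omega)] at h'
    exact h'
  have hdm : 0 < (d : ℝ) - M := by linarith
  -- multiply out
  have hpos : 0 < (z * ((d : ℝ) - M)) ^ s := by positivity
  refine le_of_mul_le_mul_right ?_ hpos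
  calc (S.card : ℝ) * (z * ((d : ℝ) - M)) ^ s = (S.card * z ^ s) * ((d : ℝ) - M) ^ s := by
        rw [mul_pow]; ring
    _ ≤ (d.choose a * 2 ^ a * (6 / 5) ^ s) * ((d : ℝ) - M) ^ s := by
        refine mul_le_mul_of_nonneg_right (h1.trans ?_) (by positivity)
        gcongr
    _ = (d.choose a * ((d : ℝ) - M) ^ s) * (2 ^ a * (6 / 5) ^ s) := by ring
    _ ≤ (d.choose M * (M : ℝ) ^ s) * (2 ^ a * (6 / 5) ^ s) := by gcongr
    _ = d.choose M * 2 ^ a * (6 / 5 * M) ^ s := by rw [mul_pow]; ring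
    _ ≤ d.choose M * 2 ^ a * (2 * (1 / 4) * (z * ((d : ℝ) - M))) ^ s := by
        refine mul_le_mul_of_nonneg_left (pow_le_pow_left₀ (by positivity) ?_ s) (by positivity)
        have hzd : z * d = 4 * M := by rw [hzdef]; field_simp
        nlinarith
    _ = (1 / 4) ^ s * (d.choose M * 2 ^ M) * (z * ((d : ℝ) - M)) ^ s := by
        rw [← hA, pow_add, mul_pow, mul_pow]; ring

open Classical in
lemma ball_lower (q : ℝ) (hq : 1 ≤ q) (d N M : ℕ) (hM : (M : ℝ) ≤ (N : ℝ) ^ q) (hN : 0 < N) :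
    (d.choose M : ℝ) * 2 ^ M ≤ (latticeBall q d N).card := by
  let T : Finset (Fin d) → Finset (Fin d → ℤ) := fun A =>
    Fintype.piFinset (fun i => if i ∈ A then {1, -1} else {0})
  have hmem : ∀ A x, x ∈ T A → ∀ i, (i ∈ A ∧ (x i = 1 ∨ x i = -1)) ∨ (i ∉ A ∧ x i = 0) := by
    intro A x hx i
    have h := Fintype.mem_piFinset.1 hx i
    by_cases hi : i ∈ A
    · left; simpa [hi] using h
    · right; simpa [hi] using h
  have hcard : ∀ A ∈ Finset.powersetCard M (Finset.univ : Finset (Fin d)),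
      (T A).card = 2 ^ M := by
    intro A hA
    have hc : A.card = M := (Finset.mem_powersetCard.1 hA).2
    simp only [T, Fintype.card_piFinset]
    have : ∀ i, (if i ∈ A then ({1, -1} : Finset ℤ) else {0}).card = if i ∈ A then 2 else 1 := by
      intro i; split_ifs <;> rfl
    simp only [this]
    rw [Finset.prod_ite]; simp [hc]
  have hsub : (Finset.powersetCard M (Finset.univ : Finset (Fin d))).biUnion T
      ⊆ latticeBall q d N := by
    intro x hx
    obtain ⟨A, hA, hxA⟩ := Finset.mem_biUnion.1 hx
    have hc : A.card = M := (Finset.mem_powersetCard.1 hA).2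
    have h := hmem A x hxA
    unfold latticeBall
    rw [Finset.mem_filter, Finset.mem_Icc]
    refine ⟨⟨fun i => ?_, fun i => ?_⟩, ?_⟩
    · have := h i
      simp only [Nat.ceil_natCast]; omega
    · have := h i
      simp only [Nat.ceil_natCast]; omega
    · refine le_trans (le_of_eq ?_) hM
      have : ∀ i, |(x i : ℝ)| ^ q = if i ∈ A then 1 else 0 := by
        intro i
        rcases h i with ⟨hi, h1 | h1⟩ | ⟨hi, h1⟩
        · simp [hi, h1]
        · simp [hi, h1]
        · simp [hi, h1, Real.zero_rpow (by linarith : q ≠ 0)]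
      simp only [this]
      simp [hc]
  have h1 := Finset.card_le_card hsub
  rw [Finset.card_biUnion, Finset.sum_congr rfl hcard] at h1
  · simp only [Finset.sum_const, Finset.card_powersetCard, Finset.card_univ, Fintype.card_fin,
      smul_eq_mul] at h1
    exact_mod_cast h1
  · intro A _ B _ hAB
    rw [Function.onFun, Finset.disjoint_left]
    intro x hxA hxB
    refine hAB (Finset.ext (fun i => ?_))
    have a1 := hmem A x hxA i
    have a2 := hmem B x hxB i
    constructor
    · intro hi
      by_contra hb
      simp only [hi, hb, true_and, not_true, false_and, or_false, false_or, not_false_eq_true] at a1 a2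
      omega
    · intro hi
      by_contra hb
      simp only [hi, hb, true_and, not_true, false_and, or_false, false_or, not_false_eq_true] at a1 a2
      omega

lemma half_sum (M : ℕ) : ∑ a ∈ Finset.range M, (1 / 2 : ℝ) ^ (M - a) ≤ 1 := by
  have : ∀ M : ℕ, ∑ a ∈ Finset.range M, (1 / 2 : ℝ) ^ (M - a) = 1 - (1 / 2) ^ M := by
    intro M
    induction M with
    | zero => simp
    | succ M ih =>
      rw [Finset.sum_range_succ]
      have : ∑ a ∈ Finset.range M, (1 / 2 : ℝ) ^ (M + 1 - a)
          = ∑ a ∈ Finset.range M, (1 / 2 : ℝ) ^ (M - a) * (1 / 2) := by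
        refine Finset.sum_congr rfl (fun a ha => ?_)
        have := Finset.mem_range.1 ha
        rw [← pow_succ]; congr 1; omega
      rw [this, ← Finset.sum_mul, ih]
      simp [pow_succ]; ring
  rw [this]
  have : (0 : ℝ) ≤ (1 / 2) ^ M := by positivity
  linarith

open Classical in
theorem stmt5 (q : ℝ) (hq : 1 ≤ q) (d N : ℕ) (hd : 0 < d) (hN : 0 < N)
    (hκ : (N : ℝ) / (d : ℝ) ^ (1 / q) ≤ (409 : ℝ) ^ (-(1 / q)))
    (k : ℝ) (hk₁ : k ≤ (N : ℝ) ^ q)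
    (hk₂ : 409 * ((N : ℝ) / (d : ℝ) ^ (1 / q)) ^ q * (N : ℝ) ^ q ≤ k) :
    (((latticeBall q d N).filter (fun x =>
        ((Finset.univ.filter (fun i => x i = 1 ∨ x i = -1)).card : ℝ)
          ≤ (N : ℝ) ^ q - k)).card : ℝ)
      ≤ 2 ^ (2 - k) * ((latticeBall q d N).card : ℝ) := by
  have hq0 : 0 < q := by linarith
  have hd0 : (0 : ℝ) < d := by exact_mod_cast hd
  have hN1 : (1 : ℝ) ≤ N := by exact_mod_cast hN
  by_cases hk : k ≤ 1
  · have h1 : (1 : ℝ) ≤ 2 ^ (2 - k) := Real.one_le_rpow (by norm_num) (by linarith)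
    have h2 : (((latticeBall q d N).filter (fun x =>
        ((Finset.univ.filter (fun i => x i = 1 ∨ x i = -1)).card : ℝ)
          ≤ (N : ℝ) ^ q - k)).card : ℝ) ≤ ((latticeBall q d N).card : ℝ) := by
      exact_mod_cast Finset.card_filter_le _ _
    nlinarith [(Nat.cast_nonneg (latticeBall q d N).card : (0 : ℝ) ≤ _)]
  push Not at hk
  have hpow : ((N : ℝ) / (d : ℝ) ^ (1 / q)) ^ q = (N : ℝ) ^ q / d := by
    rw [Real.div_rpow (by positivity) (by positivity), ← Real.rpow_mul hd0.le,
      one_div_mul_cancel hq0.ne', Real.rpow_one]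
  have hn409 : 409 * (N : ℝ) ^ q ≤ d := by
    have h := Real.rpow_le_rpow (by positivity) hκ hq0.le
    rw [hpow, ← Real.rpow_mul (by norm_num), neg_mul, one_div_mul_cancel hq0.ne',
      Real.rpow_neg_one, div_le_iff₀ hd0] at h
    linarith
  rw [hpow] at hk₂
  set n : ℝ := (N : ℝ) ^ q with hn
  have hn1 : 1 ≤ n := Real.one_le_rpow hN1 hq0.le
  set M : ℕ := ⌊n⌋₊ with hMdef
  have hMn : (M : ℝ) ≤ n := Nat.floor_le (by linarith)
  have hnM : n < M + 1 := Nat.lt_floor_add_one n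
  have hM1 : 1 ≤ M := Nat.le_floor (by simpa using hn1)
  have hdM : 409 * M ≤ d := by
    have : 409 * (M : ℝ) ≤ d := by linarith
    exact_mod_cast this
  have hk2 : 409 * n ^ 2 ≤ k * d := by
    have : 409 * (n / d) * n = 409 * n ^ 2 / d := by ring
    rw [this, div_le_iff₀ hd0] at hk₂
    exact hk₂
  set Bad := (latticeBall q d N).filter (fun x =>
        ((Finset.univ.filter (fun i => x i = 1 ∨ x i = -1)).card : ℝ) ≤ n - k) with hBad
  have hbad : ∀ x ∈ Bad, ((oneSet x).card : ℝ) ≤ n - k ∧ ∑ i, (x i).natAbs ≤ M := by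
    intro x hx
    rw [hBad, Finset.mem_filter] at hx
    refine ⟨hx.2, ?_⟩
    have h := hx.1
    unfold latticeBall at h
    have h := (Finset.mem_filter.1 h).2
    refine Nat.le_floor ?_
    push_cast
    refine le_trans (Finset.sum_le_sum (fun i _ => ?_)) h
    rw [Nat.cast_natAbs, Int.cast_abs]
    by_cases h0 : x i = 0
    · simp [h0, Real.zero_rpow hq0.ne']
    · have : (1 : ℝ) ≤ |(x i : ℝ)| := by exact_mod_cast Int.one_le_abs h0
      calc |(x i : ℝ)| = |(x i : ℝ)| ^ (1 : ℝ) := (Real.rpow_one _).symm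
        _ ≤ _ := Real.rpow_le_rpow_of_exponent_le this hq
  have hsum : Bad.card = ∑ a ∈ Finset.range M, (Bad.filter (fun x => (oneSet x).card = a)).card := by
    refine Finset.card_eq_sum_card_fiberwise (fun x hx => ?_)
    have h := (hbad x hx).1
    have : ((oneSet x).card : ℝ) < M := by linarith
    simpa using (by exact_mod_cast this : (oneSet x).card < M)
  have hlow := ball_lower q hq d N M hMn hN
  have hlev : ∀ a ∈ Finset.range M, ((Bad.filter (fun x => (oneSet x).card = a)).card : ℝ)
      ≤ (1 / 2) ^ (M - a) * (2 ^ (1 - k) * ((latticeBall q d N).card : ℝ)) := by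
    intro a ha
    have ha' := Finset.mem_range.1 ha
    by_cases hak : (a : ℝ) ≤ n - k
    · obtain ⟨s, hs⟩ : ∃ s, a + s = M := ⟨M - a, by omega⟩
      have hs1 : 1 ≤ s := by omega
      have hsr : (a : ℝ) + s = M := by exact_mod_cast hs
      have hs1r : (1 : ℝ) ≤ s := by exact_mod_cast hs1
      have hMa : M - a = s := by omega
      rw [hMa]
      have hs2 : 409 * (M : ℝ) ^ 2 ≤ 2 * s * d := by
        calc 409 * (M : ℝ) ^ 2 ≤ 409 * n ^ 2 := by gcongr
          _ ≤ k * d := hk2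
          _ ≤ 2 * s * d := by gcongr; linarith
      have h := level_bound M s a hs hM1 hdM hs2 (Bad.filter (fun x => (oneSet x).card = a))
        (fun x hx => by
          rw [Finset.mem_filter] at hx
          exact ⟨hx.2, (hbad x hx.1).2⟩)
      have hhalf : (1 / 2 : ℝ) ^ s ≤ 2 ^ (1 - k) := by
        have : (1 / 2 : ℝ) ^ s = 2 ^ (-(s : ℝ)) := by
          rw [Real.rpow_neg (by norm_num), Real.rpow_natCast]; simp
        rw [this]
        exact Real.rpow_le_rpow_of_exponent_le (by norm_num) (by linarith)
      calc _ ≤ (1 / 4 : ℝ) ^ s * (d.choose M * 2 ^ M) := h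
        _ = (1 / 2) ^ s * ((1 / 2) ^ s * (d.choose M * 2 ^ M)) := by
            rw [show (1 / 4 : ℝ) = 1 / 2 * (1 / 2) by norm_num, mul_pow, mul_assoc]
        _ ≤ _ := by gcongr
    · have : Bad.filter (fun x => (oneSet x).card = a) = ∅ := by
        refine Finset.filter_eq_empty_iff.2 (fun x hx hxa => hak ?_)
        rw [← hxa]; exact (hbad x hx).1
      rw [this]
      simp only [Finset.card_empty, Nat.cast_zero]
      positivity
  rw [hsum]
  push_cast
  calc _ ≤ ∑ a ∈ Finset.range M,
        (1 / 2 : ℝ) ^ (M - a) * (2 ^ (1 - k) * ((latticeBall q d N).card : ℝ)) :=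
        Finset.sum_le_sum hlev
    _ = (∑ a ∈ Finset.range M, (1 / 2 : ℝ) ^ (M - a))
          * (2 ^ (1 - k) * ((latticeBall q d N).card : ℝ)) := by rw [Finset.sum_mul]
    _ ≤ 1 * (2 ^ (1 - k) * ((latticeBall q d N).card : ℝ)) := by
        gcongr; exact half_sum M
    _ ≤ _ := by
        rw [one_mul]
        gcongr
        · norm_num
        · norm_num
end

section
/- For all q ≥ 1 and d, N ∈ ℕ satisfying κ_q(d,N) ≤ N^{−11}, the number of points x ∈ B_N^q ∩ ℤ^d such that |{i ∈ [d] : x_i = ±1}| ≤ N^q − 2 is at most N^{−q}·|B_N^q ∩ ℤ^d|. -/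
open Classical in
lemma mem_lb (q : ℝ) (hq : 1 ≤ q) (d N : ℕ) (x : Fin d → ℤ) :
    x ∈ latticeBall q d N ↔ ∑ i, |(x i : ℝ)| ^ q ≤ (N : ℝ) ^ q := by
  unfold latticeBall
  rw [Finset.mem_filter]
  refine ⟨fun h => h.2, fun h => ⟨?_, h⟩⟩
  have key : ∀ i, |x i| ≤ (N : ℤ) := by
    intro i
    have h1 : |(x i : ℝ)| ^ q ≤ (N : ℝ) ^ q :=
      le_trans (Finset.single_le_sum (f := fun i => |(x i : ℝ)| ^ q)
        (fun j _ => by positivity) (Finset.mem_univ i)) h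
    have h2 : |(x i : ℝ)| ≤ (N : ℝ) :=
      (Real.rpow_le_rpow_iff (abs_nonneg _) (Nat.cast_nonneg _) (by linarith)).1 h1
    exact_mod_cast h2
  rw [Finset.mem_Icc]
  simp only [Nat.ceil_natCast]
  exact ⟨fun i => (abs_le.1 (key i)).1, fun i => (abs_le.1 (key i)).2⟩

lemma lb_bound (q : ℝ) (d N : ℕ) (x : Fin d → ℤ) (h : x ∈ latticeBall q d N) (i : Fin d) :
    x i ∈ Finset.Icc (-(N : ℤ)) N := by
  unfold latticeBall at h
  rw [Finset.mem_filter, Finset.mem_Icc] at h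
  simp only [Nat.ceil_natCast] at h
  exact Finset.mem_Icc.2 ⟨h.1.1 i, h.1.2 i⟩

lemma one_le_abs_rpow (q : ℝ) (hq : 1 ≤ q) (a : ℤ) (ha : a ≠ 0) : 1 ≤ |(a : ℝ)| ^ q := by
  apply Real.one_le_rpow _ (by linarith)
  exact_mod_cast Int.one_le_abs ha

lemma supp_card (q : ℝ) (hq : 1 ≤ q) (d : ℕ) (x : Fin d → ℤ) :
    ((Finset.univ.filter (fun i => x i ≠ 0)).card : ℝ) ≤ ∑ i, |(x i : ℝ)| ^ q := by
  rw [Finset.card_filter]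
  push_cast
  apply Finset.sum_le_sum
  intro i _
  split_ifs with h
  · exact one_le_abs_rpow q hq _ h
  · positivity

lemma sum_upd (q : ℝ) (d : ℕ) (x : Fin d → ℤ) (j : Fin d) (v : ℤ) :
    ∑ i, |((Function.update x j v i : ℤ) : ℝ)| ^ q
      = ∑ i, |(x i : ℝ)| ^ q - |(x j : ℝ)| ^ q + |(v : ℝ)| ^ q := by
  rw [← Finset.add_sum_erase _ _ (Finset.mem_univ j),
    ← Finset.add_sum_erase (a := j) (f := fun i => |(x i : ℝ)| ^ q) _ (Finset.mem_univ j)]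
  have : ∑ i ∈ Finset.univ.erase j, |((Function.update x j v i : ℤ) : ℝ)| ^ q
      = ∑ i ∈ Finset.univ.erase j, |(x i : ℝ)| ^ q := by
    apply Finset.sum_congr rfl
    intro i hi
    rw [Function.update_of_ne (Finset.ne_of_mem_erase hi)]
  rw [this]
  simp
  ring

/-- Normalisation of a bad point. -/
lemma bad_norm (q : ℝ) (hq : 1 ≤ q) (d N : ℕ) (x : Fin d → ℤ)
    (hx : ∑ i, |(x i : ℝ)| ^ q ≤ (N : ℝ) ^ q)
    (hb : ((Finset.univ.filter (fun i => x i = 1 ∨ x i = -1)).card : ℝ) ≤ (N : ℝ) ^ q - 2) :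
    ∃ f : Fin d → ℤ, ∑ i, |(f i : ℝ)| ^ q ≤ (N : ℝ) ^ q - 1 ∧ (∀ j, x j = 0 → f j = 0) ∧
      (f = x ∨ ∃ i, f i ≠ 0 ∧ x i ≠ 0 ∧ x = Function.update f i (x i)) := by
  by_cases h : ∃ i, 2 ≤ |x i|
  · obtain ⟨i, hi⟩ := h
    have hi0 : x i ≠ 0 := by
      intro h0
      simp [h0] at hi
    refine ⟨Function.update x i 1, ?_, ?_, Or.inr ⟨i, by simp, hi0, by simp⟩⟩
    · rw [sum_upd]
      have h2 : (2 : ℝ) ≤ |(x i : ℝ)| := by exact_mod_cast hi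
      have h3 : |(x i : ℝ)| ≤ |(x i : ℝ)| ^ q :=
        Real.self_le_rpow_of_one_le (by linarith) hq
      simp
      linarith
    · intro j hj
      have : j ≠ i := by
        rintro rfl
        exact hi0 hj
      rw [Function.update_of_ne this, hj]
  · push Not at h
    refine ⟨x, ?_, fun _ h => h, Or.inl rfl⟩
    have : ∑ i, |(x i : ℝ)| ^ q
        = ((Finset.univ.filter (fun i => x i = 1 ∨ x i = -1)).card : ℝ) := by
      rw [Finset.card_filter]
      push_cast
      apply Finset.sum_congr rfl
      intro i _
      have hh := abs_lt.1 (h i)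
      have : x i = 0 ∨ x i = 1 ∨ x i = -1 := by omega
      rcases this with h | h | h
      · simp [h, Real.zero_rpow (by linarith : q ≠ 0)]
      · simp [h]
      · simp [h]
    linarith

open Classical in
theorem stmt6 (q : ℝ) (hq : 1 ≤ q) (d N : ℕ) (hd : 0 < d) (hN : 0 < N)
    (hκ : (N : ℝ) / (d : ℝ) ^ (1 / q) ≤ (N : ℝ) ^ (-(11 : ℝ))) :
    (((latticeBall q d N).filter (fun x =>
        ((Finset.univ.filter (fun i => x i = 1 ∨ x i = -1)).card : ℝ)
          ≤ (N : ℝ) ^ q - 2)).card : ℝ)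
      ≤ (N : ℝ) ^ (-q) * ((latticeBall q d N).card : ℝ) := by
  rcases (by omega : N = 1 ∨ 2 ≤ N) with rfl | hN2
  · rw [Finset.filter_false_of_mem]
    · simp
    · intro x _ h
      have : (0 : ℝ) ≤ ((Finset.univ.filter (fun i => x i = 1 ∨ x i = -1)).card : ℝ) :=
        Nat.cast_nonneg _
      simp at h
      linarith
  have hN2' : (2 : ℝ) ≤ N := by exact_mod_cast hN2
  have hNpos : (0 : ℝ) < N := by linarith
  have hdpos : (0 : ℝ) < d := by exact_mod_cast hd
  have hq0 : 0 < q := by linarith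
  set M : ℝ := (N : ℝ) ^ q with hM
  have hNM : (N : ℝ) ≤ M := Real.self_le_rpow_of_one_le (by linarith) hq
  have hM2 : 2 ≤ M := by linarith
  have hdM : M ^ 12 ≤ d := by
    have h1 : (N : ℝ) ^ 12 ≤ (d : ℝ) ^ (1 / q) := by
      have hp : 0 < (d : ℝ) ^ (1 / q) := by positivity
      rw [div_le_iff₀ hp, Real.rpow_neg hNpos.le] at hκ
      have e : (N : ℝ) ^ (11 : ℝ) = (N : ℝ) ^ 11 := by
        exact_mod_cast Real.rpow_natCast (N : ℝ) 11
      rw [e] at hκ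
      have hp11 : (0 : ℝ) < (N : ℝ) ^ 11 := by positivity
      calc (N : ℝ) ^ 12 = (N : ℝ) ^ 11 * N := by ring
        _ ≤ (N : ℝ) ^ 11 * (((N : ℝ) ^ 11)⁻¹ * (d : ℝ) ^ (1 / q)) := by gcongr
        _ = _ := by field_simp
    calc M ^ 12 = ((N : ℝ) ^ 12) ^ q := by
          rw [hM, ← Real.rpow_natCast, ← Real.rpow_mul hNpos.le, ← Real.rpow_natCast,
            ← Real.rpow_mul hNpos.le, mul_comm]
      _ ≤ ((d : ℝ) ^ (1 / q)) ^ q := by gcongr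
      _ = d := by
          rw [← Real.rpow_mul hdpos.le, one_div_mul_cancel hq0.ne', Real.rpow_one]
  set n : ℕ := ⌊M⌋₊ with hn
  have hnM : (n : ℝ) ≤ M := Nat.floor_le (by linarith)
  set A := (latticeBall q d N).filter (fun x =>
        ((Finset.univ.filter (fun i => x i = 1 ∨ x i = -1)).card : ℝ) ≤ M - 2) with hA
  set B := latticeBall q d N with hB
  let supp : (Fin d → ℤ) → Finset (Fin d) := fun x => Finset.univ.filter (fun i => x i ≠ 0)
  have hsupp : ∀ y ∈ B, (supp y).card ≤ n := by
    intro y hy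
    apply Nat.le_floor
    exact (supp_card q hq d y).trans ((mem_lb q hq d N y).1 hy)
  let r : (Fin d → ℤ) → (Fin d → ℤ) → Prop := fun x y =>
    ∃ p ∈ supp y ×ˢ supp y ×ˢ Finset.Icc (-(N : ℤ)) N,
      Function.update (Function.update y p.1 0) p.2.1 p.2.2 = x
  have hmain : A.card * (d - n) ≤ B.card * (n * (n * (2 * N + 1))) := by
    apply Finset.card_mul_le_card_mul r
    · intro x hx
      obtain ⟨hxB, hxb⟩ := Finset.mem_filter.1 hx
      obtain ⟨f, hf1, hf2, hf3⟩ := bad_norm q hq d N x ((mem_lb q hq d N x).1 hxB) hxb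
      have hcard : d - n ≤ (Finset.univ.filter (fun i => x i = 0)).card := by
        have h1 := hsupp x hxB
        have h2 := Finset.card_filter_add_card_filter_not (s := (Finset.univ : Finset (Fin d)))
          (fun i => x i = 0)
        simp only [Finset.card_univ, Fintype.card_fin] at h2
        simp only [supp] at h1
        simp only [ne_eq] at h1
        omega
      refine hcard.trans (Finset.card_le_card_of_injOn (fun j => Function.update f j 1) ?_ ?_)
      · intro j hj
        have hj : x j = 0 := by simpa using hj
        have hfj := hf2 j hj
        simp only [Finset.bipartiteAbove, Finset.coe_filter, Set.mem_setOf_eq]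
        refine ⟨?_, ?_⟩
        · rw [hB, mem_lb q hq, sum_upd, hfj]
          simp [Real.zero_rpow hq0.ne']
          linarith
        · rcases hf3 with h | ⟨i, hfi, hxi, hxe⟩
          · refine ⟨(j, j, 0), by simp [supp], ?_⟩
            subst h
            simp [← hj]
          · have hij : i ≠ j := by
              rintro rfl
              exact hxi hj
            refine ⟨(j, i, x i), ?_, ?_⟩
            · have := lb_bound q d N x hxB i
              simp only [Finset.mem_product, supp, Finset.mem_filter, Finset.mem_univ, true_and]
              exact ⟨by simp, by simpa [Function.update_of_ne hij] using hfi, this⟩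
            · have : Function.update f j 0 = f := by simp [← hfj]
              simp only [Function.update_idem, this]
              exact hxe.symm
      · intro j hj k hk hjk
        have hj : x j = 0 := by simpa using hj
        by_contra hne
        have := congrFun hjk j
        simp [Function.update_of_ne hne, hf2 j hj] at this
    · intro y hy
      have hs : Finset.bipartiteBelow r A y ⊆
          (supp y ×ˢ supp y ×ˢ Finset.Icc (-(N : ℤ)) N).image
            (fun p => Function.update (Function.update y p.1 0) p.2.1 p.2.2) := by
        intro x hx
        have := (Finset.mem_filter.1 hx).2
        exact Finset.mem_image.2 this
      refine (Finset.card_le_card hs).trans (Finset.card_image_le.trans ?_)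
      rw [Finset.card_product, Finset.card_product]
      have h1 := hsupp y hy
      have h2 : (Finset.Icc (-(N : ℤ)) N).card = 2 * N + 1 := by
        rw [Int.card_Icc]
        omega
      rw [h2]
      gcongr
  have hM12 : 2 * M ^ 4 + M ^ 3 + M ≤ M ^ 12 := by
    have a1 : (1 : ℝ) ≤ M := by linarith
    have b1 : M ^ 3 ≤ M ^ 4 := pow_le_pow_right₀ a1 (by norm_num)
    have b2 : M ≤ M ^ 4 := le_self_pow₀ a1 (by norm_num)
    have b3 : (4 : ℝ) ≤ M ^ 8 := by
      calc (4 : ℝ) ≤ 2 ^ 8 := by norm_num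
        _ ≤ M ^ 8 := by gcongr
    have b4 : M ^ 12 = M ^ 8 * M ^ 4 := by ring
    nlinarith [pow_pos (by linarith : (0:ℝ) < M) 4]
  have hnd : n ≤ d := by
    have : (n : ℝ) ≤ d := by
      have : 0 ≤ M ^ 4 := by positivity
      have : 0 ≤ M ^ 3 := by positivity
      linarith
    exact_mod_cast this
  have hmain' : (A.card : ℝ) * (d - n) ≤ B.card * (n * (n * (2 * N + 1))) := by
    have := (Nat.cast_le (α := ℝ)).2 hmain
    push_cast [Nat.cast_sub hnd] at this
    exact this
  have hMpos : 0 < M := by linarith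
  rw [Real.rpow_neg hNpos.le, ← hM, inv_mul_eq_div, le_div_iff₀ hMpos]
  have e1 : (n : ℝ) * (n * (2 * N + 1)) ≤ M * (M * (2 * M + 1)) := by gcongr
  have e2 : M * (M * (M * (2 * M + 1))) ≤ d - n := by
    have : M * (M * (M * (2 * M + 1))) = 2 * M ^ 4 + M ^ 3 := by ring
    linarith
  have hC : 0 < M * (M * (2 * M + 1)) := by positivity
  have : (A.card : ℝ) * M * (M * (M * (2 * M + 1))) ≤ B.card * (M * (M * (2 * M + 1))) := by
    calc (A.card : ℝ) * M * (M * (M * (2 * M + 1)))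
        = A.card * (M * (M * (M * (2 * M + 1)))) := by ring
      _ ≤ A.card * (d - n) := by gcongr
      _ ≤ B.card * (n * (n * (2 * N + 1))) := hmain'
      _ ≤ _ := by gcongr
  exact le_of_mul_le_mul_right this hC
end
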